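/- arXiv:1503.04954 — 2 statements merged into one kernel-verified Lean document; each statement's English description precedes it below -/
import Mathlib

section
/- Let T > 0, let g satisfy (g1), be regularly oscillating at zero, and satisfy lim_{s→0⁺} g(s)/s = 0 and limsup_{s→+∞} g(s)/s < +∞. Let a ∈ L¹([0,T]) satisfy (a1) and (a2), and set g_∞ := liminf_{s→+∞} g(s)/s. Assume that for at least one index i ∈ {1,…,m} there exist λ with 0 < λ < g_∞ and a C¹ function φ : Iᵢ → ℝ with absolutely continuous derivative, φ > 0 on the interior of Iᵢ, φ = 0 at both endpoints of Iᵢ, and φ'' + λ a(x) φ = 0 a.e. on Iᵢ (i.e., g_∞ > min_i λ₁ⁱ, where λ₁ⁱ is the first eigenvalue of φ'' + λ a(x) φ = 0 with φ = 0 on ∂Iᵢ). Then the equation u'' + a(x) g(u) = 0 has at least one positive solution satisfying the Neumann boundary conditions and at least one positive solution satisfying the periodic boundary conditions. -/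
open MeasureTheory Set Filter

/-- `u` (with derivative `u'`) is a C¹ solution of `u'' + f(x) = 0` on `[0,T]`:
`u'` is absolutely continuous and the equation holds a.e., expressed via the
integral equation `u'(x) = u'(0) − ∫₀ˣ f(t) dt`. -/
def IsSolOn (T : ℝ) (f : ℝ → ℝ) (u u' : ℝ → ℝ) : Prop :=
  (∀ x ∈ Icc (0:ℝ) T, HasDerivWithinAt u (u' x) (Icc (0:ℝ) T) x) ∧
  ContinuousOn u' (Icc (0:ℝ) T) ∧
  ∀ x ∈ Icc (0:ℝ) T, u' x = u' 0 - ∫ t in (0:ℝ)..x, f t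

/-- The equation `u'' + a(x) g(u) = 0` on `[0,T]` has a positive solution
satisfying the Neumann boundary conditions. -/
def PosSolNeumann (T : ℝ) (a g : ℝ → ℝ) : Prop :=
  ∃ u u' : ℝ → ℝ, IsSolOn T (fun t => a t * g (u t)) u u' ∧
    (∀ x ∈ Icc (0:ℝ) T, 0 < u x) ∧ u' 0 = 0 ∧ u' T = 0

/-- The equation `u'' + a(x) g(u) = 0` on `[0,T]` has a positive solution
satisfying the periodic boundary conditions. -/
def PosSolPeriodic (T : ℝ) (a g : ℝ → ℝ) : Prop :=
  ∃ u u' : ℝ → ℝ, IsSolOn T (fun t => a t * g (u t)) u u' ∧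
    (∀ x ∈ Icc (0:ℝ) T, 0 < u x) ∧ u 0 = u T ∧ u' 0 = u' T

/-- Condition (g1): `g : [0,∞) → [0,∞)` is continuous, `g 0 = 0`, `g > 0` on `(0,∞)`. -/
def CondG1 (g : ℝ → ℝ) : Prop :=
  ContinuousOn g (Ici (0:ℝ)) ∧ (∀ s : ℝ, 0 ≤ s → 0 ≤ g s) ∧ g 0 = 0 ∧
    ∀ s : ℝ, 0 < s → 0 < g s

/-- `g` is regularly oscillating at zero. -/
def RegOscAtZero (g : ℝ → ℝ) : Prop :=
  ∀ ε : ℝ, 0 < ε → ∃ δ > (0:ℝ), ∃ η > (0:ℝ), ∀ s ω : ℝ,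
    0 < s → s < δ → |ω - 1| < η → |g (ω * s) / g s - 1| < ε

/-- `liminf_{s → +∞} g(s)/s`, computed in `EReal`. -/
noncomputable def GrowthLiminf (g : ℝ → ℝ) : EReal :=
  liminf (fun s : ℝ => ((g s / s : ℝ) : EReal)) atTop

/-- `limsup_{s → +∞} g(s)/s`, computed in `EReal`. -/
noncomputable def GrowthLimsup (g : ℝ → ℝ) : EReal :=
  limsup (fun s : ℝ => ((g s / s : ℝ) : EReal)) atTop

/-- `(lam, φ)` is a Dirichlet eigenpair of `φ'' + λ a(x) φ = 0` on `[x₁,x₂]` with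
`φ > 0` in the interior (so `lam` is the first eigenvalue): `φ` is `C¹` with
absolutely continuous derivative, expressed via the integral equation. -/
def DirichletEigenpair (a : ℝ → ℝ) (x₁ x₂ lam : ℝ) : Prop :=
  ∃ φ φ' : ℝ → ℝ,
    (∀ x ∈ Icc x₁ x₂, HasDerivWithinAt φ (φ' x) (Icc x₁ x₂) x) ∧
    ContinuousOn φ' (Icc x₁ x₂) ∧
    (∀ x ∈ Ioo x₁ x₂, 0 < φ x) ∧ φ x₁ = 0 ∧ φ x₂ = 0 ∧
    ∀ x ∈ Icc x₁ x₂, φ' x = φ' x₁ - lam * ∫ t in x₁..x, a t * φ t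


theorem aux_lift (z : ℝ × ℝ → ℂ) (hz : Continuous z) (h0 : ∀ p, z p ≠ 0) :
    ∃ h : ℝ × ℝ → ℝ, Continuous h ∧ ∀ p, (z p).re = ‖z p‖ * Real.cos (h p) ∧
      (z p).im = ‖z p‖ * Real.sin (h p) := by
  have hn : ∀ p, ‖z p‖ ≠ 0 := fun p => norm_ne_zero_iff.2 (h0 p)
  let γ : C(ℝ × ℝ, Circle) := ⟨fun p => ⟨z p / (‖z p‖ : ℂ), by
      show _ ∈ Metric.sphere (0:ℂ) 1
      rw [mem_sphere_zero_iff_norm, norm_div, Complex.norm_real, norm_norm, div_self (hn p)]⟩, by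
      apply Continuous.subtype_mk
      refine hz.div (Complex.continuous_ofReal.comp hz.norm) ?_
      intro p; exact_mod_cast hn p⟩
  obtain ⟨e₀, he₀⟩ : ∃ e₀ : ℝ, Circle.exp e₀ = γ (0, 0) := ⟨_, Circle.exp_arg _⟩
  obtain ⟨H, ⟨-, hH⟩, -⟩ := Circle.isCoveringMap_exp.existsUnique_continuousMap_lifts γ (0,0) e₀ he₀
  refine ⟨H, H.continuous, fun p => ?_⟩
  have h1 : Circle.exp (H p) = γ p := congrFun hH p
  have h2 : Complex.exp (H p * Complex.I) = z p / (‖z p‖ : ℂ) := by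
    rw [← Circle.coe_exp, h1]; rfl
  have h3 : z p = (‖z p‖ : ℂ) * Complex.exp (H p * Complex.I) := by
    rw [h2]; field_simp [show (‖z p‖ : ℂ) ≠ 0 by exact_mod_cast hn p]
  have h4 : Complex.exp (H p * Complex.I) = (Real.cos (H p) : ℂ) + (Real.sin (H p) : ℂ) * Complex.I := by
    rw [Complex.exp_mul_I]; push_cast; rfl
  rw [h4] at h3
  constructor
  · conv_lhs => rw [h3]
    rw [Complex.re_ofReal_mul]; simp [-Complex.ofReal_cos, -Complex.ofReal_sin]
  · conv_lhs => rw [h3]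
    rw [Complex.im_ofReal_mul]; simp [-Complex.ofReal_cos, -Complex.ofReal_sin]

theorem aux_lt (φ : ℝ → ℝ) (hφ : Continuous φ) (c d A : ℝ) (hA : ∀ t ∈ uIcc c d, φ t ≠ A)
    (h : φ c < A) : φ d < A := by
  by_contra! hd
  have := intermediate_value_uIcc (hφ.continuousOn (s := uIcc c d))
  obtain ⟨t, ht, h'⟩ := this (show A ∈ uIcc (φ c) (φ d) by rw [mem_uIcc]; left; exact ⟨h.le, hd⟩)
  exact hA t ht h'

theorem aux_gt (φ : ℝ → ℝ) (hφ : Continuous φ) (c d A : ℝ) (hA : ∀ t ∈ uIcc c d, φ t ≠ A)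
    (h : A < φ c) : A < φ d := by
  have := aux_lt (fun t => - φ t) hφ.neg c d (-A) (fun t ht => by simpa using hA t ht) (by simpa)
  simpa using this

theorem topo (f1 f2 : ℝ → ℝ → ℝ) (hf1 : Continuous fun p : ℝ × ℝ => f1 p.1 p.2)
    (hf2 : Continuous fun p : ℝ × ℝ => f2 p.1 p.2) (r R : ℝ) (hrR : r < R)
    (left : ∀ ρ ∈ Icc r R, f1 ρ (-1) < 0)
    (bottom : ∀ s ∈ Icc (-1:ℝ) 1, ¬ (f1 r s = 0 ∧ f2 r s ≤ 0))
    (right : ∀ ρ ∈ Icc r R, ¬ (f1 ρ 1 = 0 ∧ 0 ≤ f2 ρ 1))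
    (top : ∀ s ∈ Icc (-1:ℝ) 1, ¬ (f1 R s = 0 ∧ 0 ≤ f2 R s))
    (corner : 0 < f1 r 1) :
    ∃ ρ ∈ Icc r R, ∃ s ∈ Icc (-1:ℝ) 1, f1 ρ s = 0 ∧ f2 ρ s = 0 := by
  by_contra! hcon
  let c1 : ℝ → ℝ := fun x => projIcc r R hrR.le x
  let c2 : ℝ → ℝ := fun x => projIcc (-1:ℝ) 1 (by norm_num) x
  have hc1 : Continuous c1 := continuous_subtype_val.comp continuous_projIcc
  have hc2 : Continuous c2 := continuous_subtype_val.comp continuous_projIcc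
  have hm1 : ∀ x, c1 x ∈ Icc r R := fun x => (projIcc r R hrR.le x).2
  have hm2 : ∀ x, c2 x ∈ Icc (-1:ℝ) 1 := fun x => (projIcc (-1:ℝ) 1 (by norm_num) x).2
  have he1 : ∀ x ∈ Icc r R, c1 x = x := fun x hx => by simp only [c1]; rw [projIcc_of_mem _ hx]
  have he2 : ∀ x ∈ Icc (-1:ℝ) 1, c2 x = x := fun x hx => by simp only [c2]; rw [projIcc_of_mem _ hx]
  let F1 : ℝ × ℝ → ℝ := fun p => f1 (c1 p.1) (c2 p.2)
  let F2 : ℝ × ℝ → ℝ := fun p => f2 (c1 p.1) (c2 p.2)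
  have hcl : Continuous fun p : ℝ × ℝ => (c1 p.1, c2 p.2) :=
    (hc1.comp continuous_fst).prodMk (hc2.comp continuous_snd)
  have hF1 : Continuous F1 := hf1.comp hcl
  have hF2 : Continuous F2 := hf2.comp hcl
  let z : ℝ × ℝ → ℂ := fun p => (F1 p : ℂ) + (F2 p : ℂ) * Complex.I
  have hz : Continuous z := (Complex.continuous_ofReal.comp hF1).add
    ((Complex.continuous_ofReal.comp hF2).mul continuous_const)
  have hre : ∀ p, (z p).re = F1 p := fun p => by simp [z]
  have him : ∀ p, (z p).im = F2 p := fun p => by simp [z]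
  have hz0 : ∀ p, z p ≠ 0 := by
    intro p hp
    refine hcon _ (hm1 p.1) _ (hm2 p.2) ?_ ?_
    · have := hre p; rw [hp] at this; simpa using this.symm
    · have := him p; rw [hp] at this; simpa using this.symm
  obtain ⟨h', hh', hcs'⟩ := aux_lift z hz hz0
  -- facts
  have hnp : ∀ p, 0 < ‖z p‖ := fun p => norm_pos_iff.2 (hz0 p)
  have hmem1 : r ∈ Icc r R := ⟨le_refl _, hrR.le⟩
  have hmemR : R ∈ Icc r R := ⟨hrR.le, le_refl _⟩
  have hmm : (-1:ℝ) ∈ Icc (-1:ℝ) 1 := by norm_num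
  have hmp : (1:ℝ) ∈ Icc (-1:ℝ) 1 := by norm_num
  -- shift
  obtain ⟨k, hk⟩ : ∃ k : ℤ, h' (r, -1) - k * (2 * Real.pi) ∈ Ico (-(Real.pi/2)) (-(Real.pi/2) + 2 * Real.pi) := by
    obtain ⟨k, hk, -⟩ := existsUnique_sub_zsmul_mem_Ico (Real.two_pi_pos) (h' (r, -1)) (-(Real.pi/2))
    exact ⟨k, by simpa using hk⟩
  let h : ℝ × ℝ → ℝ := fun p => h' p - k * (2 * Real.pi)
  have hh : Continuous h := hh'.sub continuous_const
  have hc : ∀ ρ ∈ Icc r R, ∀ s ∈ Icc (-1:ℝ) 1, f1 ρ s = ‖z (ρ, s)‖ * Real.cos (h (ρ, s)) := by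
    intro ρ hρ s hs
    have := (hcs' (ρ, s)).1
    rw [hre] at this
    simp only [F1, he1 ρ hρ, he2 s hs] at this
    rw [this]; simp only [h]; rw [Real.cos_sub_int_mul_two_pi]
  have hs : ∀ ρ ∈ Icc r R, ∀ s ∈ Icc (-1:ℝ) 1, f2 ρ s = ‖z (ρ, s)‖ * Real.sin (h (ρ, s)) := by
    intro ρ hρ s hs
    have := (hcs' (ρ, s)).2
    rw [him] at this
    simp only [F2, he1 ρ hρ, he2 s hs] at this
    rw [this]; simp only [h]; rw [Real.sin_sub_int_mul_two_pi]
  have hpi := Real.pi_pos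
  have hL : ∀ ρ ∈ Icc r R, Real.cos (h (ρ, -1)) < 0 := by
    intro ρ hρ
    have := left ρ hρ
    rw [hc ρ hρ _ hmm] at this
    by_contra! hx
    exact absurd this (not_lt.2 (mul_nonneg (hnp _).le hx))
  have c1' : Real.cos (-(Real.pi/2)) = 0 := by simp
  have s1' : Real.sin (-(Real.pi/2)) = -1 := by simp
  have c2' : Real.cos (3*Real.pi/2) = 0 := by
    rw [show 3*Real.pi/2 = -(Real.pi/2) + 2 * Real.pi by ring, Real.cos_add_two_pi]; exact c1'
  have s2' : Real.sin (3*Real.pi/2) = -1 := by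
    rw [show 3*Real.pi/2 = -(Real.pi/2) + 2 * Real.pi by ring, Real.sin_add_two_pi]; exact s1'
  have c3' : Real.cos (-(3*Real.pi/2)) = 0 := by rw [Real.cos_neg]; exact c2'
  have s3' : Real.sin (-(3*Real.pi/2)) = 1 := by rw [Real.sin_neg, s2']; norm_num
  have h00 : Real.pi/2 < h (r, -1) := by
    by_contra! hx
    have := Real.cos_nonneg_of_neg_pi_div_two_le_of_le (by have := hk.1; simp only [h]; linarith) hx
    exact absurd (hL r hmem1) (not_lt.2 this)
  have h01 : h (r, -1) < 3*Real.pi/2 := by have := hk.2; simp only [h]; linarith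
  -- bottom
  have hbot : ∀ A : ℝ, Real.cos A = 0 → Real.sin A = -1 → ∀ t ∈ uIcc (-1:ℝ) 1, h (r, t) ≠ A := by
    intro A hA hA' t ht heq
    rw [uIcc_of_le (by norm_num)] at ht
    apply bottom t ht
    rw [hc r hmem1 t ht, hs r hmem1 t ht, heq, hA, hA']
    have := hnp (r, t)
    constructor <;> linarith
  have hb1 : -(Real.pi/2) < h (r, 1) :=
    aux_gt (fun t => h (r, t)) (by fun_prop) (-1) 1 _ (hbot _ c1' s1') (by linarith)
  have hb2 : h (r, 1) < 3*Real.pi/2 :=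
    aux_lt (fun t => h (r, t)) (by fun_prop) (-1) 1 _ (hbot _ c2' s2') (by linarith)
  have hb3 : h (r, 1) < Real.pi/2 := by
    by_contra! hx
    have := Real.cos_nonpos_of_pi_div_two_le_of_le hx (by linarith)
    rw [hc r hmem1 1 hmp] at corner
    exact absurd corner (not_lt.2 (mul_nonpos_of_nonneg_of_nonpos (hnp _).le this))
  -- right
  have hri : ∀ A : ℝ, Real.cos A = 0 → Real.sin A = 1 → ∀ t ∈ uIcc r R, h (t, 1) ≠ A := by
    intro A hA hA' t ht heq
    rw [uIcc_of_le hrR.le] at ht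
    apply right t ht
    rw [hc t ht 1 hmp, hs t ht 1 hmp, heq, hA, hA']
    have := hnp (t, 1)
    constructor <;> linarith
  have hto : ∀ A : ℝ, Real.cos A = 0 → Real.sin A = 1 → ∀ t ∈ uIcc (1:ℝ) (-1), h (R, t) ≠ A := by
    intro A hA hA' t ht heq
    rw [uIcc_of_ge (by norm_num)] at ht
    apply top t ht
    rw [hc R hmemR t ht, hs R hmemR t ht, heq, hA, hA']
    have := hnp (R, t)
    constructor <;> linarith
  have hr2 : h (R, 1) < Real.pi/2 :=
    aux_lt (fun t => h (t, 1)) (by fun_prop) r R _ (hri _ (by simp) (by simp)) hb3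
  have ht2 : h (R, -1) < Real.pi/2 :=
    aux_lt (fun t => h (R, t)) (by fun_prop) 1 (-1) _ (hto _ (by simp) (by simp)) hr2
  have := aux_gt (fun t => h (t, -1)) (by fun_prop) r R (Real.pi/2) (by
    intro t ht heq
    rw [uIcc_of_le hrR.le] at ht
    have := hL t ht
    rw [heq] at this; simp at this) h00
  linarith


/-- exact solutions, integral form -/
def Sol (T : ℝ) (a G u v : ℝ → ℝ) : Prop :=
  Continuous u ∧ Continuous v ∧ (∀ t ∈ Icc (0:ℝ) T, u t = u 0 + ∫ s in (0:ℝ)..t, v s) ∧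
    (∀ t ∈ Icc (0:ℝ) T, v t = v 0 - ∫ s in (0:ℝ)..t, a s * G (u s))

theorem ii_sub {T : ℝ} {f : ℝ → ℝ} (hf : IntervalIntegrable f volume 0 T) {s t : ℝ}
    (hs : s ∈ Icc 0 T) (ht : t ∈ Icc 0 T) : IntervalIntegrable f volume s t := by
  refine hf.mono_set ?_
  rw [uIcc_of_le (hs.1.trans hs.2)]
  exact uIcc_subset_Icc hs ht

theorem ii_mul {T : ℝ} {a w : ℝ → ℝ} (ha : IntervalIntegrable a volume 0 T) (hw : Continuous w)
    {s t : ℝ} (hs : s ∈ Icc 0 T) (ht : t ∈ Icc 0 T) :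
    IntervalIntegrable (fun x => a x * w x) volume s t :=
  (ii_sub ha hs ht).mul_continuousOn hw.continuousOn

theorem Sol.u_sub {T : ℝ} {a G u v : ℝ → ℝ} (h : Sol T a G u v) {s t : ℝ}
    (hs : s ∈ Icc 0 T) (ht : t ∈ Icc 0 T) : u t - u s = ∫ r in s..t, v r := by
  have e := intervalIntegral.integral_interval_sub_left (μ := volume)
    (h.2.1.intervalIntegrable 0 t) (h.2.1.intervalIntegrable 0 s)
  rw [h.2.2.1 t ht, h.2.2.1 s hs, ← e]
  ring

theorem Sol.v_sub {T : ℝ} {a G u v : ℝ → ℝ} (h : Sol T a G u v)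
    (ha : IntervalIntegrable a volume 0 T) (hG : Continuous G) {s t : ℝ}
    (hs : s ∈ Icc 0 T) (ht : t ∈ Icc 0 T) : v t - v s = - ∫ r in s..t, a r * G (u r) := by
  have h0 : (0:ℝ) ∈ Icc 0 T := ⟨le_refl _, hs.1.trans hs.2⟩
  have e : (∫ r in (0:ℝ)..t, a r * G (u r)) - (∫ r in (0:ℝ)..s, a r * G (u r)) =
      ∫ r in s..t, a r * G (u r) := intervalIntegral.integral_interval_sub_left
    (ii_mul ha (hG.comp h.1) h0 ht) (ii_mul ha (hG.comp h.1) h0 hs)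
  rw [h.2.2.2 t ht, h.2.2.2 s hs, ← e]
  ring

theorem gron (T : ℝ) (hT : 0 < T) (a : ℝ → ℝ) (ha : IntervalIntegrable a volume 0 T) (C : ℝ)
    (hC : 0 ≤ C) : ∃ K : ℝ, 1 ≤ K ∧ ∀ G : ℝ → ℝ, Continuous G → (∀ s, |G s| ≤ C * |s|) →
      ∀ u v, Sol T a G u v → ∀ s ∈ Icc 0 T, ∀ t ∈ Icc 0 T,
        |u t| + |v t| ≤ K * (|u s| + |v s|) := by
  let B : ℝ → ℝ := fun t => ∫ r in (0:ℝ)..t, C * |a r|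
  have h0T : (0:ℝ) ∈ Icc 0 T := ⟨le_refl _, hT.le⟩
  have hTT : T ∈ Icc 0 T := ⟨hT.le, le_refl _⟩
  have hbi : IntervalIntegrable (fun r => C * |a r|) volume 0 T := ha.abs.const_mul C
  have hB : ContinuousOn B (Icc 0 T) := by
    have := intervalIntegral.continuousOn_primitive_interval' hbi (a := 0) (by simp)
    rwa [uIcc_of_le hT.le] at this
  have hBu := isCompact_Icc.uniformContinuousOn_of_continuous hB
  rw [Metric.uniformContinuousOn_iff] at hBu
  obtain ⟨δ₀, hδ₀, hδ⟩ := hBu (1/4) (by norm_num)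
  let δ := min (δ₀/2) (1/4)
  have hδp : 0 < δ := lt_min (by linarith) (by norm_num)
  have hδ1 : δ < δ₀ := lt_of_le_of_lt (min_le_left _ _) (by linarith)
  have hδ2 : δ ≤ 1/4 := min_le_right _ _
  obtain ⟨n, hn⟩ := exists_nat_ge (T/δ)
  refine ⟨2^n, one_le_pow₀ (by norm_num), ?_⟩
  intro G hG hGC u v hS
  have key : ∀ s ∈ Icc 0 T, ∀ t ∈ Icc 0 T, |t - s| ≤ δ → |u t| + |v t| ≤ 2 * (|u s| + |v s|) := by
    intro s hs t ht hst
    have hEc : Continuous fun x => |u x| + |v x| := hS.1.abs.add hS.2.1.abs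
    obtain ⟨p, hp, hpm⟩ := isCompact_uIcc.exists_isMaxOn (s := uIcc s t) ⟨s, left_mem_uIcc⟩
      hEc.continuousOn
    have hsub : uIcc s t ⊆ Icc 0 T := uIcc_subset_Icc hs ht
    have hpT := hsub hp
    have hps : |p - s| ≤ δ := (abs_sub_left_of_mem_uIcc hp).trans hst
    set M := |u p| + |v p| with hM
    have hmax : ∀ x ∈ uIcc s p, |u x| + |v x| ≤ M := fun x hx =>
      hpm (uIcc_subset_uIcc left_mem_uIcc hp hx)
    have hM0 : 0 ≤ M := by positivity
    have e1 : |u p - u s| ≤ M * |p - s| := by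
      rw [hS.u_sub hs hpT]
      rw [← Real.norm_eq_abs (∫ r in s..p, v r)]
      apply intervalIntegral.norm_integral_le_of_norm_le_const
      intro x hx
      have := hmax x (uIoc_subset_uIcc hx)
      rw [Real.norm_eq_abs]; linarith [abs_nonneg (u x)]
    have e2 : |v p - v s| ≤ M * (1/4) := by
      rw [hS.v_sub ha hG hs hpT, abs_neg]
      have : ‖∫ r in s..p, a r * G (u r)‖ ≤ |∫ r in s..p, M * (C * |a r|)| := by
        apply intervalIntegral.norm_integral_le_abs_of_norm_le
        · refine (ae_restrict_iff' measurableSet_uIoc).2 (ae_of_all _ fun x hx => ?_)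
          have h1 := hmax x (uIoc_subset_uIcc hx)
          have h2 := hGC (u x)
          have h3 : |u x| ≤ M := by linarith [abs_nonneg (v x)]
          rw [Real.norm_eq_abs, abs_mul]
          calc |a x| * |G (u x)| ≤ |a x| * (C * M) := by
                gcongr; exact h2.trans (by gcongr)
            _ = M * (C * |a x|) := by ring
        · exact (ii_sub hbi hs hpT).const_mul M
      rw [intervalIntegral.integral_const_mul, abs_mul, abs_of_nonneg hM0] at this
      refine this.trans (mul_le_mul_of_nonneg_left ?_ hM0)
      have h5 := hδ p hpT s hs (by rw [Real.dist_eq]; linarith)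
      rw [Real.dist_eq] at h5
      have : B p - B s = ∫ r in s..p, C * |a r| :=
        intervalIntegral.integral_interval_sub_left (ii_sub hbi h0T hpT) (ii_sub hbi h0T hs)
      rw [← this]; exact h5.le
    have e3 : M * |p - s| ≤ M * (1/4) := mul_le_mul_of_nonneg_left (hps.trans hδ2) hM0
    have e4 : |u p| ≤ |u s| + |u p - u s| := by
      have := abs_add_le (u s) (u p - u s); simpa using this
    have e5 : |v p| ≤ |v s| + |v p - v s| := by
      have := abs_add_le (v s) (v p - v s); simpa using this
    have e6 : |u t| + |v t| ≤ M := hpm right_mem_uIcc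
    linarith
  have chain : ∀ n : ℕ, ∀ s ∈ Icc 0 T, ∀ t ∈ Icc 0 T, |t - s| ≤ n * δ →
      |u t| + |v t| ≤ 2^n * (|u s| + |v s|) := by
    intro n
    induction n with
    | zero =>
      intro s hs t ht h
      have : t = s := by
        have : |t - s| ≤ 0 := by simpa using h
        have := abs_nonpos_iff.1 this; linarith
      simp [this]
    | succ n ih =>
      intro s hs t ht h
      have hn1 : (0:ℝ) < n + 1 := by positivity
      let p := s + (t - s) * (n / (n + 1))
      have hq0 : (0:ℝ) ≤ n / (n+1) := by positivity
      have hq1 : (n:ℝ) / (n+1) ≤ 1 := by rw [div_le_one hn1]; linarith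
      have hp : p ∈ Icc 0 T := by
        have := (convex_Icc (0:ℝ) T) hs ht (sub_nonneg.2 hq1) hq0 (by ring)
        simp only [smul_eq_mul] at this
        convert this using 1
        simp only [p]; ring
      push_cast at h
      have h1 : |p - s| ≤ n * δ := by
        have : p - s = (t - s) * (n / (n+1)) := by simp [p]
        rw [this, abs_mul, abs_of_nonneg hq0]
        calc |t - s| * (n / (n+1)) ≤ ((n+1) * δ) * (n / (n+1)) := by gcongr
          _ = n * δ := by field_simp
      have h2 : |t - p| ≤ δ := by
        have : t - p = (t - s) * (1 / (n+1)) := by simp only [p]; field_simp; ring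
        rw [this, abs_mul, abs_of_nonneg (by positivity : (0:ℝ) ≤ 1/(n+1))]
        calc |t - s| * (1 / (n+1)) ≤ ((n+1) * δ) * (1 / (n+1)) := by gcongr
          _ = δ := by field_simp
      have h3 := ih s hs p hp h1
      have h4 := key p hp t ht h2
      calc _ ≤ _ := h4
        _ ≤ 2 * (2^n * (|u s| + |v s|)) := by gcongr
        _ = _ := by ring
  intro s hs t ht
  refine chain n s hs t ht ?_
  rw [div_le_iff₀ hδp] at hn
  refine le_trans ?_ hn
  rw [abs_le]; constructor <;> linarith [hs.1, hs.2, ht.1, ht.2]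

/-- once nonpositive with negative slope, linear forever -/
theorem Sol.down {T : ℝ} {a G u v : ℝ → ℝ} (h : Sol T a G u v)
    (ha : IntervalIntegrable a volume 0 T) (hG : Continuous G) (hG0 : ∀ s ≤ 0, G s = 0)
    {s : ℝ} (hs : s ∈ Icc 0 T) (hu : u s ≤ 0) (hv : v s < 0) :
    ∀ t ∈ Icc s T, u t ≤ 0 ∧ v t = v s := by
  have hcl : IsClosed ({t | u t ≤ 0 ∧ v t = v s} ∩ Icc s T) :=
    (IsClosed.inter (isClosed_le h.1 continuous_const) (isClosed_eq h.2.1 continuous_const)).inter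
      isClosed_Icc
  have := hcl.Icc_subset_of_forall_mem_nhdsWithin ⟨hu, rfl⟩ (fun x hx => by
    obtain ⟨⟨hux, hvx⟩, hxs, hxT⟩ := hx
    have hxI : x ∈ Icc 0 T := ⟨hs.1.trans hxs, hxT.le⟩
    have hev : ∀ᶠ y in nhds x, v y < 0 :=
      h.2.1.continuousAt.eventually_lt continuousAt_const (by rw [hvx]; exact hv)
    obtain ⟨ε, hε, hball⟩ := Metric.eventually_nhds_iff.1 hev
    have hle : ∀ y ∈ Icc x (min (x + ε/2) T), u y ≤ 0 := by
      intro y hy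
      have hy1 : y ≤ x + ε/2 := hy.2.trans (min_le_left _ _)
      have hyI : y ∈ Icc 0 T := ⟨hxI.1.trans hy.1, hy.2.trans (min_le_right _ _)⟩
      have h1 := h.u_sub hxI hyI
      have h2 : ∫ r in x..y, v r ≤ 0 := by
        have := intervalIntegral.integral_mono_on (μ := volume) hy.1 (h.2.1.intervalIntegrable x y)
          (intervalIntegrable_const (c := (0:ℝ))) (fun r hr => by
            refine (hball ?_).le
            rw [Real.dist_eq, abs_lt]; constructor <;> linarith [hr.1, hr.2])
        simpa using this
      linarith
    have hlt : x < min (x + ε/2) T := lt_min (by linarith) hxT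
    filter_upwards [Icc_mem_nhdsGT hlt] with y hy
    have hyI : y ∈ Icc 0 T := ⟨hxI.1.trans hy.1, hy.2.trans (min_le_right _ _)⟩
    refine ⟨hle y hy, ?_⟩
    have h1 := h.v_sub ha hG hxI hyI
    have h2 : ∫ r in x..y, a r * G (u r) = 0 := by
      rw [intervalIntegral.integral_congr (g := fun _ => (0:ℝ))]
      · simp
      · intro r hr
        rw [uIcc_of_le hy.1] at hr
        simp [hG0 _ (hle r ⟨hr.1, hr.2.trans hy.2⟩)]
    rw [h2] at h1
    linarith)
  exact fun t ht => this ht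

theorem Sol.hit {T : ℝ} {a G u v : ℝ → ℝ} (h : Sol T a G u v) (hT : 0 < T)
    (ha : IntervalIntegrable a volume 0 T) (hG : Continuous G) (hG0 : ∀ s ≤ 0, G s = 0)
    {C : ℝ} (hC : 0 ≤ C) (hGC : ∀ s, |G s| ≤ C * |s|)
    {s t : ℝ} (hs : s ∈ Icc 0 T) (ht : t ∈ Icc s T) (hus : 0 < u s) (hut : u t ≤ 0) :
    u T ≤ 0 ∧ v T < 0 := by
  obtain ⟨p, hp, hpl⟩ := (isCompact_Icc.inter_right (isClosed_le h.1 continuous_const) :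
    IsCompact (Icc s t ∩ {x | u x ≤ 0})).exists_isLeast ⟨t, ⟨ht.1, le_refl _⟩, hut⟩
  have hpu : u p ≤ 0 := hp.2
  have hsp : s < p := lt_of_le_of_ne hp.1.1 (fun e => by rw [e] at hus; linarith)
  have hpI : p ∈ Icc 0 T := ⟨hs.1.trans hsp.le, hp.1.2.trans ht.2⟩
  have hpos : ∀ x ∈ Ico s p, 0 < u x := by
    intro x hx
    by_contra! hc
    exact absurd (hpl ⟨⟨hx.1, hx.2.le.trans hp.1.2⟩, hc⟩) (not_le.2 hx.2)
  have hvp : v p < 0 := by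
    by_contra! hv
    rcases hv.eq_or_lt with hv | hv
    · have hu0 : u p = 0 := by
        obtain ⟨q, hq, hq'⟩ := intermediate_value_Icc' hsp.le (h.1.continuousOn (s := Icc s p))
          (show (0:ℝ) ∈ Icc (u p) (u s) from ⟨hpu, hus.le⟩)
        have : p ≤ q := by
          by_contra! hc
          have := hpos q ⟨hq.1, hc⟩
          linarith
        rw [← hq', le_antisymm this hq.2]
      obtain ⟨K, -, hK⟩ := gron T hT a ha C hC
      have := hK G hG hGC u v h p hpI s hs
      rw [hu0, ← hv] at this
      simp only [abs_zero, add_zero, mul_zero] at this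
      have h1 := abs_nonneg (v s)
      have h2 := abs_pos.2 hus.ne'
      linarith
    · have hev : ∀ᶠ y in nhds p, 0 < v y :=
        continuousAt_const.eventually_lt h.2.1.continuousAt hv
      obtain ⟨ε, hε, hball⟩ := Metric.eventually_nhds_iff.1 hev
      let y := max s (p - ε/2)
      have hyp : y < p := max_lt hsp (by linarith)
      have hys : s ≤ y := le_max_left _ _
      have hye : p - ε/2 ≤ y := le_max_right _ _
      have hyI : y ∈ Icc 0 T := ⟨hs.1.trans hys, hyp.le.trans hpI.2⟩
      have h1 := h.u_sub hyI hpI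
      have h2 : 0 ≤ ∫ r in y..p, v r := by
        apply intervalIntegral.integral_nonneg hyp.le
        intro r hr
        refine (hball ?_).le
        rw [Real.dist_eq, abs_lt]; constructor <;> linarith [hr.1, hr.2]
      have := hpos y ⟨hys, hyp⟩
      linarith
  have := h.down ha hG hG0 hpI hpu hvp T ⟨hpI.2, le_refl _⟩
  exact ⟨this.1, by rw [this.2]; exact hvp⟩

/-- starting at zero with positive slope, positive soon -/
theorem Sol.up {T : ℝ} {a G u v : ℝ → ℝ} (h : Sol T a G u v) (hT : 0 < T)
    (hu : 0 ≤ u 0) (huv : 0 < u 0 ∨ 0 < v 0) (e : ℝ) (he : 0 < e) :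
    ∃ s ∈ Icc 0 T, s < e ∧ 0 < u s := by
  rcases hu.eq_or_lt with h0 | h0
  · have hv : 0 < v 0 := by
      rcases huv with h1 | h1
      · linarith
      · exact h1
    have hev : ∀ᶠ y in nhds 0, v 0 / 2 < v y :=
      continuousAt_const.eventually_lt h.2.1.continuousAt (by linarith)
    obtain ⟨ε, hε, hball⟩ := Metric.eventually_nhds_iff.1 hev
    let y := min (min (ε/2) (e/2)) T
    have hy : 0 < y := lt_min (lt_min (by linarith) (by linarith)) hT
    have hye : y ≤ ε/2 := (min_le_left _ _).trans (min_le_left _ _)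
    have hye' : y ≤ e/2 := (min_le_left _ _).trans (min_le_right _ _)
    have hyI : y ∈ Icc 0 T := ⟨hy.le, min_le_right _ _⟩
    refine ⟨y, hyI, by linarith, ?_⟩
    have h1 := h.u_sub ⟨le_refl _, hT.le⟩ hyI
    have h2 := intervalIntegral.integral_mono_on (μ := volume) hy.le (intervalIntegrable_const (c := v 0 / 2))
      (h.2.1.intervalIntegrable 0 y) (fun r hr => by
        refine (hball ?_).le
        rw [Real.dist_eq, abs_lt]; constructor <;> linarith [hr.1, hr.2])
    simp only [intervalIntegral.integral_const, smul_eq_mul] at h2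
    have : 0 < (y - 0) * (v 0 / 2) := by simp only [sub_zero]; positivity
    linarith
  · exact ⟨0, ⟨le_refl _, hT.le⟩, he, h0⟩


theorem ac_prim {σ τ c : ℝ} {p : ℝ → ℝ} (hp : IntervalIntegrable p volume σ τ) :
    AbsolutelyContinuousOnInterval (fun t => c + ∫ x in σ..t, p x) σ τ := by
  have h1 := hp.absolutelyContinuousOnInterval_intervalIntegral (c := σ) (by simp)
  have h2 : AbsolutelyContinuousOnInterval (fun _ : ℝ => c) σ τ :=
    LipschitzOnWith.absolutelyContinuousOnInterval (K := 0)
      (LipschitzWith.const c).lipschitzOnWith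
  exact h2.add h1

theorem ibp {σ τ : ℝ} (hστ : σ ≤ τ) {p q F H : ℝ → ℝ} (hp : IntervalIntegrable p volume σ τ)
    (hq : IntervalIntegrable q volume σ τ) (hF : ∀ t ∈ Icc σ τ, F t = F σ + ∫ x in σ..t, p x)
    (hH : ∀ t ∈ Icc σ τ, H t = H σ + ∫ x in σ..t, q x) :
    ∫ x in σ..τ, (p x * H x + F x * q x) = F τ * H τ - F σ * H σ := by
  have h1 := (ac_prim (c := F σ) hp).integral_deriv_mul_eq_sub (ac_prim (c := H σ) hq)
  rw [hF τ ⟨hστ, le_refl _⟩, hH τ ⟨hστ, le_refl _⟩]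
  simp only [intervalIntegral.integral_same, add_zero] at h1
  rw [← h1]
  apply intervalIntegral.integral_congr_ae
  filter_upwards [hp.ae_hasDerivAt_integral, hq.ae_hasDerivAt_integral] with x hx1 hx2 hx
  have hx' := uIoc_subset_uIcc hx
  rw [((hx1 hx' σ (by simp)).const_add (F σ)).deriv, ((hx2 hx' σ (by simp)).const_add (H σ)).deriv]
  rw [uIcc_of_le hστ] at hx'
  rw [← hF x hx', ← hH x hx']

theorem large (T : ℝ) (hT : 0 < T) (a : ℝ → ℝ) (ha : IntervalIntegrable a volume 0 T)
    (G : ℝ → ℝ) (hG : Continuous G) (hGn : ∀ s, 0 ≤ G s) (C : ℝ) (hC : 0 ≤ C)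
    (hGC : ∀ s, |G s| ≤ C * |s|) (σ τ : ℝ) (hσ : 0 ≤ σ) (hστ : σ < τ) (hτ : τ ≤ T)
    (hapos : ∀ᵐ x ∂(volume.restrict (Icc σ τ)), 0 ≤ a x)
    (hane0 : ¬ (∀ᵐ x ∂(volume.restrict (Icc σ τ)), a x = 0))
    (lam lam' S : ℝ) (hlam : 0 < lam) (hll : lam < lam') (hS : ∀ s, S ≤ s → lam' * s ≤ G s)
    (hS0 : 0 ≤ S) (φ φ' : ℝ → ℝ)
    (hd : ∀ x ∈ Icc σ τ, HasDerivWithinAt φ (φ' x) (Icc σ τ) x)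
    (hφ'c : ContinuousOn φ' (Icc σ τ))
    (hφpos : ∀ x ∈ Ioo σ τ, 0 < φ x) (hφσ : φ σ = 0) (hφτ : φ τ = 0)
    (hφ' : ∀ x ∈ Icc σ τ, φ' x = φ' σ - lam * ∫ t in σ..x, a t * φ t) :
    ∃ R0 : ℝ, 0 < R0 ∧ ∀ u v, Sol T a G u v → 0 ≤ u 0 → R0 ≤ |u 0| + |v 0| →
      ¬ (∀ t ∈ Ioc 0 T, 0 < u t) := by
  obtain ⟨K, hK1, hK⟩ := gron T hT a ha C hC
  have hu1 : uIcc σ τ = Icc σ τ := uIcc_of_le hστ.le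
  have hσI : σ ∈ Icc 0 T := ⟨hσ, hστ.le.trans hτ⟩
  have hτI : τ ∈ Icc 0 T := ⟨hσ.trans hστ.le, hτ⟩
  have hστI : ∀ t ∈ Icc σ τ, t ∈ Icc 0 T := fun t ht => ⟨hσ.trans ht.1, ht.2.trans hτ⟩
  have haστ : IntervalIntegrable a volume σ τ := ii_sub ha hσI hτI
  have hφc : ContinuousOn φ (Icc σ τ) := fun x hx => (hd x hx).continuousWithinAt
  have hφ'i : IntervalIntegrable φ' volume σ τ := by
    apply ContinuousOn.intervalIntegrable; rwa [hu1]
  -- FTC for φ between points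
  have hφint : ∀ s ∈ Icc σ τ, ∀ t ∈ Icc σ τ, s ≤ t → φ t - φ s = ∫ x in s..t, φ' x := by
    intro s hs t ht hst
    symm
    have hsub : Icc s t ⊆ Icc σ τ := Icc_subset_Icc hs.1 ht.2
    apply intervalIntegral.integral_eq_sub_of_hasDerivAt_of_le hst (hφc.mono hsub)
    · intro x hx
      exact (hd x (hsub (Ioo_subset_Icc_self hx))).hasDerivAt
        (Icc_mem_nhds (hs.1.trans_lt hx.1) (hx.2.trans_le ht.2))
    · apply ContinuousOn.intervalIntegrable; rw [uIcc_of_le hst]; exact hφ'c.mono hsub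
  have hσm : σ ∈ Icc σ τ := ⟨le_refl _, hστ.le⟩
  have hτm : τ ∈ Icc σ τ := ⟨hστ.le, le_refl _⟩
  have hφn : ∀ x ∈ Icc σ τ, 0 ≤ φ x := by
    intro x hx
    rcases hx.1.eq_or_lt with h | h
    · rw [← h, hφσ]
    rcases hx.2.eq_or_lt with h' | h'
    · rw [h', hφτ]
    exact (hφpos x ⟨h, h'⟩).le
  have hφ'σ : 0 ≤ φ' σ := by
    by_contra! hc
    have hev := (hφ'c σ hσm).eventually_lt continuousWithinAt_const hc
    obtain ⟨ε, hε, hball⟩ := Metric.eventually_nhds_iff.1 (eventually_nhdsWithin_iff.1 hev)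
    let y := min (σ + ε/2) ((σ+τ)/2)
    have hy1 : σ < y := lt_min (by linarith) (by linarith)
    have hy2 : y ≤ σ + ε/2 := min_le_left _ _
    have hy3 : y < τ := (min_le_right _ _).trans_lt (by linarith)
    have h1 := hφint σ hσm y ⟨hy1.le, hy3.le⟩ hy1.le
    have h2 : 0 ≤ ∫ x in σ..y, - φ' x := by
      apply intervalIntegral.integral_nonneg hy1.le
      intro r hr
      have := hball (y := r) (by rw [Real.dist_eq, abs_lt]; constructor <;> linarith [hr.1, hr.2])
        ⟨hr.1, hr.2.trans hy3.le⟩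
      linarith
    rw [intervalIntegral.integral_neg, ← h1, hφσ] at h2
    have := hφpos y ⟨hy1, hy3⟩
    linarith
  have hφ'τ : φ' τ ≤ 0 := by
    by_contra! hc
    have hev := (continuousWithinAt_const).eventually_lt (hφ'c τ hτm) hc
    obtain ⟨ε, hε, hball⟩ := Metric.eventually_nhds_iff.1 (eventually_nhdsWithin_iff.1 hev)
    let y := max (τ - ε/2) ((σ+τ)/2)
    have hy1 : y < τ := max_lt (by linarith) (by linarith)
    have hy2 : τ - ε/2 ≤ y := le_max_left _ _
    have hy3 : σ < y := lt_of_lt_of_le (by linarith) (le_max_right _ _)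
    have h1 := hφint y ⟨hy3.le, hy1.le⟩ τ hτm hy1.le
    have h2 : 0 ≤ ∫ x in y..τ, φ' x := by
      apply intervalIntegral.integral_nonneg hy1.le
      intro r hr
      have := hball (y := r) (by rw [Real.dist_eq, abs_lt]; constructor <;> linarith [hr.1, hr.2])
        ⟨hy3.le.trans hr.1, hr.2⟩
      linarith
    rw [← h1, hφτ] at h2
    have := hφpos y ⟨hy3, hy1⟩
    linarith
  let d : ℝ → ℝ := fun t => min (t - σ) (τ - t)
  let w : ℝ → ℝ := fun t => d t / (1 + d t)
  have hd0 : ∀ t ∈ Icc σ τ, 0 ≤ d t := fun t ht => le_min (by linarith [ht.1]) (by linarith [ht.2])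
  have hdc : Continuous d := by fun_prop
  have hwc : ContinuousOn w (Icc σ τ) := by
    apply ContinuousOn.div hdc.continuousOn (by fun_prop)
    intro t ht; have := hd0 t ht; positivity
  have hw0 : ∀ t ∈ Icc σ τ, 0 ≤ w t := fun t ht => by have := hd0 t ht; simp only [w]; positivity
  have hwpos : ∀ t ∈ Ioo σ τ, 0 < w t := by
    intro t ht
    have : 0 < d t := lt_min (by linarith [ht.1]) (by linarith [ht.2])
    simp only [w]; positivity
  have hi1 : IntervalIntegrable (fun t => a t * φ t) volume σ τ :=
    haστ.mul_continuousOn (by rwa [hu1])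
  have hi2 : IntervalIntegrable (fun t => a t * φ t * w t) volume σ τ :=
    hi1.mul_continuousOn (by rwa [hu1])
  have hae : ∀ᵐ x ∂(volume.restrict (Icc σ τ)), 0 ≤ a x * φ x * w x := by
    filter_upwards [hapos, ae_restrict_mem measurableSet_Icc] with x hx hxm
    exact mul_nonneg (mul_nonneg hx (hφn x hxm)) (hw0 x hxm)
  have hJ : 0 < ∫ t in σ..τ, a t * φ t * w t := by
    have h0 : 0 ≤ ∫ t in σ..τ, a t * φ t * w t :=
      intervalIntegral.integral_nonneg_of_ae_restrict hστ.le hae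
    refine lt_of_le_of_ne h0 (fun he => hane0 ?_)
    have hae' : 0 ≤ᵐ[volume.restrict (Ioc σ τ)] fun x => a x * φ x * w x :=
      ae_restrict_of_ae_restrict_of_subset Ioc_subset_Icc_self hae
    have hz := (intervalIntegral.integral_eq_zero_iff_of_le_of_nonneg_ae hστ.le hae' hi2).1 he.symm
    have hz' : (fun x => a x * φ x * w x) =ᵐ[volume.restrict (Ioo σ τ)] 0 :=
      ae_restrict_of_ae_restrict_of_subset Ioo_subset_Ioc_self hz
    rw [← restrict_Ioo_eq_restrict_Icc]
    filter_upwards [hz', ae_restrict_mem measurableSet_Ioo] with x hx hxm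
    have h1 := hφpos x hxm
    have h2 := hwpos x hxm
    simp only [Pi.zero_apply, mul_eq_zero] at hx
    rcases hx with (hx | hx) | hx
    · exact hx
    · linarith
    · linarith
  set J := ∫ t in σ..τ, a t * φ t * w t with hJdef
  set J1 := ∫ t in σ..τ, a t * φ t with hJ1def
  have hJ1 : 0 ≤ J1 := by
    apply intervalIntegral.integral_nonneg_of_ae_restrict hστ.le
    filter_upwards [hapos, ae_restrict_mem measurableSet_Icc] with x hx hxm
    exact mul_nonneg hx (hφn x hxm)
  have hlam' : 0 < lam' := hlam.trans hll
  have hK0 : 0 < K := by linarith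
  have hdl : 0 < lam' - lam := by linarith
  refine ⟨K * (lam' * S * J1 + 1) / ((lam' - lam) * J), by positivity, ?_⟩
  intro u v hSol hu0 hR hpos
  set R := |u 0| + |v 0| with hRdef
  have h0I : (0:ℝ) ∈ Icc 0 T := ⟨le_refl _, hT.le⟩
  have hun : ∀ t ∈ Icc 0 T, 0 ≤ u t := by
    intro t ht
    rcases ht.1.eq_or_lt with h | h
    · rw [← h]; exact hu0
    · exact (hpos t ⟨h, ht.2⟩).le
  have hGi : IntervalIntegrable (fun t => a t * G (u t)) volume σ τ :=
    ii_mul ha (hG.comp hSol.1) hσI hτI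
  -- v antitone
  have hvanti : ∀ s ∈ Icc σ τ, ∀ t ∈ Icc σ τ, s ≤ t → v t ≤ v s := by
    intro s hs t ht hst
    have h1 := hSol.v_sub ha hG (hστI s hs) (hστI t ht)
    have h2 : 0 ≤ ∫ r in s..t, a r * G (u r) := by
      apply intervalIntegral.integral_nonneg_of_ae_restrict hst
      have := ae_restrict_of_ae_restrict_of_subset (Icc_subset_Icc hs.1 ht.2) hapos
      filter_upwards [this] with x hx
      exact mul_nonneg hx (hGn _)
    linarith
  -- lower bound
  have hlow : ∀ t ∈ Icc σ τ, R / K * w t ≤ u t := by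
    intro t ht
    have hut := hun t (hστI t ht)
    have hdt := hd0 t ht
    have e1 : R / K ≤ |u t| + |v t| := by
      rw [div_le_iff₀ hK0, mul_comm]
      exact hK G hG hGC u v hSol t (hστI t ht) 0 h0I
    rw [abs_of_nonneg hut] at e1
    have e2 : v t * (t - σ) ≤ u t := by
      have h1 := hSol.u_sub hσI (hστI t ht)
      have h2 := intervalIntegral.integral_mono_on (μ := volume) ht.1
        (intervalIntegrable_const (c := v t)) (hSol.2.1.intervalIntegrable σ t) (fun r hr =>
          hvanti r ⟨hr.1, hr.2.trans ht.2⟩ t ht hr.2)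
      simp only [intervalIntegral.integral_const, smul_eq_mul] at h2
      have := hun σ hσI
      linarith
    have e3 : - v t * (τ - t) ≤ u t := by
      have h1 := hSol.u_sub (hστI t ht) hτI
      have h2 := intervalIntegral.integral_mono_on (μ := volume) ht.2
        (hSol.2.1.intervalIntegrable t τ) (intervalIntegrable_const (c := v t)) (fun r hr =>
          hvanti t ht r ⟨ht.1.trans hr.1, hr.2⟩ hr.1)
      simp only [intervalIntegral.integral_const, smul_eq_mul] at h2
      have := hun τ hτI
      linarith
    have e4 : |v t| * d t ≤ u t := by
      rcases le_total 0 (v t) with h | h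
      · rw [abs_of_nonneg h]
        exact (mul_le_mul_of_nonneg_left (min_le_left _ _) h).trans e2
      · rw [abs_of_nonpos h]
        exact (mul_le_mul_of_nonneg_left (min_le_right _ _) (by linarith)).trans e3
    have e5 : R / K * d t ≤ u t * (1 + d t) := by
      calc R / K * d t ≤ (u t + |v t|) * d t := mul_le_mul_of_nonneg_right e1 hdt
        _ ≤ _ := by nlinarith
    simp only [w]
    rw [← mul_div_assoc, div_le_iff₀ (by linarith)]
    exact e5
  -- identities
  have i1 := ibp hστ.le (p := φ') (q := fun t => -(a t * G (u t))) (F := φ) (H := v) hφ'i hGi.neg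
    (fun t ht => by have := hφint σ hσm t ht ht.1; linarith)
    (fun t ht => by
      have := hSol.v_sub ha hG hσI (hστI t ht)
      rw [intervalIntegral.integral_neg]; linarith)
  have i2 := ibp hστ.le (p := v) (q := fun t => -(lam * (a t * φ t))) (F := u) (H := φ')
    (hSol.2.1.intervalIntegrable _ _) (hi1.const_mul lam).neg
    (fun t ht => by have := hSol.u_sub hσI (hστI t ht); linarith)
    (fun t ht => by
      rw [intervalIntegral.integral_neg, intervalIntegral.integral_const_mul, hφ' t ht]; ring)
  rw [hφσ, hφτ] at i1
  have huc : ContinuousOn u (uIcc σ τ) := hSol.1.continuousOn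
  have hvc : ContinuousOn v (uIcc σ τ) := hSol.2.1.continuousOn
  have j1 : IntervalIntegrable (fun x => φ' x * v x + φ x * -(a x * G (u x))) volume σ τ :=
    (hφ'i.mul_continuousOn hvc).add (hGi.neg.continuousOn_mul (by rwa [hu1]))
  have j2 : IntervalIntegrable (fun x => v x * φ' x + u x * -(lam * (a x * φ x))) volume σ τ :=
    (hφ'i.continuousOn_mul hvc).add ((hi1.const_mul lam).neg.continuousOn_mul huc)
  have i3 := intervalIntegral.integral_sub j2 j1
  rw [i1, i2] at i3
  have i4 : u τ * φ' τ - u σ * φ' σ ≤ 0 := by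
    have h1 := mul_nonpos_of_nonneg_of_nonpos (hun τ hτI) hφ'τ
    have h2 := mul_nonneg (hun σ hσI) hφ'σ
    linarith
  have i5 : ∫ x in σ..τ, ((lam' - lam) * (R / K) * (a x * φ x * w x) - lam' * S * (a x * φ x)) ≤
      ∫ x in σ..τ, (v x * φ' x + u x * -(lam * (a x * φ x)) -
        (φ' x * v x + φ x * -(a x * G (u x)))) := by
    apply intervalIntegral.integral_mono_ae_restrict hστ.le
      ((hi2.const_mul _).sub (hi1.const_mul _)) (j2.sub j1)
    filter_upwards [hapos, ae_restrict_mem measurableSet_Icc] with x hx hxm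
    have h1 := hφn x hxm
    have h2 := hlow x hxm
    have h3 := hun x (hστI x hxm)
    have h4 : lam' * u x - lam' * S ≤ G (u x) := by
      rcases le_total S (u x) with h | h
      · have := hS _ h
        have : 0 ≤ lam' * S := by positivity
        linarith
      · have := hGn (u x)
        have := mul_le_mul_of_nonneg_left h hlam'.le
        linarith
    have h5 : (lam' - lam) * (R / K * w x) ≤ (lam' - lam) * u x :=
      mul_le_mul_of_nonneg_left h2 hdl.le
    have h6 : (lam' - lam) * (R / K * w x) - lam' * S ≤ G (u x) - lam * u x := by linarith
    have h7 := mul_le_mul_of_nonneg_left h6 (mul_nonneg hx h1)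
    linarith
  rw [i3, intervalIntegral.integral_sub (hi2.const_mul _) (hi1.const_mul _),
    intervalIntegral.integral_const_mul, intervalIntegral.integral_const_mul] at i5
  have i6 : (lam' - lam) * (R / K) * J - lam' * S * J1 ≤ 0 := by
    have : u τ * φ' τ - u σ * φ' σ - (0 * v τ - 0 * v σ) ≤ 0 := by linarith
    exact i5.trans this
  rw [div_le_iff₀ (by positivity)] at hR
  have i7 : lam' * S * J1 + 1 ≤ (lam' - lam) * (R / K) * J := by
    have : (lam' - lam) * (R / K) * J = (R * ((lam' - lam) * J)) / K := by field_simp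
    rw [this, le_div_iff₀ hK0]
    linarith
  linarith


theorem Sol.v_bd {T : ℝ} {a G u v : ℝ → ℝ} (h : Sol T a G u v)
    (ha : IntervalIntegrable a volume 0 T) (hG : Continuous G) {B : ℝ}
    (hB : ∀ x ∈ Icc 0 T, |G (u x)| ≤ B) {s t : ℝ}
    (hs : s ∈ Icc 0 T) (ht : t ∈ Icc 0 T) : |v t - v s| ≤ (∫ x in (0:ℝ)..T, |a x|) * B := by
  have hT : 0 ≤ T := hs.1.trans hs.2
  have hB0 : 0 ≤ B := (abs_nonneg _).trans (hB s hs)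
  rw [h.v_sub ha hG hs ht, abs_neg]
  have h1 : ‖∫ r in s..t, a r * G (u r)‖ ≤ |∫ r in s..t, |a r| * B| := by
    apply intervalIntegral.norm_integral_le_abs_of_norm_le
    · refine (ae_restrict_iff' measurableSet_uIoc).2 (ae_of_all _ fun x hx => ?_)
      rw [Real.norm_eq_abs, abs_mul]
      exact mul_le_mul_of_nonneg_left (hB x (uIcc_subset_Icc hs ht (uIoc_subset_uIcc hx)))
        (abs_nonneg _)
    · exact (ii_sub ha.abs hs ht).mul_const B
  rw [intervalIntegral.integral_mul_const, abs_mul, abs_of_nonneg hB0] at h1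
  refine h1.trans (mul_le_mul_of_nonneg_right ?_ hB0)
  have h2 := intervalIntegral.abs_integral_mono_interval (μ := volume) (f := fun x => |a x|)
    (a := s) (b := t) (c := 0) (d := T) (by
      rw [uIoc_of_le hT]
      intro x hx
      rw [mem_uIoc] at hx
      rcases hx with hx | hx
      · exact ⟨hs.1.trans_lt hx.1, hx.2.trans ht.2⟩
      · exact ⟨ht.1.trans_lt hx.1, hx.2.trans hs.2⟩) (ae_of_all _ fun x => abs_nonneg (a x)) ha.abs
  rwa [abs_of_nonneg (a := ∫ x in (0:ℝ)..T, |a x|)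
    (intervalIntegral.integral_nonneg hT fun x _ => abs_nonneg (a x))] at h2

theorem small (T : ℝ) (hT : 0 < T) (a : ℝ → ℝ) (ha : IntervalIntegrable a volume 0 T)
    (g : ℝ → ℝ) (hg1 : CondG1 g) (hreg : RegOscAtZero g)
    (hg0 : Tendsto (fun s => g s / s) (nhdsWithin 0 (Ioi 0)) (nhds 0))
    (hG : Continuous fun s => g (max s 0)) (C : ℝ) (hC : 0 ≤ C)
    (hGC : ∀ s, |g (max s 0)| ≤ C * |s|)
    (ha2 : (∫ x in (0:ℝ)..T, a x) < 0) :
    ∃ ρ0 : ℝ, 0 < ρ0 ∧ ∀ u v, Sol T a (fun s => g (max s 0)) u v → |u 0| + |v 0| ≤ ρ0 →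
      ((u 0 = 0 → 0 < v 0 → 0 < u T) ∧
       (0 < u 0 → (∃ t ∈ Icc 0 T, v t = 0) → v 0 < v T)) := by
  obtain ⟨K, hK1, hK⟩ := gron T hT a ha C hC
  set A := ∫ x in (0:ℝ)..T, |a x| with hA
  have hA0 : 0 ≤ A := intervalIntegral.integral_nonneg hT.le fun x _ => abs_nonneg (a x)
  set I := - ∫ x in (0:ℝ)..T, a x with hI
  have hI0 : 0 < I := by linarith
  obtain ⟨δ1, hδ1, η, hη, hosc⟩ := hreg (I / (2 * (A + 1))) (by positivity)
  let η' := min η (1/2)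
  have hη'0 : 0 < η' := lt_min hη (by norm_num)
  have hη'1 : η' ≤ η := min_le_left _ _
  have hη'2 : η' ≤ 1/2 := min_le_right _ _
  let ε := min (η' / (4 * (T * A + 1))) (1 / (2 * (A * K + 1)))
  have hTA : 0 ≤ T * A := by positivity
  have hAK : 0 ≤ A * K := by positivity
  have hε : 0 < ε := lt_min (by positivity) (by positivity)
  have hε1 : T * A * ε ≤ η' / 4 := by
    have h1 : ε ≤ η' / (4 * (T * A + 1)) := min_le_left _ _
    rw [le_div_iff₀ (by positivity)] at h1
    nlinarith
  have hε2 : A * K * ε ≤ 1 / 2 := by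
    have h1 : ε ≤ 1 / (2 * (A * K + 1)) := min_le_right _ _
    rw [le_div_iff₀ (by positivity)] at h1
    nlinarith
  obtain ⟨δ2, hδ2, hgε⟩ : ∃ δ2 > 0, ∀ s, 0 < s → s < δ2 → g s ≤ ε * s := by
    have := hg0.eventually_lt_const hε
    obtain ⟨δ, hδ, hb⟩ := Metric.eventually_nhds_iff.1 (eventually_nhdsWithin_iff.1 this)
    refine ⟨δ, hδ, fun s hs hsδ => ?_⟩
    have := hb (y := s) (by rw [Real.dist_eq, sub_zero, abs_of_pos hs]; exact hsδ) hs
    rw [div_lt_iff₀ hs] at this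
    exact this.le
  have hGε : ∀ s, |s| < δ2 → |g (max s 0)| ≤ ε * |s| := by
    intro s hs
    rcases le_or_gt s 0 with h | h
    · rw [max_eq_right h, hg1.2.2.1, abs_zero]; positivity
    · rw [abs_of_pos h] at hs ⊢
      rw [max_eq_left h.le, abs_of_nonneg (hg1.2.1 s h.le)]
      exact hgε s h hs
  have hK0 : 0 < K := by linarith
  refine ⟨min δ1 δ2 / (2 * K), by positivity, ?_⟩
  intro u v hS hsm
  have h0I : (0:ℝ) ∈ Icc 0 T := ⟨le_refl _, hT.le⟩
  have hTI : T ∈ Icc 0 T := ⟨hT.le, le_refl _⟩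
  set ρ := |u 0| + |v 0| with hρ
  rw [le_div_iff₀ (by positivity)] at hsm
  have hρ0 : 0 ≤ ρ := by positivity
  have hKρ1 : K * ρ < δ1 ∨ ρ = 0 := by
    left
    have := min_le_left δ1 δ2
    nlinarith
  have hmn := lt_min hδ1 hδ2
  have hKρδ1 : K * ρ < δ1 := by have := min_le_left δ1 δ2; nlinarith
  have hKρδ2 : K * ρ < δ2 := by have := min_le_right δ1 δ2; nlinarith
  have hE : ∀ t ∈ Icc 0 T, |u t| ≤ K * ρ := by
    intro t ht
    have := hK _ hG hGC u v hS 0 h0I t ht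
    linarith [abs_nonneg (v t)]
  constructor
  · intro hu0 hv0
    have hρv : ρ = v 0 := by rw [hρ, hu0, abs_zero, zero_add, abs_of_pos hv0]
    have hb : ∀ t ∈ Icc 0 T, |v t - v 0| ≤ A * (ε * (K * ρ)) := fun t ht =>
      hS.v_bd ha hG (fun x hx => (hGε _ ((hE x hx).trans_lt hKρδ2)).trans
        (mul_le_mul_of_nonneg_left (hE x hx) hε.le)) h0I ht
    have hb' : ∀ t ∈ Icc 0 T, v 0 / 2 ≤ v t := by
      intro t ht
      have h1 := (abs_le.1 (hb t ht)).1
      have h2 : A * (ε * (K * ρ)) ≤ 1 / 2 * v 0 := by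
        rw [hρv]
        calc A * (ε * (K * v 0)) = A * K * ε * v 0 := by ring
          _ ≤ _ := mul_le_mul_of_nonneg_right hε2 hv0.le
      linarith
    have h1 := hS.u_sub h0I hTI
    have h2 := intervalIntegral.integral_mono_on (μ := volume) hT.le
      (intervalIntegrable_const (c := v 0 / 2)) (hS.2.1.intervalIntegrable 0 T) hb'
    simp only [intervalIntegral.integral_const, smul_eq_mul, sub_zero] at h2
    have : 0 < T * (v 0 / 2) := by positivity
    linarith
  · rintro hx ⟨t0, ht0, hvt0⟩
    set x := u 0 with hxdef
    obtain ⟨p, hp, hpm⟩ := isCompact_Icc.exists_isMaxOn (s := Icc 0 T) ⟨0, h0I⟩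
      (hS.1.abs.continuousOn)
    set M := |u p| with hM
    have hM0 : 0 ≤ M := abs_nonneg _
    have hMb : ∀ t ∈ Icc 0 T, |u t| ≤ M := fun t ht => hpm ht
    have hvb : ∀ t ∈ Icc 0 T, |v t| ≤ A * (ε * M) := by
      intro t ht
      have := hS.v_bd ha hG (fun y hy => (hGε _ ((hE y hy).trans_lt hKρδ2)).trans
        (mul_le_mul_of_nonneg_left (hMb y hy) hε.le)) ht0 ht
      rwa [hvt0, sub_zero] at this
    have hub : ∀ t ∈ Icc 0 T, |u t - x| ≤ η' / 4 * M := by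
      intro t ht
      rw [hxdef, hS.u_sub h0I ht, ← Real.norm_eq_abs]
      have h1 : ‖∫ r in (0:ℝ)..t, v r‖ ≤ A * (ε * M) * |t - 0| := by
        apply intervalIntegral.norm_integral_le_of_norm_le_const
        intro y hy
        exact hvb y (uIcc_subset_Icc h0I ht (uIoc_subset_uIcc hy))
      rw [sub_zero, abs_of_nonneg ht.1] at h1
      calc _ ≤ _ := h1
        _ ≤ A * (ε * M) * T := mul_le_mul_of_nonneg_left ht.2 (by positivity)
        _ = T * A * ε * M := by ring
        _ ≤ _ := mul_le_mul_of_nonneg_right hε1 hM0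
    have hM2 : M ≤ 2 * x := by
      have h1 := hub p hp
      have h2 : |u p| ≤ |x| + |u p - x| := by
        have := abs_add_le x (u p - x); simpa using this
      rw [abs_of_pos hx] at h2
      nlinarith
    have hxδ : x < δ1 := by
      have : |x| ≤ K * ρ := hE 0 h0I
      rw [abs_of_pos hx] at this
      linarith
    have hgx := hg1.2.2.2 x hx
    have hG1 : ∀ t ∈ Icc 0 T, |g (max (u t) 0) - g x| ≤ I / (2 * (A + 1)) * g x := by
      intro t ht
      have h1 : |u t - x| < η' * x := by
        have h2 := hub t ht
        have h3 : η' / 4 * M ≤ η' / 4 * (2 * x) := mul_le_mul_of_nonneg_left hM2 (by positivity)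
        have : 0 < η' * x := by positivity
        linarith
      have hut : 0 < u t := by
        have := (abs_lt.1 h1).1
        nlinarith
      have h4 := hosc x (u t / x) hx hxδ (by
        rw [div_sub_one hx.ne', abs_div, abs_of_pos hx, div_lt_iff₀ hx]
        exact h1.trans_le (mul_le_mul_of_nonneg_right hη'1 hx.le))
      rw [div_mul_cancel₀ _ hx.ne', div_sub_one hgx.ne', abs_div, abs_of_pos hgx,
        div_lt_iff₀ hgx] at h4
      rw [max_eq_left hut.le]
      exact h4.le
    have h1 := hS.v_sub ha hG h0I hTI
    have hi : IntervalIntegrable (fun r => a r * g (max (u r) 0)) volume 0 T :=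
      ii_mul ha (hG.comp hS.1) h0I hTI
    have h2 : ‖∫ r in (0:ℝ)..T, (a r * g (max (u r) 0) - a r * g x)‖ ≤
        |∫ r in (0:ℝ)..T, |a r| * (I / (2 * (A + 1)) * g x)| := by
      apply intervalIntegral.norm_integral_le_abs_of_norm_le
      · refine (ae_restrict_iff' measurableSet_uIoc).2 (ae_of_all _ fun y hy => ?_)
        rw [← mul_sub, Real.norm_eq_abs, abs_mul]
        exact mul_le_mul_of_nonneg_left (hG1 y (uIcc_subset_Icc h0I hTI (uIoc_subset_uIcc hy)))
          (abs_nonneg _)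
      · exact ha.abs.mul_const _
    rw [intervalIntegral.integral_sub hi (ha.mul_const _), intervalIntegral.integral_mul_const,
      intervalIntegral.integral_mul_const, ← hA, abs_of_nonneg (by positivity), Real.norm_eq_abs] at h2
    have h3 := (abs_le.1 h2).2
    have h4 : A * (I / (2 * (A + 1)) * g x) ≤ I / 2 * g x := by
      have : A * (I / (2 * (A + 1)) * g x) = (A / (A + 1)) * (I / 2 * g x) := by field_simp
      rw [this]
      apply mul_le_of_le_one_left (by positivity)
      rw [div_le_one (by positivity)]; linarith
    have h5 : (∫ r in (0:ℝ)..T, a r) * g x = - (I * g x) := by rw [hI]; ring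
    rw [h5] at h3
    have : 0 < I * g x := by positivity
    linarith


noncomputable def tV (b GG : ℝ → ℝ) (h : ℝ) (W : ℝ × ℝ → ℝ → ℝ) (q : ℝ × ℝ) (t : ℝ) : ℝ :=
  q.2 - ∫ s in (0:ℝ)..t, b s * GG (W q (max (s - h) 0))

noncomputable def tU (b GG : ℝ → ℝ) (h : ℝ) : ℕ → ℝ × ℝ → ℝ → ℝ
  | 0 => fun q _ => q.1
  | k + 1 => fun q t => q.1 + ∫ r in (0:ℝ)..t, tV b GG h (tU b GG h k) q r

theorem tV_cont {b GG : ℝ → ℝ} {h B : ℝ} (hb : Integrable b) (hG : Continuous GG)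
    (hB : ∀ s, |GG s| ≤ B) {W : ℝ × ℝ → ℝ → ℝ} (hW : Continuous (Function.uncurry W)) :
    Continuous (Function.uncurry (tV b GG h W)) := by
  have : Continuous fun p : (ℝ × ℝ) × ℝ =>
      ∫ s in (0:ℝ)..p.2, b s * GG (W p.1 (max (s - h) 0)) := by
    rw [continuous_iff_continuousAt]
    rintro ⟨q, t⟩
    have hc : ∀ q : ℝ × ℝ, Continuous fun s => GG (W q (max (s - h) 0)) := fun q =>
      hG.comp (hW.comp (by fun_prop : Continuous fun s : ℝ => (q, max (s - h) 0)))
    have hc' : ∀ s : ℝ, Continuous fun q => GG (W q (max (s - h) 0)) := fun s =>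
      hG.comp (hW.comp (by fun_prop : Continuous fun q : ℝ × ℝ => (q, max (s - h) 0)))
    refine intervalIntegral.continuousAt_parametric_primitive_of_dominated
      (F := fun (q : ℝ × ℝ) s => b s * GG (W q (max (s - h) 0)))
      (fun s => |b s| * B) (-|t| - 1) (|t| + 1) ?_ ?_ ?_ ?_ ?_ ?_ (by simp)
    · intro q
      exact (hb.aestronglyMeasurable.restrict).mul (hc q).aestronglyMeasurable
    · refine Eventually.of_forall fun q => ae_of_all _ fun s => ?_
      rw [Real.norm_eq_abs, abs_mul]
      exact mul_le_mul_of_nonneg_left (hB _) (abs_nonneg _)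
    · exact (hb.abs.mul_const B).intervalIntegrable
    · exact ae_of_all _ fun s => (continuous_const.mul (hc' s)).continuousAt
    · constructor <;> have := abs_nonneg t <;> linarith
    · constructor
      · have := neg_abs_le t; linarith
      · have := le_abs_self t; linarith
  exact (continuous_snd.comp continuous_fst).sub this

theorem tU_cont {b GG : ℝ → ℝ} {h B : ℝ} (hb : Integrable b) (hG : Continuous GG)
    (hB : ∀ s, |GG s| ≤ B) (k : ℕ) : Continuous (Function.uncurry (tU b GG h k)) := by
  induction k with
  | zero => exact continuous_fst.comp continuous_fst
  | succ k ih =>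
    exact (continuous_fst.comp continuous_fst).add
      (intervalIntegral.continuous_parametric_primitive_of_continuous (tV_cont hb hG hB ih))

theorem tU_stab (b GG : ℝ → ℝ) {h : ℝ} (hh : 0 < h) (q : ℝ × ℝ) (k : ℕ) :
    ∀ t ∈ Icc 0 (k * h), tU b GG h (k + 1) q t = tU b GG h k q t := by
  induction k with
  | zero =>
    intro t ht
    have : t = 0 := le_antisymm (by simpa using ht.2) ht.1
    subst this
    simp [tU]
  | succ k ih =>
    intro t ht
    change q.1 + ∫ r in (0:ℝ)..t, tV b GG h (tU b GG h (k + 1)) q r =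
      q.1 + ∫ r in (0:ℝ)..t, tV b GG h (tU b GG h k) q r
    congr 1
    refine intervalIntegral.integral_congr fun r hr => ?_
    rw [uIcc_of_le ht.1] at hr
    simp only [tV]
    congr 1
    refine intervalIntegral.integral_congr fun s hs => ?_
    rw [uIcc_of_le hr.1] at hs
    have e1 := ih (max (s - h) 0) ?_
    · change b s * GG _ = b s * GG _
      rw [e1]
    refine ⟨le_max_right _ _, max_le ?_ (by positivity)⟩
    have := ht.2
    push_cast at this
    linarith [hs.2, hr.2]

theorem tonelli (T : ℝ) {b GG : ℝ → ℝ} {B : ℝ} (hb : Integrable b) (hG : Continuous GG)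
    (hB : ∀ s, |GG s| ≤ B) {h : ℝ} (hh : 0 < h) : ∃ U V : ℝ × ℝ → ℝ → ℝ,
    Continuous (Function.uncurry U) ∧ Continuous (Function.uncurry V) ∧
    ∀ q, (∀ t ∈ Icc 0 T, U q t = q.1 + ∫ r in (0:ℝ)..t, V q r) ∧
      (∀ t ∈ Icc 0 T, V q t = q.2 - ∫ s in (0:ℝ)..t, b s * GG (U q (max (s - h) 0))) := by
  obtain ⟨k, hk⟩ := exists_nat_ge (T / h)
  rw [div_le_iff₀ hh] at hk
  refine ⟨tU b GG h (k + 1), tV b GG h (tU b GG h k), tU_cont hb hG hB _,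
    tV_cont hb hG hB (tU_cont hb hG hB _), fun q => ⟨fun t _ => rfl, fun t ht => ?_⟩⟩
  rw [tV]
  congr 1
  refine intervalIntegral.integral_congr fun s hs => ?_
  rw [uIcc_of_le ht.1] at hs
  have e1 := tU_stab b GG hh q k (max (s - h) 0) ?_
  · change b s * GG _ = b s * GG _
    rw [e1]
  refine ⟨le_max_right _ _, max_le ?_ ((ht.1.trans ht.2).trans hk)⟩
  linarith [hs.2, ht.2]


theorem cpt (T : ℝ) (hT : 0 < T) {b GG : ℝ → ℝ} {B R : ℝ} (hb : Integrable b)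
    (hG : Continuous GG) (hB : ∀ s, |GG s| ≤ B) (h : ℕ → ℝ) (hh : ∀ n, 0 < h n)
    (hh0 : Tendsto h atTop (nhds 0)) (U V : ℕ → ℝ → ℝ) (hUc : ∀ n, Continuous (U n))
    (hVc : ∀ n, Continuous (V n))
    (hU : ∀ n, ∀ t ∈ Icc 0 T, U n t = U n 0 + ∫ r in (0:ℝ)..t, V n r)
    (hV : ∀ n, ∀ t ∈ Icc 0 T, V n t = V n 0 - ∫ s in (0:ℝ)..t, b s * GG (U n (max (s - h n) 0)))
    (hU0 : ∀ n, |U n 0| ≤ R) (hV0 : ∀ n, |V n 0| ≤ R) :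
    ∃ u v, Sol T b GG u v ∧ ∃ φ : ℕ → ℕ, StrictMono φ ∧
      Tendsto (fun n => U (φ n) 0) atTop (nhds (u 0)) ∧
      Tendsto (fun n => V (φ n) 0) atTop (nhds (v 0)) ∧
      Tendsto (fun n => U (φ n) T) atTop (nhds (u T)) ∧
      Tendsto (fun n => V (φ n) T) atTop (nhds (v T)) := by
  have hR : 0 ≤ R := (abs_nonneg _).trans (hU0 0)
  have hB0 : 0 ≤ B := (abs_nonneg _).trans (hB 0)
  have h0I : (0:ℝ) ∈ Icc 0 T := ⟨le_refl _, hT.le⟩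
  have hTI : T ∈ Icc 0 T := ⟨hT.le, le_refl _⟩
  set A := ∫ s, |b s| with hA
  have hA0 : 0 ≤ A := integral_nonneg fun s => abs_nonneg _
  set L : NNReal := ⟨R + A * B, by positivity⟩ with hL
  have hLe : (L : ℝ) = R + A * B := rfl
  have hVb : ∀ n, ∀ t ∈ Icc 0 T, |V n t| ≤ L := by
    intro n t ht
    rw [hV n t ht, hLe]
    refine (abs_sub _ _).trans (add_le_add (hV0 n) ?_)
    have h1 : ‖∫ s in (0:ℝ)..t, b s * GG (U n (max (s - h n) 0))‖ ≤
        |∫ s in (0:ℝ)..t, |b s| * B| := by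
      apply intervalIntegral.norm_integral_le_abs_of_norm_le
      · refine ae_of_all _ fun x => ?_
        rw [Real.norm_eq_abs, abs_mul]
        exact mul_le_mul_of_nonneg_left (hB _) (abs_nonneg _)
      · exact (hb.abs.mul_const B).intervalIntegrable
    refine h1.trans ?_
    rw [intervalIntegral.integral_mul_const, abs_mul, abs_of_nonneg hB0]
    refine mul_le_mul_of_nonneg_right ?_ hB0
    rw [intervalIntegral.integral_of_le ht.1, abs_of_nonneg (integral_nonneg fun s => abs_nonneg _)]
    exact setIntegral_le_integral hb.abs (ae_of_all _ fun s => abs_nonneg _)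
  have hUl : ∀ n, ∀ s ∈ Icc 0 T, ∀ t ∈ Icc 0 T, |U n t - U n s| ≤ L * |t - s| := by
    intro n s hs t ht
    have e : U n t - U n s = ∫ r in s..t, V n r := by
      have := intervalIntegral.integral_interval_sub_left
        ((hVc n).intervalIntegrable (μ := volume) 0 t) ((hVc n).intervalIntegrable 0 s)
      rw [hU n t ht, hU n s hs, ← this]
      ring
    rw [e, ← Real.norm_eq_abs (∫ r in s..t, V n r)]
    exact intervalIntegral.norm_integral_le_of_norm_le_const (C := L) fun r hr =>
      hVb n r (uIcc_subset_Icc hs ht (uIoc_subset_uIcc hr))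
  have hUb : ∀ n, ∀ t ∈ Icc 0 T, |U n t| ≤ R + L * T := by
    intro n t ht
    have h1 := hUl n 0 h0I t ht
    have h2 := hU0 n
    rw [sub_zero, abs_of_nonneg ht.1] at h1
    have h3 : (L:ℝ) * t ≤ L * T := mul_le_mul_of_nonneg_left ht.2 L.2
    have h4 := abs_add_le (U n t - U n 0) (U n 0)
    rw [sub_add_cancel] at h4
    linarith
  let F : ℕ → BoundedContinuousFunction (Icc (0:ℝ) T) ℝ := fun n =>
    BoundedContinuousFunction.mkOfCompact ⟨fun t => U n t, (hUc n).comp continuous_subtype_val⟩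
  let S : Set (BoundedContinuousFunction (Icc (0:ℝ) T) ℝ) :=
    {f | LipschitzWith L f ∧ ∀ t, f t ∈ Icc (-(R + L * T)) (R + L * T)}
  have hS : IsCompact (closure S) := by
    refine BoundedContinuousFunction.arzela_ascoli (Icc (-(R + L * T)) (R + L * T)) isCompact_Icc S
      (fun f x hf => hf.2 x) ?_
    exact (LipschitzWith.uniformEquicontinuous (fun f : S => (f : Icc (0:ℝ) T → ℝ)) L
      fun f => f.2.1).equicontinuous
  have hFS : ∀ n, F n ∈ S := by
    intro n
    constructor
    · refine LipschitzWith.of_dist_le_mul fun s t => ?_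
      have := hUl n t t.2 s s.2
      rw [Real.dist_eq, Subtype.dist_eq, Real.dist_eq]
      exact this
    · intro t
      exact abs_le.1 (hUb n t t.2)
  obtain ⟨⟨f, y⟩, -, φ, hφ, hlim⟩ := (hS.prod (isCompact_Icc (a := -R) (b := R))).tendsto_subseq
    (x := fun n => (F n, V n 0)) (fun n => ⟨subset_closure (hFS n), abs_le.1 (hV0 n)⟩)
  have hlF : Tendsto (fun n => F (φ n)) atTop (nhds f) := (continuous_fst.tendsto _).comp hlim
  have hly : Tendsto (fun n => V (φ n) 0) atTop (nhds y) := (continuous_snd.tendsto _).comp hlim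
  set u : ℝ → ℝ := IccExtend hT.le f with hu
  have huc : Continuous u := f.continuous.Icc_extend'
  have hut : ∀ t ∈ Icc 0 T, Tendsto (fun n => U (φ n) t) atTop (nhds (u t)) := by
    intro t ht
    rw [hu, IccExtend_of_mem _ _ ht]
    exact ((continuous_eval_const (⟨t, ht⟩ : Icc (0:ℝ) T)).tendsto f).comp hlF
  have hh0' : Tendsto (fun n => h (φ n)) atTop (nhds 0) := hh0.comp hφ.tendsto_atTop
  have hud : ∀ s ∈ Icc 0 T, Tendsto (fun n => U (φ n) (max (s - h (φ n)) 0)) atTop (nhds (u s)) := by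
    intro s hs
    have h1 : Tendsto (fun n => U (φ n) (max (s - h (φ n)) 0) - U (φ n) s) atTop (nhds 0) := by
      refine squeeze_zero_norm (a := fun n => L * h (φ n)) (fun n => ?_)
        (by simpa using hh0'.const_mul (L:ℝ))
      have hm : max (s - h (φ n)) 0 ∈ Icc 0 T :=
        ⟨le_max_right _ _, max_le (by linarith [hs.2, hh (φ n)]) hT.le⟩
      refine (hUl _ s hs _ hm).trans (mul_le_mul_of_nonneg_left ?_ L.2)
      rw [abs_le]
      constructor
      · linarith [le_max_left (s - h (φ n)) 0]
      · have := max_le (by linarith [hh (φ n)] : s - h (φ n) ≤ s) hs.1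
        linarith [hh (φ n)]
    simpa using h1.add (hut s hs)
  set v : ℝ → ℝ := fun t => y - ∫ s in (0:ℝ)..t, b s * GG (u s) with hv
  have hbi : ∀ {w : ℝ → ℝ}, Continuous w → Integrable fun s => b s * GG (w s) := by
    intro w hw
    exact hb.mul_bdd (c := B) (hG.comp hw).aestronglyMeasurable (ae_of_all _ fun s => hB _)
  have hvc : Continuous v := continuous_const.sub
    (intervalIntegral.continuous_primitive (fun _ _ => (hbi huc).intervalIntegrable) 0)
  have hvt : ∀ t ∈ Icc 0 T, Tendsto (fun n => V (φ n) t) atTop (nhds (v t)) := by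
    intro t ht
    simp_rw [fun n => hV (φ n) t ht]
    refine hly.sub (intervalIntegral.tendsto_integral_filter_of_dominated_convergence
      (fun s => |b s| * B) ?_ ?_ ?_ ?_)
    · refine Eventually.of_forall fun n => ?_
      exact (hbi (w := fun s => U (φ n) (max (s - h (φ n)) 0))
        ((hUc _).comp (by fun_prop))).aestronglyMeasurable.restrict
    · refine Eventually.of_forall fun n => ae_of_all _ fun s _ => ?_
      rw [Real.norm_eq_abs, abs_mul]
      exact mul_le_mul_of_nonneg_left (hB _) (abs_nonneg _)
    · exact (hb.abs.mul_const B).intervalIntegrable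
    · refine ae_of_all _ fun s hs => ?_
      have hs' := uIcc_subset_Icc h0I ht (uIoc_subset_uIcc hs)
      exact ((hG.tendsto _).comp (hud s hs')).const_mul _
  have hv0 : v 0 = y := by simp [hv]
  refine ⟨u, v, ⟨huc, hvc, ?_, ?_⟩, φ, hφ, hut 0 h0I, hvt 0 h0I, hut T hTI, hvt T hTI⟩
  · intro t ht
    refine tendsto_nhds_unique (hut t ht) ?_
    simp_rw [fun n => hU (φ n) t ht]
    refine (hut 0 h0I).add (intervalIntegral.tendsto_integral_filter_of_dominated_convergence
      (fun s => (L:ℝ)) ?_ ?_ ?_ ?_)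
    · exact Eventually.of_forall fun n => (hVc _).aestronglyMeasurable
    · refine Eventually.of_forall fun n => ae_of_all _ fun s hs => ?_
      exact hVb _ s (uIcc_subset_Icc h0I ht (uIoc_subset_uIcc hs))
    · exact intervalIntegrable_const
    · exact ae_of_all _ fun s hs => hvt s (uIcc_subset_Icc h0I ht (uIoc_subset_uIcc hs))
  · intro t _
    rw [hv0]

/-- Approximate flow maps: closed conditions not satisfied by exact solutions fail eventually. -/
theorem approx (T : ℝ) (hT : 0 < T) {b GG : ℝ → ℝ} {B : ℝ} (hb : Integrable b)
    (hG : Continuous GG) (hB : ∀ s, |GG s| ≤ B) : ∃ D E : ℕ → ℝ × ℝ → ℝ,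
    (∀ n, Continuous (D n)) ∧ (∀ n, Continuous (E n)) ∧
    ∀ R : ℝ, ∀ Z : Set (ℝ × ℝ × ℝ × ℝ), IsClosed Z →
      (∀ p ∈ Z, |p.1| ≤ R ∧ |p.2.1| ≤ R) →
      (∀ u v, Sol T b GG u v → (u 0, v 0, u T, v T) ∉ Z) →
      ∀ᶠ n in atTop, ∀ q : ℝ × ℝ, (q.1, q.2, D n q, E n q) ∉ Z := by
  have h0I : (0:ℝ) ∈ Icc 0 T := ⟨le_refl _, hT.le⟩
  have hTI : T ∈ Icc 0 T := ⟨hT.le, le_refl _⟩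
  choose U V hU hV hq using fun n : ℕ => tonelli T hb hG hB (h := 1 / ((n:ℝ) + 1)) (by positivity)
  refine ⟨fun n q => U n q T, fun n q => V n q T, fun n => (hU n).comp (by fun_prop : Continuous
    fun q : ℝ × ℝ => (q, T)), fun n => (hV n).comp (by fun_prop : Continuous
    fun q : ℝ × ℝ => (q, T)), ?_⟩
  intro R Z hZ hZR hno
  by_contra hcon
  have hcon : ∃ᶠ n in atTop, ∃ q : ℝ × ℝ, (q.1, q.2, U n q T, V n q T) ∈ Z := by
    refine fun hc => hcon ?_
    filter_upwards [hc] with n hn q hq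
    exact hn ⟨q, hq⟩
  obtain ⟨ψ, hψ, hψZ⟩ := extraction_of_frequently_atTop hcon
  choose q hqZ using hψZ
  have e0 : ∀ n q, U n q 0 = q.1 := fun n q => by simpa using (hq n q).1 0 h0I
  have e1 : ∀ n q, V n q 0 = q.2 := fun n q => by simpa using (hq n q).2 0 h0I
  obtain ⟨u, v, hS, φ, hφ, l1, l2, l3, l4⟩ := cpt T hT (R := R) hb hG hB
    (fun n => 1 / ((ψ n : ℝ) + 1)) (fun n => by positivity)
    ((tendsto_one_div_add_atTop_nhds_zero_nat).comp hψ.tendsto_atTop)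
    (fun n => U (ψ n) (q n)) (fun n => V (ψ n) (q n))
    (fun n => (hU _).comp (by fun_prop : Continuous fun t : ℝ => (q n, t)))
    (fun n => (hV _).comp (by fun_prop : Continuous fun t : ℝ => (q n, t)))
    (fun n => by rw [e0]; exact (hq _ _).1) (fun n => by rw [e1]; exact (hq _ _).2)
    (fun n => by rw [e0]; exact (hZR _ (hqZ n)).1) (fun n => by rw [e1]; exact (hZR _ (hqZ n)).2)
  refine hno u v hS (hZ.mem_of_tendsto (l1.prodMk_nhds (l2.prodMk_nhds (l3.prodMk_nhds l4)))
    (Eventually.of_forall fun n => ?_))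
  have := hqZ (φ n)
  rw [e0, e1]
  exact this


theorem core (T : ℝ) (hT : 0 < T) (a : ℝ → ℝ) (ha : IntervalIntegrable a volume 0 T)
    (G : ℝ → ℝ) (hG : Continuous G) (hG0 : ∀ s ≤ 0, G s = 0) (C : ℝ) (hC : 0 ≤ C)
    (hGC : ∀ s, |G s| ≤ C * |s|) (ρ0 R0 : ℝ) (hρ0 : 0 < ρ0)
    (hsm : ∀ u v, Sol T a G u v → |u 0| + |v 0| ≤ ρ0 →
      ((u 0 = 0 → 0 < v 0 → 0 < u T) ∧
       (0 < u 0 → (∃ t ∈ Icc 0 T, v t = 0) → v 0 < v T)))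
    (hla : ∀ u v, Sol T a G u v → 0 ≤ u 0 → R0 ≤ |u 0| + |v 0| → ¬ (∀ t ∈ Ioc 0 T, 0 < u t)) :
    (∃ u v, Sol T a G u v ∧ (∀ t ∈ Icc 0 T, 0 < u t) ∧ v 0 = 0 ∧ v T = 0) ∧
    (∃ u v, Sol T a G u v ∧ (∀ t ∈ Icc 0 T, 0 < u t) ∧ u 0 = u T ∧ v 0 = v T) := by
  have h0I : (0:ℝ) ∈ Icc 0 T := ⟨le_refl _, hT.le⟩
  have hTI : T ∈ Icc 0 T := ⟨hT.le, le_refl _⟩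
  obtain ⟨K, hK1, hK⟩ := gron T hT a ha C hC
  set R := max R0 ρ0 + 1 with hR
  have hRR0 : R0 ≤ R := by linarith [le_max_left R0 ρ0]
  have hRρ : ρ0 < R := by linarith [le_max_right R0 ρ0]
  set M := K * R + 1 with hM
  have hM0 : 0 < M := by
    have : 0 < K * R := by apply mul_pos <;> linarith
    linarith
  set GG : ℝ → ℝ := fun s => G (max (min s M) (-M)) with hGG
  have hGGc : Continuous GG := hG.comp (by fun_prop)
  have hGGC : ∀ s, |GG s| ≤ C * |s| := by
    intro s
    refine (hGC _).trans (mul_le_mul_of_nonneg_left ?_ hC)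
    rw [abs_le]
    constructor
    · refine le_max_of_le_left (le_min (neg_abs_le s) ?_)
      linarith [abs_nonneg s]
    · rcases le_total 0 s with h | h
      · refine max_le ((min_le_left _ _).trans (le_abs_self s)) ?_
        linarith [abs_nonneg s]
      · refine max_le ((min_le_left _ _).trans (le_abs_self s)) ?_
        linarith [abs_nonneg s]
  have hGGB : ∀ s, |GG s| ≤ C * M := by
    intro s
    refine (hGC _).trans (mul_le_mul_of_nonneg_left ?_ hC)
    rw [abs_le]
    exact ⟨le_max_right _ _, max_le (min_le_right _ _) (by linarith)⟩
  set b : ℝ → ℝ := indicator (Ioc 0 T) a with hb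
  have hbi : Integrable b := (integrable_indicator_iff measurableSet_Ioc).2 ha.1
  have hba : ∀ w : ℝ → ℝ, ∀ t ∈ Icc 0 T,
      ∫ s in (0:ℝ)..t, b s * w s = ∫ s in (0:ℝ)..t, a s * w s := by
    intro w t ht
    refine intervalIntegral.integral_congr_ae (ae_of_all _ fun s hs => ?_)
    rw [uIoc_of_le ht.1] at hs
    have hs' : s ∈ Ioc 0 T := ⟨hs.1, hs.2.trans ht.2⟩
    rw [hb, indicator_of_mem hs']
  have key : ∀ u v, Sol T b GG u v → |u 0| + |v 0| ≤ R → Sol T a G u v := by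
    intro u v h hle
    have h1 : Sol T a GG u v := by
      refine ⟨h.1, h.2.1, h.2.2.1, fun t ht => ?_⟩
      rw [h.2.2.2 t ht, hba (fun s => GG (u s)) t ht]
    refine ⟨h1.1, h1.2.1, h1.2.2.1, fun t ht => ?_⟩
    rw [h1.2.2.2 t ht]
    congr 1
    refine intervalIntegral.integral_congr fun s hs => ?_
    have hs' := uIcc_subset_Icc h0I ht hs
    have h2 := hK GG hGGc hGGC u v h1 0 h0I s hs'
    have h3 : K * (|u 0| + |v 0|) ≤ K * R := mul_le_mul_of_nonneg_left hle (by linarith)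
    have h4 : |u s| ≤ M := by linarith [abs_nonneg (v s)]
    have h5 := abs_le.1 h4
    change a s * G (max (min (u s) M) (-M)) = a s * G (u s)
    rw [min_eq_left h5.2, max_eq_left h5.1]
  obtain ⟨D, E, hD, hE, happ⟩ := approx T hT hbi hGGc hGGB
  have tr : ∀ Z : Set (ℝ × ℝ × ℝ × ℝ), IsClosed Z → (∀ p ∈ Z, |p.1| + |p.2.1| ≤ R) →
      (∀ u v, Sol T a G u v → (u 0, v 0, u T, v T) ∉ Z) →
      ∀ᶠ n in atTop, ∀ q : ℝ × ℝ, (q.1, q.2, D n q, E n q) ∉ Z := by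
    intro Z hZ hZR hno
    refine happ R Z hZ (fun p hp => ?_) (fun u v h hm => hno u v (key u v h (hZR _ hm)) hm)
    have := hZR p hp
    constructor <;> linarith [abs_nonneg p.1, abs_nonneg p.2.1]
  -- exact facts
  have Fleft : ∀ u v, Sol T a G u v → u 0 = 0 → v 0 < 0 → u T < 0 := by
    intro u v h h1 h2
    have h3 := h.down ha hG hG0 h0I h1.le h2
    have h4 := h.2.2.1 T hTI
    have h5 : ∫ s in (0:ℝ)..T, v s = ∫ s in (0:ℝ)..T, v 0 := by
      refine intervalIntegral.integral_congr fun s hs => ?_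
      rw [uIcc_of_le hT.le] at hs
      exact (h3 s hs).2
    rw [h5, h1] at h4
    simp at h4
    rw [h4]
    exact mul_neg_of_pos_of_neg hT h2
  have Fhit : ∀ u v, Sol T a G u v → 0 ≤ u 0 → (0 < u 0 ∨ 0 < v 0) →
      (∃ t ∈ Ioc 0 T, u t ≤ 0) → u T ≤ 0 ∧ v T < 0 := by
    rintro u v h h0 huv ⟨t, ht, hut⟩
    obtain ⟨s, hs, hst, hus⟩ := h.up hT h0 huv t ht.1
    exact h.hit hT ha hG hG0 hC hGC hs ⟨hst.le, ht.2⟩ hus hut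
  have Fright : ∀ u v, Sol T a G u v → u 0 = 0 → 0 < v 0 → u T = 0 → v T < 0 := by
    intro u v h h0 h1 h2
    exact (Fhit u v h h0.ge (Or.inr h1) ⟨T, ⟨hT, le_refl _⟩, h2.le⟩).2
  have Flarge : ∀ u v, Sol T a G u v → 0 ≤ u 0 → (0 < u 0 ∨ 0 < v 0) → |u 0| + |v 0| = R →
      u T ≤ 0 ∧ v T < 0 := by
    intro u v h h0 huv hle
    have := hla u v h h0 (by rw [hle]; exact hRR0)
    push Not at this
    exact Fhit u v h h0 huv this
  have Fmean : ∀ u v, Sol T a G u v → u T = u 0 → ∃ t ∈ Icc 0 T, v t = 0 := by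
    intro u v h h0
    have h4 := h.2.2.1 T hTI
    have hI : ∫ s in (0:ℝ)..T, v s = 0 := by linarith
    obtain ⟨c, hc, hc'⟩ := exists_deriv_eq_zero (f := fun t => ∫ s in (0:ℝ)..t, v s) hT
      (intervalIntegral.continuous_primitive (fun _ _ => h.2.1.intervalIntegrable _ _) 0).continuousOn
      (by simp [hI])
    rw [Continuous.deriv_integral v h.2.1] at hc'
    exact ⟨c, ⟨hc.1.le, hc.2.le⟩, hc'⟩
  constructor
  · have t0 := tr {p | p.1 = ρ0 ∧ p.2.1 = 0 ∧ p.2.2.2 ≤ 0} (by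
        simp only [ofPred_and]
        repeat' apply IsClosed.inter
        all_goals first | exact isClosed_le (by fun_prop) (by fun_prop) | exact isClosed_eq (by fun_prop) (by fun_prop))
      (by
        rintro p ⟨h1, h2, -⟩
        rw [h1, h2, abs_zero, abs_of_pos hρ0]; linarith)
      (by
        rintro u v h ⟨h1, h2, h3⟩
        simp only at h1 h2 h3
        have := (hsm u v h (by rw [h1, h2, abs_zero, abs_of_pos hρ0]; linarith)).2
          (by rw [h1]; exact hρ0) ⟨0, h0I, h2⟩
        linarith)
    have t1 := tr {p | p.1 = R ∧ p.2.1 = 0 ∧ 0 ≤ p.2.2.2} (by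
        simp only [ofPred_and]
        repeat' apply IsClosed.inter
        all_goals first | exact isClosed_le (by fun_prop) (by fun_prop) | exact isClosed_eq (by fun_prop) (by fun_prop))
      (by
        rintro p ⟨h1, h2, -⟩
        rw [h1, h2, abs_zero, abs_of_pos (by linarith)]; linarith)
      (by
        rintro u v h ⟨h1, h2, h3⟩
        simp only at h1 h2 h3
        have := (Flarge u v h (by linarith) (Or.inl (by linarith))
          (by rw [h1, h2, abs_zero, abs_of_pos (by linarith)]; linarith)).2
        linarith)
    have ex : ∃ u v, Sol T a G u v ∧ ρ0 ≤ u 0 ∧ u 0 ≤ R ∧ v 0 = 0 ∧ v T = 0 := by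
      by_contra! hcon
      have t2 := tr {p | ρ0 ≤ p.1 ∧ p.1 ≤ R ∧ p.2.1 = 0 ∧ p.2.2.2 = 0} (by
          simp only [ofPred_and]
          repeat' apply IsClosed.inter
          all_goals first | exact isClosed_le (by fun_prop) (by fun_prop) | exact isClosed_eq (by fun_prop) (by fun_prop))
        (by
          rintro p ⟨h1, h2, h3, -⟩
          rw [h3, abs_zero, abs_of_pos (by linarith)]; linarith)
        (by
          rintro u v h ⟨h1, h2, h3, h4⟩
          exact hcon u v h h1 h2 h3 h4)
      obtain ⟨n, hn0, hn1, hn2⟩ := (t0.and (t1.and t2)).exists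
      have hc : ContinuousOn (fun r : ℝ => E n (r, 0)) (Icc ρ0 R) :=
        ((hE n).comp (by fun_prop : Continuous fun r : ℝ => (r, (0:ℝ)))).continuousOn
      have i0 : 0 ≤ E n (ρ0, 0) := by
        by_contra! hlt
        exact hn0 (ρ0, 0) ⟨rfl, rfl, hlt.le⟩
      have i1 : E n (R, 0) ≤ 0 := by
        by_contra! hlt
        exact hn1 (R, 0) ⟨rfl, rfl, hlt.le⟩
      obtain ⟨r, hr, hr0⟩ := intermediate_value_Icc' hRρ.le hc ⟨i1, i0⟩
      exact hn2 (r, 0) ⟨hr.1, hr.2, rfl, hr0⟩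
    obtain ⟨u, v, h, h1, h2, h3, h4⟩ := ex
    refine ⟨u, v, h, fun t ht => ?_, h3, h4⟩
    by_contra! hle
    have := (h.hit hT ha hG hG0 hC hGC h0I ht (by linarith) hle).2
    linarith
  · have tl := tr {p | p.1 = 0 ∧ p.2.1 ≤ -ρ0 ∧ -R ≤ p.2.1 ∧ 0 ≤ p.2.2.1} (by
        simp only [ofPred_and]
        repeat' apply IsClosed.inter
        all_goals first | exact isClosed_le (by fun_prop) (by fun_prop) | exact isClosed_eq (by fun_prop) (by fun_prop))
      (by
        rintro p ⟨h1, h2, h3, -⟩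
        rw [h1, abs_zero, abs_of_neg (by linarith)]; linarith)
      (by
        rintro u v h ⟨h1, h2, h3, h4⟩
        simp only at h1 h2 h3 h4
        linarith [Fleft u v h h1 (by linarith)])
    have tb := tr {p | 0 ≤ p.1 ∧ |p.1| + |p.2.1| = ρ0 ∧ p.2.2.1 = p.1 ∧ p.2.2.2 ≤ p.2.1} (by
        simp only [ofPred_and]
        repeat' apply IsClosed.inter
        all_goals first | exact isClosed_le (by fun_prop) (by fun_prop) | exact isClosed_eq (by fun_prop) (by fun_prop))
      (by
        rintro p ⟨h1, h2, -⟩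
        rw [h2]; linarith)
      (by
        rintro u v h ⟨h1, h2, h3, h4⟩
        simp only at h1 h2 h3 h4
        have hs := hsm u v h h2.le
        rcases h1.eq_or_lt with h5 | h5
        · rw [← h5, abs_zero, zero_add] at h2
          have hv0 : v 0 ≠ 0 := by
            intro hv0
            rw [hv0, abs_zero] at h2; linarith
          rcases lt_or_gt_of_ne hv0 with h6 | h6
          · linarith [Fleft u v h h5.symm h6]
          · linarith [hs.1 h5.symm h6]
        · linarith [hs.2 h5 (Fmean u v h h3)])
    have trr := tr {p | p.1 = 0 ∧ ρ0 ≤ p.2.1 ∧ p.2.1 ≤ R ∧ p.2.2.1 = p.1 ∧ p.2.1 ≤ p.2.2.2} (by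
        simp only [ofPred_and]
        repeat' apply IsClosed.inter
        all_goals first | exact isClosed_le (by fun_prop) (by fun_prop) | exact isClosed_eq (by fun_prop) (by fun_prop))
      (by
        rintro p ⟨h1, h2, h3, -⟩
        rw [h1, abs_zero, abs_of_pos (by linarith)]; linarith)
      (by
        rintro u v h ⟨h1, h2, h3, h4, h5⟩
        simp only at h1 h2 h3 h4 h5
        linarith [Fright u v h h1 (by linarith) (by linarith)])
    have tt := tr {p | 0 ≤ p.1 ∧ |p.1| + |p.2.1| = R ∧ p.2.2.1 = p.1 ∧ p.2.1 ≤ p.2.2.2} (by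
        simp only [ofPred_and]
        repeat' apply IsClosed.inter
        all_goals first | exact isClosed_le (by fun_prop) (by fun_prop) | exact isClosed_eq (by fun_prop) (by fun_prop))
      (by
        rintro p ⟨h1, h2, -⟩
        rw [h2])
      (by
        rintro u v h ⟨h1, h2, h3, h4⟩
        simp only at h1 h2 h3 h4
        rcases h1.eq_or_lt with h5 | h5
        · have h2' := h2
          rw [← h5, abs_zero, zero_add] at h2
          have hv0 : v 0 ≠ 0 := by
            intro hv0
            rw [hv0, abs_zero] at h2; linarith
          rcases lt_or_gt_of_ne hv0 with h6 | h6
          · linarith [Fleft u v h h5.symm h6]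
          · linarith [(Flarge u v h h1 (Or.inr h6) h2').2]
        · linarith [(Flarge u v h h1 (Or.inl h5) h2).1])
    have tc := tr {p | p.1 = 0 ∧ p.2.1 = ρ0 ∧ p.2.2.1 ≤ 0} (by
        simp only [ofPred_and]
        repeat' apply IsClosed.inter
        all_goals first | exact isClosed_le (by fun_prop) (by fun_prop) | exact isClosed_eq (by fun_prop) (by fun_prop))
      (by
        rintro p ⟨h1, h2, -⟩
        rw [h1, h2, abs_zero, abs_of_pos hρ0]; linarith)
      (by
        rintro u v h ⟨h1, h2, h3⟩
        simp only at h1 h2 h3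
        have := (hsm u v h (by rw [h1, h2, abs_zero, abs_of_pos hρ0]; linarith)).1 h1
          (by rw [h2]; exact hρ0)
        linarith)
    have ex : ∃ u v, Sol T a G u v ∧ 0 ≤ u 0 ∧ ρ0 ≤ |u 0| + |v 0| ∧ u T = u 0 ∧ v T = v 0 := by
      by_contra! hcon
      have tp := tr {p | 0 ≤ p.1 ∧ ρ0 ≤ |p.1| + |p.2.1| ∧ |p.1| + |p.2.1| ≤ R ∧ p.2.2.1 = p.1 ∧
          p.2.2.2 = p.2.1} (by
          simp only [ofPred_and]
          repeat' apply IsClosed.inter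
          all_goals first | exact isClosed_le (by fun_prop) (by fun_prop) | exact isClosed_eq (by fun_prop) (by fun_prop))
        (by
          rintro p ⟨-, -, h3, -⟩
          exact h3)
        (by
          rintro u v h ⟨h1, h2, h3, h4, h5⟩
          exact hcon u v h h1 h2 h4 h5)
      obtain ⟨n, nl, nb, nr, nt, nc, np⟩ :=
        (tl.and (tb.and (trr.and (tt.and (tc.and tp))))).exists
      let Q : ℝ → ℝ → ℝ × ℝ := fun ρ s => (ρ * (1 - |s|), ρ * s)
      have hQ : Continuous fun p : ℝ × ℝ => Q p.1 p.2 := by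
        simp only [Q]; fun_prop
      have hQ0 : ∀ ρ s : ℝ, 0 < ρ → s ∈ Icc (-1:ℝ) 1 → 0 ≤ ρ * (1 - |s|) ∧
          |ρ * (1 - |s|)| + |ρ * s| = ρ := by
        intro ρ s hρ hs
        have h1 : |s| ≤ 1 := abs_le.2 hs
        have h2 : 0 ≤ ρ * (1 - |s|) := mul_nonneg hρ.le (by linarith)
        refine ⟨h2, ?_⟩
        rw [abs_of_nonneg h2, abs_mul, abs_of_pos hρ]
        ring
      obtain ⟨ρ, hρ, s, hs, z1, z2⟩ := topo (fun ρ s => D n (Q ρ s) - (Q ρ s).1)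
        (fun ρ s => E n (Q ρ s) - (Q ρ s).2)
        (((hD n).comp hQ).sub (continuous_fst.comp hQ))
        (((hE n).comp hQ).sub (continuous_snd.comp hQ)) ρ0 R hRρ
        (by
          intro ρ hρ
          by_contra! hle
          have : (Q ρ (-1)).1 = 0 := by simp [Q]
          refine nl (Q ρ (-1)) ⟨this, ?_, ?_, ?_⟩
          · simp only [Q]; linarith [hρ.1]
          · simp only [Q]; linarith [hρ.2]
          · simp only; linarith)
        (by
          rintro s hs ⟨h1, h2⟩
          have h3 := hQ0 ρ0 s hρ0 hs
          exact nb (Q ρ0 s) ⟨h3.1, h3.2, sub_eq_zero.1 h1, sub_nonpos.1 h2⟩)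
        (by
          rintro ρ hρ ⟨h1, h2⟩
          have : (Q ρ 1).1 = 0 := by simp [Q]
          refine nr (Q ρ 1) ⟨this, ?_, ?_, sub_eq_zero.1 h1, sub_nonneg.1 h2⟩
          · simp only [Q]; linarith [hρ.1]
          · simp only [Q]; linarith [hρ.2])
        (by
          rintro s hs ⟨h1, h2⟩
          have h3 := hQ0 R s (by linarith) hs
          exact nt (Q R s) ⟨h3.1, h3.2, sub_eq_zero.1 h1, sub_nonneg.1 h2⟩)
        (by
          by_contra! hle
          have : (Q ρ0 1).1 = 0 := by simp [Q]
          refine nc (Q ρ0 1) ⟨this, ?_, ?_⟩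
          · simp [Q]
          · simp only; linarith)
      have h3 := hQ0 ρ s (by linarith [hρ.1]) hs
      exact np (Q ρ s) ⟨h3.1, h3.2.ge.trans' hρ.1, h3.2.le.trans hρ.2, sub_eq_zero.1 z1,
        sub_eq_zero.1 z2⟩
    obtain ⟨u, v, h, h1, h2, h3, h4⟩ := ex
    have hpos : 0 < u 0 := by
      rcases h1.eq_or_lt with h5 | h5
      · exfalso
        rw [← h5, abs_zero, zero_add] at h2
        have hv0 : v 0 ≠ 0 := by
          intro hv0
          rw [hv0, abs_zero] at h2; linarith
        rcases lt_or_gt_of_ne hv0 with h6 | h6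
        · linarith [Fleft u v h h5.symm h6]
        · linarith [Fright u v h h5.symm h6 (by linarith)]
      · exact h5
    refine ⟨u, v, h, fun t ht => ?_, h3.symm, h4.symm⟩
    by_contra! hle
    have := (h.hit hT ha hG hG0 hC hGC h0I ht hpos hle).1
    linarith

/-- Corollary: under (g1), regular oscillation at zero, `g(s)/s → 0` as `s → 0⁺`,
`limsup_{s→+∞} g(s)/s < +∞`, (a1), (a2), and `g_∞ > λ₁ⁱ` for at least one
interval of positivity `Iᵢ`, the equation `u'' + a(x) g(u) = 0` has a positive
Neumann solution and a positive periodic solution. -/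
theorem statement_6
    (T : ℝ) (hT : 0 < T)
    (g : ℝ → ℝ) (hg1 : CondG1 g) (hreg : RegOscAtZero g)
    (hg0 : Tendsto (fun s => g s / s) (nhdsWithin 0 (Ioi 0)) (nhds 0))
    (hsup : GrowthLimsup g < ⊤)
    (a : ℝ → ℝ) (ha : IntervalIntegrable a volume 0 T)
    (m : ℕ) (hm : 0 < m) (σ τ : Fin m → ℝ)
    (hIT : ∀ i, 0 ≤ σ i ∧ σ i ≤ τ i ∧ τ i ≤ T)
    (hdisj : Pairwise fun i j => Disjoint (Icc (σ i) (τ i)) (Icc (σ j) (τ j)))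
    (hapos : ∀ i, ∀ᵐ x ∂(volume.restrict (Icc (σ i) (τ i))), 0 ≤ a x)
    (hane0 : ∀ i, ¬ (∀ᵐ x ∂(volume.restrict (Icc (σ i) (τ i))), a x = 0))
    (haneg : ∀ᵐ x ∂(volume.restrict (Icc (0:ℝ) T \ ⋃ i, Icc (σ i) (τ i))), a x ≤ 0)
    (ha2 : (∫ x in (0:ℝ)..T, a x) < 0)
    (heig : ∃ i, ∃ lam : ℝ, 0 < lam ∧ (lam : EReal) < GrowthLiminf g ∧
      DirichletEigenpair a (σ i) (τ i) lam) :
    PosSolNeumann T a g ∧ PosSolPeriodic T a g := by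
  obtain ⟨hgc, hgn, hgz, hgp⟩ := id hg1
  set G : ℝ → ℝ := fun s => g (max s 0) with hGdef
  have hG : Continuous G := by
    rw [← continuousOn_univ]
    exact hgc.comp (by fun_prop) (fun s _ => le_max_right s 0)
  have hG0 : ∀ s ≤ 0, G s = 0 := by
    intro s hs
    simp only [hGdef]
    rw [max_eq_right hs, hgz]
  have hGn : ∀ s, 0 ≤ G s := fun s => hgn _ (le_max_right s 0)
  obtain ⟨C, hC, hgC⟩ : ∃ C : ℝ, 0 ≤ C ∧ ∀ s, 0 < s → g s ≤ C * s := by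
    have h1 : ∀ᶠ s in nhdsWithin (0:ℝ) (Ioi 0), g s / s < 1 := hg0.eventually_lt_const one_pos
    obtain ⟨δ, hδ, hδ1⟩ := (mem_nhdsGT_iff_exists_Ioo_subset).1 h1
    have hδ : 0 < δ := hδ
    obtain ⟨c, hc1, -⟩ := EReal.lt_iff_exists_real_btwn.1 hsup
    have h2 : ∀ᶠ s : ℝ in atTop, ((g s / s : ℝ) : EReal) < c := eventually_lt_of_limsup_lt hc1
    obtain ⟨N, hN⟩ := eventually_atTop.1 h2
    have h3 : ContinuousOn (fun s => g s / s) (Icc (δ / 2) (max N δ)) := by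
      refine (hgc.mono fun s hs => ?_).div continuousOn_id fun s hs => ?_
      · exact (by linarith [hs.1] : (0:ℝ) ≤ s)
      · exact (by linarith [hs.1] : (0:ℝ) < s).ne'
    obtain ⟨c2, hc2⟩ := isCompact_Icc.bddAbove_image h3
    refine ⟨max 1 (max c c2), (zero_le_one.trans (le_max_left _ _)), fun s hs => ?_⟩
    rw [← div_le_iff₀ hs]
    by_cases hsδ : s < δ
    · exact le_max_of_le_left (le_of_lt (hδ1 ⟨hs, hsδ⟩))
    · push Not at hsδ
      by_cases hsN : N ≤ s
      · refine le_max_of_le_right (le_max_of_le_left ?_)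
        exact le_of_lt (by exact_mod_cast hN s hsN)
      · push Not at hsN
        refine le_max_of_le_right (le_max_of_le_right ?_)
        exact hc2 ⟨s, ⟨by linarith, le_max_of_le_left hsN.le⟩, rfl⟩
  have hGC : ∀ s, |G s| ≤ C * |s| := by
    intro s
    rw [abs_of_nonneg (hGn s)]
    rcases le_or_gt s 0 with h | h
    · rw [hG0 s h]; positivity
    · simp only [hGdef]
      rw [max_eq_left h.le, abs_of_pos h]
      exact hgC s h
  obtain ⟨i, lam, hlam, hlt, φ, φ', hd, hφ'c, hφpos, hφσ, hφτ, hφ'⟩ := heig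
  obtain ⟨lam', hl1, hl2⟩ := EReal.lt_iff_exists_real_btwn.1 hlt
  have hll : lam < lam' := by exact_mod_cast hl1
  have h2 : ∀ᶠ s : ℝ in atTop, (lam' : EReal) < ((g s / s : ℝ) : EReal) :=
    eventually_lt_of_lt_liminf hl2
  obtain ⟨N, hN⟩ := eventually_atTop.1 h2
  have hστ : σ i < τ i := by
    refine lt_of_le_of_ne (hIT i).2.1 fun he => hane0 i ?_
    rw [he, Icc_self, Measure.restrict_eq_zero.2 (by simp)]
    simp
  obtain ⟨R0, -, hla⟩ := large T hT a ha G hG hGn C hC hGC (σ i) (τ i) (hIT i).1 hστ (hIT i).2.2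
    (hapos i) (hane0 i) lam lam' (max N 1) hlam hll (by
      intro s hs
      have hs1 : 1 ≤ s := (le_max_right _ _).trans hs
      have h3 : lam' < g s / s := by exact_mod_cast hN s ((le_max_left _ _).trans hs)
      rw [lt_div_iff₀ (by linarith)] at h3
      simp only [hGdef]
      rw [max_eq_left (by linarith)]
      exact h3.le) (zero_le_one.trans (le_max_right _ _)) φ φ' hd hφ'c hφpos hφσ hφτ hφ'
  obtain ⟨ρ0, hρ0, hsm⟩ := small T hT a ha g hg1 hreg hg0 hG C hC hGC ha2
  obtain ⟨⟨u, v, h, hp, h1, h2⟩, ⟨u2, v2, h', hp', h1', h2'⟩⟩ :=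
    core T hT a ha G hG hG0 C hC hGC ρ0 R0 hρ0 hsm hla
  have conv : ∀ u v, Sol T a G u v → (∀ t ∈ Icc 0 T, 0 < u t) →
      IsSolOn T (fun t => a t * g (u t)) u v := by
    intro u v h hp
    refine ⟨fun x hx => ?_, h.2.1.continuousOn, fun x hx => ?_⟩
    · have h3 : HasDerivAt (fun t => u 0 + ∫ s in (0:ℝ)..t, v s) (v x) x :=
        (intervalIntegral.integral_hasDerivAt_right (h.2.1.intervalIntegrable _ _)
          (h.2.1.stronglyMeasurableAtFilter _ _) h.2.1.continuousAt).const_add _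
      exact h3.hasDerivWithinAt.congr (fun t ht => h.2.2.1 t ht) (h.2.2.1 x hx)
    · rw [h.2.2.2 x hx]
      congr 1
      refine intervalIntegral.integral_congr fun s hs => ?_
      rw [uIcc_of_le hx.1] at hs
      change a s * g (max (u s) 0) = a s * g (u s)
      rw [max_eq_left (hp s ⟨hs.1, hs.2.trans hx.2⟩).le]
  exact ⟨⟨u, v, conv u v h hp, hp, h1, h2⟩, ⟨u2, v2, conv u2 v2 h' hp', hp', h1', h2'⟩⟩
end

section
/- Let T > 0 and let a ∈ L¹([0,T]). Assume there exists a closed interval J ⊆ [0,T] such that a(x) ≥ 0 for a.e. x ∈ J and ∫₀ᵀ a(x) dx < 0 < ∫_J a(x) dx. Let g satisfy (g1), be regularly oscillating at zero, and satisfy lim_{s→0⁺} g(s)/s = 0 and 0 < liminf_{s→+∞} g(s)/s ≤ limsup_{s→+∞} g(s)/s < +∞. Then there exists ν* > 0 such that for every ν > ν* the equation u'' + ν a(x) g(u) = 0 has at least one positive solution satisfying the Neumann boundary conditions and at least one positive solution satisfying the periodic boundary conditions. -/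
open MeasureTheory Set Filter

lemma ivt_lt {f : ℝ → ℝ} (hf : Continuous f) {c s : ℝ} (hs : f s < c) (h : ∀ t, f t ≠ c) (t : ℝ) :
    f t < c := by
  by_contra hc
  obtain ⟨x, hx⟩ := mem_range_of_exists_le_of_exists_ge hf ⟨s, hs.le⟩ ⟨t, not_lt.1 hc⟩
  exact h x hx

lemma ivt_gt {f : ℝ → ℝ} (hf : Continuous f) {c s : ℝ} (hs : c < f s) (h : ∀ t, f t ≠ c) (t : ℝ) :
    c < f t := by
  by_contra hc
  obtain ⟨x, hx⟩ := mem_range_of_exists_le_of_exists_ge hf ⟨t, not_lt.1 hc⟩ ⟨s, hs.le⟩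
  exact h x hx

lemma topo_lemma (F : ℝ × ℝ → ℝ × ℝ) (hF : Continuous F) (W M : ℝ) (hW : 0 ≤ W) (hM : 0 ≤ M) :
    ∃ p : ℝ × ℝ, |p.1| ≤ W ∧ |p.2| ≤ M ∧ (((F p).1 = 0 ∧ (F p).2 = 0) ∨
      (p.1 = -W ∧ (F p).1 = 0 ∧ (F p).2 ≤ 0) ∨ (p.1 = W ∧ (F p).1 = 0 ∧ 0 ≤ (F p).2) ∨
      (p.2 = M ∧ (F p).1 ≤ 0) ∨ (p.2 = -M ∧ 0 ≤ (F p).1)) := by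
  by_contra hcon
  push Not at hcon
  let cl : ℝ → ℝ → ℝ := fun W x => max (-W) (min W x)
  have hcl : ∀ W, 0 ≤ W → ∀ x, |cl W x| ≤ W := by
    intro W hW x
    rw [abs_le]
    exact ⟨le_max_left _ _, max_le (by linarith) (min_le_left _ _)⟩
  have hcp : ∀ W, 0 ≤ W → cl W W = W := by
    intro W hW; simp only [cl, min_self]; exact max_eq_right (by linarith)
  have hcm : ∀ W, 0 ≤ W → cl W (-W) = -W := by
    intro W hW; simp only [cl]; rw [min_eq_right (by linarith), max_self]
  let pr : ℝ × ℝ → ℝ × ℝ := fun p => (cl W p.1, cl M p.2)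
  have hpr : Continuous pr := by
    simp only [pr, cl]; fun_prop
  let G : C(ℝ × ℝ, ℂ) := ⟨fun p => ((F (pr p)).1 : ℂ) + ((F (pr p)).2 : ℂ) * Complex.I, by fun_prop⟩
  have hG0 : ∀ p, G p ≠ 0 := by
    intro p hp
    have h1 := congrArg Complex.re hp
    have h2 := congrArg Complex.im hp
    simp [G] at h1 h2
    exact (hcon (pr p) (hcl W hW _) (hcl M hM _)).1 h1 h2
  obtain ⟨h, ⟨-, hh⟩, -⟩ := Complex.isCoveringMapOn_exp.existsUnique_continuousMap_lifts G
    (a₀ := (0,0)) (e₀ := Complex.log (G (0,0))) (Complex.exp_log (hG0 _)) (by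
      intro p; exact hG0 p)
  have hh' : ∀ p, Complex.exp (h p) = G p := fun p => congrFun hh p
  let θ : ℝ × ℝ → ℝ := fun p => (h p).im
  have hθ : Continuous θ := Complex.continuous_im.comp h.continuous
  have hre : ∀ p, (F (pr p)).1 = Real.exp (h p).re * Real.cos (θ p) := by
    intro p
    have := congrArg Complex.re (hh' p)
    rw [Complex.exp_re] at this
    simp [G] at this
    exact this.symm
  have him : ∀ p, (F (pr p)).2 = Real.exp (h p).re * Real.sin (θ p) := by
    intro p
    have := congrArg Complex.im (hh' p)
    rw [Complex.exp_im] at this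
    simp [G] at this
    exact this.symm
  have htop : ∀ x, 0 < Real.cos (θ (x, M)) := by
    intro x
    have := (hcon (pr (x, M)) (hcl W hW _) (hcl M hM _)).2.2.2.1 (hcp M hM)
    rw [hre] at this
    exact pos_of_mul_pos_right this (Real.exp_pos _).le
  have hbot : ∀ x, Real.cos (θ (x, -M)) < 0 := by
    intro x
    have := (hcon (pr (x, -M)) (hcl W hW _) (hcl M hM _)).2.2.2.2 (hcm M hM)
    rw [hre] at this
    by_contra hc
    have := mul_nonneg (Real.exp_pos (h (x, -M)).re).le (not_lt.1 hc)
    linarith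
  have hleft : ∀ y, Real.cos (θ (-W, y)) = 0 → 0 < Real.sin (θ (-W, y)) := by
    intro y hy
    have := (hcon (pr (-W, y)) (hcl W hW _) (hcl M hM _)).2.1 (hcm W hW) (by rw [hre, hy, mul_zero])
    rw [him] at this
    exact pos_of_mul_pos_right this (Real.exp_pos _).le
  have hright : ∀ y, Real.cos (θ (W, y)) = 0 → Real.sin (θ (W, y)) < 0 := by
    intro y hy
    have := (hcon (pr (W, y)) (hcl W hW _) (hcl M hM _)).2.2.1 (hcp W hW) (by rw [hre, hy, mul_zero])
    rw [him] at this
    by_contra hc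
    have := mul_nonneg (Real.exp_pos (h (W, y)).re).le (not_lt.1 hc)
    linarith
  -- choose k
  obtain ⟨k, hk⟩ : ∃ k : ℤ, |θ (-W, M) - k * (2 * Real.pi)| ≤ Real.pi := by
    refine ⟨round (θ (-W, M) / (2 * Real.pi)), ?_⟩
    have h1 := abs_sub_round (θ (-W, M) / (2 * Real.pi))
    have hp := Real.pi_pos
    have : θ (-W, M) - round (θ (-W, M) / (2 * Real.pi)) * (2 * Real.pi) =
      (θ (-W, M) / (2 * Real.pi) - round (θ (-W, M) / (2 * Real.pi))) * (2 * Real.pi) := by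
      field_simp
    rw [this, abs_mul, abs_of_pos (by positivity : 0 < 2 * Real.pi)]
    nlinarith
  have hc1 : Real.cos (k * (2 * Real.pi) + Real.pi / 2) = 0 := by
    rw [add_comm, Real.cos_add_int_mul_two_pi]; exact Real.cos_pi_div_two
  have hs1 : Real.sin (k * (2 * Real.pi) + Real.pi / 2) = 1 := by
    rw [add_comm, Real.sin_add_int_mul_two_pi]; exact Real.sin_pi_div_two
  have hc2 : Real.cos (k * (2 * Real.pi) - Real.pi / 2) = 0 := by
    rw [sub_eq_neg_add, Real.cos_add_int_mul_two_pi, Real.cos_neg]; exact Real.cos_pi_div_two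
  have hs2 : Real.sin (k * (2 * Real.pi) - Real.pi / 2) = -1 := by
    rw [sub_eq_neg_add, Real.sin_add_int_mul_two_pi, Real.sin_neg, Real.sin_pi_div_two]
  have hcos : ∀ y, Real.cos y = Real.cos (y - k * (2 * Real.pi)) := fun y =>
    (Real.cos_sub_int_mul_two_pi y k).symm
  rw [abs_le] at hk
  have hTL1 : θ (-W, M) < k * (2 * Real.pi) + Real.pi / 2 := by
    by_contra hc
    have h1 := htop (-W)
    rw [hcos] at h1
    have := Real.cos_nonpos_of_pi_div_two_le_of_le (x := θ (-W, M) - k * (2 * Real.pi)) (by linarith)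
      (by linarith [Real.pi_pos])
    linarith
  have hTL2 : k * (2 * Real.pi) - Real.pi / 2 < θ (-W, M) := by
    by_contra hc
    have h1 := htop (-W)
    rw [hcos, ← Real.cos_neg] at h1
    have := Real.cos_nonpos_of_pi_div_two_le_of_le (x := -(θ (-W, M) - k * (2 * Real.pi))) (by linarith)
      (by linarith [Real.pi_pos])
    linarith
  have hTR : θ (W, M) < k * (2 * Real.pi) + Real.pi / 2 :=
    ivt_lt (f := fun x => θ (x, M)) (by fun_prop) hTL1 (fun t ht => by
      have := htop t; rw [ht, hc1] at this; exact lt_irrefl _ this) W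
  have hBL : k * (2 * Real.pi) - Real.pi / 2 < θ (-W, -M) :=
    ivt_gt (f := fun y => θ (-W, y)) (by fun_prop) hTL2 (fun t ht => by
      have := hleft t (by rw [ht, hc2]); rw [ht, hs2] at this; linarith) (-M)
  have hBR : θ (W, -M) < k * (2 * Real.pi) + Real.pi / 2 :=
    ivt_lt (f := fun y => θ (W, y)) (by fun_prop) hTR (fun t ht => by
      have := hright t (by rw [ht, hc1]); rw [ht, hs1] at this; linarith) (-M)
  have hBL' : k * (2 * Real.pi) + Real.pi / 2 < θ (-W, -M) := by
    by_contra hc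
    have h1 := hbot (-W)
    rw [hcos] at h1
    have := Real.cos_nonneg_of_neg_pi_div_two_le_of_le (x := θ (-W, -M) - k * (2 * Real.pi))
      (by linarith) (by linarith)
    linarith
  have := ivt_gt (f := fun x => θ (x, -M)) (by fun_prop) hBL' (fun t ht => by
      have := hbot t; rw [ht, hc1] at this; exact lt_irrefl _ this) W
  linarith


def psiK (K z : ℝ) : ℝ := min (z ^ 2) (K ^ 2)

lemma psiK_cont (K : ℝ) : Continuous (psiK K) := by unfold psiK; fun_prop
lemma psiK_nonneg (K z : ℝ) : 0 ≤ psiK K z := le_min (sq_nonneg _) (sq_nonneg _)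
lemma psiK_le (K z : ℝ) : psiK K z ≤ K ^ 2 := min_le_right _ _
lemma psiK_le_sq (K z : ℝ) : psiK K z ≤ z ^ 2 := min_le_left _ _
lemma psiK_eq {K z : ℝ} (h : |z| ≤ K) : psiK K z = z ^ 2 :=
  min_eq_left (sq_le_sq.2 (h.trans (le_abs_self K)))

structure TSol (T K : ℝ) (b φ w z : ℝ → ℝ) : Prop where
  cw : Continuous w
  cz : Continuous z
  hw : ∀ x ∈ Icc 0 T, w x = w 0 + ∫ t in (0:ℝ)..x, z t
  hz : ∀ x ∈ Icc 0 T, z x = z 0 - ∫ t in (0:ℝ)..x, (psiK K (z t) + b t * φ (w t))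

noncomputable def eul (h K : ℝ) (b φ : ℝ → ℝ) (p : ℝ × ℝ) : ℕ → ℝ × ℝ
  | 0 => p
  | k + 1 => ((eul h K b φ p k).1 + h * (eul h K b φ p k).2,
      (eul h K b φ p k).2 - (h * psiK K (eul h K b φ p k).2 +
        φ (eul h K b φ p k).1 * ∫ t in (k * h)..((k + 1 : ℕ) * h), b t))

lemma eul_cont (h K : ℝ) (b φ : ℝ → ℝ) (hφ : Continuous φ) (k : ℕ) :
    Continuous (fun p => eul h K b φ p k) := by
  induction k with
  | zero => exact continuous_id
  | succ k ih =>
    have := psiK_cont K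
    simp only [eul]
    fun_prop

/-- Integral estimates for integrand. -/
lemma integrand_integrable {K : ℝ} {b φ : ℝ → ℝ} (hb : Integrable b) (hφ : Continuous φ) {C : ℝ}
    (hφ0 : ∀ s, 0 < φ s) (hφC : ∀ s, φ s ≤ C) {w z : ℝ → ℝ} (hw : Measurable w) (hz : Measurable z)
    (x y : ℝ) :
    IntervalIntegrable (fun t => psiK K (z t)) volume x y ∧
    IntervalIntegrable (fun t => b t * φ (w t)) volume x y := by
  constructor
  · refine (intervalIntegrable_const (c := K ^ 2)).mono_fun
      ((psiK_cont K).measurable.comp hz).aestronglyMeasurable (ae_of_all _ fun t => ?_)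
    show ‖psiK K (z t)‖ ≤ ‖K ^ 2‖
    rw [Real.norm_of_nonneg (psiK_nonneg _ _), Real.norm_of_nonneg (sq_nonneg _)]
    exact psiK_le _ _
  · refine Integrable.intervalIntegrable ?_
    refine hb.mul_bdd (c := C) (hφ.measurable.comp hw).aestronglyMeasurable (ae_of_all _ fun t => ?_)
    rw [Real.norm_of_nonneg (hφ0 _).le]
    exact hφC _

lemma integrand_bound {K : ℝ} {b φ : ℝ → ℝ} (hb : Integrable b) {C : ℝ}
    (hφ0 : ∀ s, 0 < φ s) (hφC : ∀ s, φ s ≤ C) {w z : ℝ → ℝ}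
    {x y : ℝ} (hxy : x ≤ y) :
    |∫ t in x..y, (psiK K (z t) + b t * φ (w t))| ≤ K ^ 2 * (y - x) + C * ∫ t in x..y, |b t| := by
  have h : ‖∫ t in x..y, (psiK K (z t) + b t * φ (w t))‖ ≤ ∫ t in x..y, (K ^ 2 + C * |b t|) := by
    refine intervalIntegral.norm_integral_le_of_norm_le hxy (ae_of_all _ fun t _ => ?_) ?_
    · refine (norm_add_le _ _).trans (add_le_add ?_ ?_)
      · rw [Real.norm_of_nonneg (psiK_nonneg _ _)]; exact psiK_le _ _
      · rw [norm_mul, Real.norm_of_nonneg (hφ0 _).le, mul_comm]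
        exact mul_le_mul_of_nonneg_right (hφC _) (abs_nonneg _)
    · exact intervalIntegrable_const.add ((hb.abs.intervalIntegrable).const_mul C)
  rw [intervalIntegral.integral_add intervalIntegrable_const
    ((hb.abs.intervalIntegrable).const_mul C), intervalIntegral.integral_const_mul] at h
  simpa [mul_comm] using h

lemma int_abs_le {b : ℝ → ℝ} (hb : Integrable b) {x y : ℝ} (hxy : x ≤ y) :
    ∫ t in x..y, |b t| ≤ ∫ t, |b t| := by
  rw [intervalIntegral.integral_of_le hxy]
  exact setIntegral_le_integral hb.abs (ae_of_all _ fun t => abs_nonneg _)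

section
variable (h K : ℝ) (b φ : ℝ → ℝ) (p : ℝ × ℝ)

noncomputable def stp (t : ℝ) : ℝ × ℝ := eul h K b φ p ⌊t / h⌋₊
noncomputable def ez (x : ℝ) : ℝ :=
  p.2 - ∫ t in (0:ℝ)..x, (psiK K (stp h K b φ p t).2 + b t * φ (stp h K b φ p t).1)
noncomputable def ew (x : ℝ) : ℝ := p.1 + ∫ t in (0:ℝ)..x, (stp h K b φ p t).2

lemma stp_meas : Measurable (stp h K b φ p) := by
  unfold stp
  exact (measurable_from_nat (f := eul h K b φ p)).comp
    (Nat.measurable_floor.comp (measurable_id.div_const h))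

variable {h K b φ p}

lemma stp_eq (hh : 0 < h) {k : ℕ} {t : ℝ} (ht : t ∈ Ioo (k * h) ((k + 1 : ℕ) * h)) :
    stp h K b φ p t = eul h K b φ p k := by
  unfold stp
  congr 1
  have h0 : 0 ≤ k * h := by positivity
  rw [Nat.floor_eq_iff (div_nonneg (h0.trans ht.1.le) hh.le), le_div_iff₀ hh, div_lt_iff₀ hh]
  have := ht.2
  push_cast at this
  exact ⟨ht.1.le, this⟩

variable (hb : Integrable b) {C : ℝ}
    (hφ0 : ∀ s, 0 < φ s) (hφC : ∀ s, φ s ≤ C)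
include hb hφ0 hφC

lemma ez_sub (hφ : Continuous φ) (x y : ℝ) : ez h K b φ p y = ez h K b φ p x -
    ∫ t in x..y, (psiK K (stp h K b φ p t).2 + b t * φ (stp h K b φ p t).1) := by
  have hi := fun x y => (integrand_integrable (K := K) hb hφ hφ0 hφC
    (stp_meas h K b φ p).fst (stp_meas h K b φ p).snd x y)
  have hi' := fun x y => (hi x y).1.add (hi x y).2
  unfold ez
  rw [← intervalIntegral.integral_add_adjacent_intervals (hi' 0 x) (hi' x y)]
  ring

lemma ez_grid (hφ : Continuous φ) (hh : 0 < h) (k : ℕ) :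
    ez h K b φ p (k * h) = (eul h K b φ p k).2 := by
  induction k with
  | zero => simp [ez, eul]
  | succ k ih =>
    rw [ez_sub hb hφ0 hφC hφ (k * h), ih]
    have hle : (k : ℝ) * h ≤ ((k + 1 : ℕ) : ℝ) * h := by push_cast; nlinarith
    rw [intervalIntegral.integral_congr_Ioo_of_le (g := fun t => psiK K (eul h K b φ p k).2 +
      b t * φ (eul h K b φ p k).1) hle (fun t ht => by simp only [stp_eq hh ht])]
    rw [intervalIntegral.integral_add intervalIntegrable_const
      (hb.intervalIntegrable.mul_const _), intervalIntegral.integral_mul_const]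
    simp [eul]
    ring

lemma ez_bound (hφ : Continuous φ) {x y : ℝ} (hxy : x ≤ y) : |ez h K b φ p y - ez h K b φ p x| ≤
    K ^ 2 * (y - x) + C * ∫ t in x..y, |b t| := by
  rw [ez_sub hb hφ0 hφC hφ x y, sub_sub_cancel_left, abs_neg]
  exact integrand_bound hb hφ0 hφC hxy

lemma stp_snd_bound (hφ : Continuous φ) (hh : 0 < h) {T t : ℝ} (ht : t ∈ Icc 0 T) :
    |(stp h K b φ p t).2| ≤ |p.2| + K ^ 2 * T + C * ∫ t, |b t| := by
  unfold stp
  rw [← ez_grid hb hφ0 hφC hφ hh]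
  have h0 : (0:ℝ) ≤ ⌊t / h⌋₊ * h := by positivity
  have h1 : ⌊t / h⌋₊ * h ≤ t := by
    rw [← le_div_iff₀ hh]; exact Nat.floor_le (div_nonneg ht.1 hh.le)
  have h2 := ez_bound (h := h) (K := K) (p := p) hb hφ0 hφC hφ h0
  have h3 : ez h K b φ p 0 = p.2 := by simp [ez]
  rw [h3] at h2
  have hC : 0 ≤ C := (hφ0 0).le.trans (hφC 0)
  have h4 := mul_le_mul_of_nonneg_left (int_abs_le hb h0) hC
  have h5 : K ^ 2 * (⌊t / h⌋₊ * h - 0) ≤ K ^ 2 * T :=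
    mul_le_mul_of_nonneg_left (by linarith [ht.2]) (sq_nonneg _)
  have h6 := abs_add_le (ez h K b φ p (⌊t / h⌋₊ * h) - p.2) p.2
  rw [sub_add_cancel] at h6
  linarith

lemma stp_snd_int (hφ : Continuous φ) (hh : 0 < h) {x y : ℝ} (hx : 0 ≤ x) (hy : 0 ≤ y) :
    IntervalIntegrable (fun t => (stp h K b φ p t).2) volume x y := by
  refine (intervalIntegrable_const (c := |p.2| + K ^ 2 * max x y + C * ∫ t, |b t|)).mono_fun
    (stp_meas h K b φ p).snd.aestronglyMeasurable ?_
  rw [EventuallyLE, ae_restrict_iff' measurableSet_uIoc]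
  refine ae_of_all _ fun t ht => ?_
  rw [uIoc, mem_Ioc] at ht
  have := stp_snd_bound (h := h) (K := K) (p := p) hb hφ0 hφC hφ hh (t := t) (T := max x y) ⟨(le_min hx hy).trans ht.1.le, ht.2⟩
  exact this.trans (le_abs_self _)

lemma ew_sub (hφ : Continuous φ) (hh : 0 < h) {x y : ℝ} (hx : 0 ≤ x) (hy : 0 ≤ y) :
    ew h K b φ p y = ew h K b φ p x + ∫ t in x..y, (stp h K b φ p t).2 := by
  unfold ew
  rw [← intervalIntegral.integral_add_adjacent_intervals
    (stp_snd_int hb hφ0 hφC hφ hh le_rfl hx) (stp_snd_int hb hφ0 hφC hφ hh hx hy)]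
  ring

lemma ew_grid (hφ : Continuous φ) (hh : 0 < h) (k : ℕ) :
    ew h K b φ p (k * h) = (eul h K b φ p k).1 := by
  induction k with
  | zero => simp [ew, eul]
  | succ k ih =>
    rw [ew_sub hb hφ0 hφC hφ hh (x := k * h) (by positivity) (by positivity), ih]
    have hle : (k : ℝ) * h ≤ ((k + 1 : ℕ) : ℝ) * h := by push_cast; nlinarith
    rw [intervalIntegral.integral_congr_Ioo_of_le (g := fun t => (eul h K b φ p k).2)
      hle (fun t ht => by simp only [stp_eq hh ht])]
    rw [intervalIntegral.integral_const, smul_eq_mul]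
    simp only [eul]
    push_cast
    ring

lemma ew_bound (hφ : Continuous φ) (hh : 0 < h) {T x y : ℝ} (hx : 0 ≤ x) (hxy : x ≤ y) (hy : y ≤ T) :
    |ew h K b φ p y - ew h K b φ p x| ≤ (|p.2| + K ^ 2 * T + C * ∫ t, |b t|) * (y - x) := by
  rw [ew_sub hb hφ0 hφC hφ hh hx (hx.trans hxy), add_sub_cancel_left]
  have := intervalIntegral.norm_integral_le_of_norm_le_const (a := x) (b := y)
    (f := fun t => (stp h K b φ p t).2) (C := |p.2| + K ^ 2 * T + C * ∫ t, |b t|) (by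
    intro t ht
    rw [uIoc_of_le hxy] at ht
    exact stp_snd_bound hb hφ0 hφC hφ hh ⟨hx.trans ht.1.le, ht.2.trans hy⟩)
  rwa [abs_of_nonneg (by linarith : 0 ≤ y - x)] at this

end


lemma compact_lemma {T K C M : ℝ} (hT : 0 < T) {b φ : ℝ → ℝ} (hb : Integrable b)
    (hφ : Continuous φ) (hφ0 : ∀ s, 0 < φ s) (hφC : ∀ s, φ s ≤ C)
    (Rel : Set ((ℝ × ℝ) × (ℝ × ℝ))) (hR : IsClosed Rel) (hM : ∀ q ∈ Rel, ‖q.1‖ ≤ M)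
    (H : ∀ F : ℝ × ℝ → ℝ × ℝ, Continuous F → ∃ p, (p, F p) ∈ Rel) :
    ∃ w z : ℝ → ℝ, TSol T K b φ w z ∧ ((w 0, z 0), (w T, z T)) ∈ Rel := by
  have hC : 0 ≤ C := (hφ0 0).le.trans (hφC 0)
  let h : ℕ → ℝ := fun n => T / (n + 1 : ℕ)
  have hh : ∀ n, 0 < h n := fun n => by positivity
  have hhT : ∀ n, ((n + 1 : ℕ) : ℝ) * h n = T := fun n => by
    simp only [h]; field_simp
  choose p hp using fun n => H (fun p => eul (h n) K b φ p (n + 1)) (eul_cont _ _ _ _ hφ _)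
  have hpM : ∀ n, ‖p n‖ ≤ M := fun n => hM _ (hp n)
  have hp1 : ∀ n, |(p n).1| ≤ M := fun n => (norm_fst_le (p n)).trans (hpM n)
  have hp2 : ∀ n, |(p n).2| ≤ M := fun n => (norm_snd_le (p n)).trans (hpM n)
  let B := ∫ t, |b t|
  have hB : 0 ≤ B := integral_nonneg fun t => abs_nonneg _
  have hM0 : 0 ≤ M := (norm_nonneg _).trans (hpM 0)
  let Lz := M + K ^ 2 * T + C * B
  have hLz : 0 ≤ Lz := by positivity
  let Φ : ℝ → ℝ := fun x => (K ^ 2 + Lz) * x + C * ∫ t in (0:ℝ)..x, |b t|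
  have hΦ : Continuous Φ := by
    have : Continuous fun x => ∫ t in (0:ℝ)..x, |b t| :=
      intervalIntegral.continuous_primitive (fun a b => hb.abs.intervalIntegrable) 0
    fun_prop
  have hΦs : ∀ x y, Φ y - Φ x = (K ^ 2 + Lz) * (y - x) + C * ∫ t in x..y, |b t| := by
    intro x y
    simp only [Φ]
    rw [← intervalIntegral.integral_add_adjacent_intervals (a := 0) (b := x) (c := y)
      hb.abs.intervalIntegrable hb.abs.intervalIntegrable]
    ring
  have hint0 : ∀ x y, x ≤ y → 0 ≤ C * ∫ t in x..y, |b t| := fun x y hxy =>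
    mul_nonneg hC (intervalIntegral.integral_nonneg hxy fun t _ => abs_nonneg _)
  have hE1 : ∀ n x y, 0 ≤ x → x ≤ y → y ≤ T →
      |ew (h n) K b φ (p n) y - ew (h n) K b φ (p n) x| ≤ Φ y - Φ x := by
    intro n x y hx hxy hy
    refine (ew_bound hb hφ0 hφC hφ (hh n) hx hxy hy).trans ?_
    rw [hΦs]
    have h1 : (|(p n).2| + K ^ 2 * T + C * B) * (y - x) ≤ Lz * (y - x) :=
      mul_le_mul_of_nonneg_right (by simp only [Lz]; linarith [hp2 n]) (by linarith)
    have h2 : 0 ≤ K ^ 2 * (y - x) := mul_nonneg (sq_nonneg _) (by linarith)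
    have := hint0 x y hxy
    simp only [B] at h1
    linarith
  have hE2 : ∀ n x y, 0 ≤ x → x ≤ y → y ≤ T →
      |ez (h n) K b φ (p n) y - ez (h n) K b φ (p n) x| ≤ Φ y - Φ x := by
    intro n x y hx hxy hy
    refine (ez_bound hb hφ0 hφC hφ hxy).trans ?_
    rw [hΦs]
    have h2 : 0 ≤ Lz * (y - x) := mul_nonneg hLz (by linarith)
    linarith
  let y : ℕ → ℝ → ℝ × ℝ := fun n x => (ew (h n) K b φ (p n) x, ez (h n) K b φ (p n) x)
  have hy0 : ∀ n, y n 0 = p n := fun n => by simp [y, ew, ez]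
  have hyT : ∀ n, y n T = eul (h n) K b φ (p n) (n + 1) := fun n => by
    have h1 := ew_grid (p := p n) (K := K) hb hφ0 hφC hφ (hh n) (n + 1)
    have h2 := ez_grid (p := p n) (K := K) hb hφ0 hφC hφ (hh n) (n + 1)
    rw [hhT] at h1 h2
    simp only [y, h1, h2]
  have hyd' : ∀ n x x', 0 ≤ x → x ≤ x' → x' ≤ T → dist (y n x') (y n x) ≤ |Φ x' - Φ x| := by
    intro n x x' hx hxx hx'
    refine le_trans ?_ (le_abs_self _)
    rw [Prod.dist_eq, Real.dist_eq, Real.dist_eq]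
    exact max_le (hE1 n x x' hx hxx hx') (hE2 n x x' hx hxx hx')
  have hyd : ∀ n, ∀ x ∈ Icc 0 T, ∀ x' ∈ Icc 0 T, dist (y n x) (y n x') ≤ |Φ x - Φ x'| := by
    intro n x hx x' hx'
    rcases le_total x x' with h1 | h1
    · rw [dist_comm, abs_sub_comm]; exact hyd' n x x' hx.1 h1 hx'.2
    · exact hyd' n x' x hx'.1 h1 hx.2
  have hyc : ∀ n, Continuous fun x : Icc (0:ℝ) T => y n x := by
    intro n
    rw [continuous_iff_continuousAt]
    intro x
    rw [ContinuousAt, tendsto_iff_dist_tendsto_zero]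
    refine squeeze_zero (fun _ => dist_nonneg) (fun x' => hyd n x' x'.2 x x.2) ?_
    have : Continuous fun x' : Icc (0:ℝ) T => |Φ x' - Φ x| := by fun_prop
    simpa using this.tendsto x
  let f : ℕ → BoundedContinuousFunction (Icc (0:ℝ) T) (ℝ × ℝ) := fun n =>
    BoundedContinuousFunction.mkOfCompact ⟨fun x => y n x, hyc n⟩
  have hf : ∀ n x, f n x = y n x := fun n x => rfl
  let R := M + (Φ T - Φ 0)
  have hcomp : IsCompact (closure (range f)) := by
    refine BoundedContinuousFunction.arzela_ascoli (Metric.closedBall (0 : ℝ × ℝ) R)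
      (isCompact_closedBall _ _) _ ?_ ?_
    · rintro g x ⟨n, rfl⟩
      rw [hf, mem_closedBall_zero_iff]
      have h1 := hyd' n 0 x le_rfl x.2.1 x.2.2
      rw [hy0, dist_eq_norm] at h1
      have h2 : |Φ x - Φ 0| ≤ Φ T - Φ 0 := by
        have h3 := hE1 0 0 x le_rfl x.2.1 x.2.2
        have h4 := hE1 0 x T x.2.1 x.2.2 le_rfl
        rw [abs_of_nonneg ((abs_nonneg _).trans h3)]
        have := (abs_nonneg _).trans h4
        linarith
      have h5 := norm_add_le (y n x - p n) (p n)
      rw [sub_add_cancel] at h5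
      have := hpM n
      simp only [R]; linarith
    · intro x
      rw [Metric.equicontinuousAt_iff_pair]
      intro ε hε
      have hc : Continuous fun x : Icc (0:ℝ) T => Φ x := by fun_prop
      obtain ⟨U, hU, hU'⟩ := (Metric.equicontinuousAt_iff_pair.1 (equicontinuousAt_finite.2 (fun _ : Unit => hc.continuousAt) : EquicontinuousAt (fun _ : Unit => fun x : Icc (0:ℝ) T => Φ x) x)) ε hε
      refine ⟨U, hU, fun x₁ h1 x₂ h2 g => ?_⟩
      obtain ⟨g, n, rfl⟩ := g
      have := hU' x₁ h1 x₂ h2 ()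
      rw [Real.dist_eq] at this
      exact (hyd n x₁ x₁.2 x₂ x₂.2).trans_lt this
  obtain ⟨fl, -, σ, hσ, hlim⟩ := hcomp.tendsto_subseq (x := f) fun n => subset_closure ⟨n, rfl⟩
  let u : ℝ → ℝ × ℝ := fun x => fl (projIcc 0 T hT.le x)
  have huc : Continuous u := fl.continuous.comp continuous_projIcc
  -- joint convergence
  have hjoint : ∀ (x : ℝ) (hx : x ∈ Icc 0 T) (xs : ℕ → ℝ), (∀ n, xs n ∈ Icc 0 T) →
      Tendsto xs atTop (nhds x) → Tendsto (fun n => y (σ n) (xs n)) atTop (nhds (u x)) := by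
    intro x hx xs hxs hlimx
    have h1 : Tendsto (fun n => (⟨xs n, hxs n⟩ : Icc (0:ℝ) T)) atTop (nhds ⟨x, hx⟩) := by
      rw [tendsto_subtype_rng]; exact hlimx
    have h2 := (continuous_eval (F := BoundedContinuousFunction (Icc (0:ℝ) T) (ℝ × ℝ)) (X := Icc (0:ℝ) T) (Y := ℝ × ℝ)).tendsto
      (fl, ⟨x, hx⟩)
    have h3 := h2.comp (hlim.prodMk_nhds h1)
    have : u x = fl ⟨x, hx⟩ := by simp only [u]; rw [projIcc_of_mem hT.le hx]
    rw [this]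
    exact h3
  have hpt : ∀ x ∈ Icc 0 T, Tendsto (fun n => y (σ n) x) atTop (nhds (u x)) := fun x hx =>
    hjoint x hx (fun _ => x) (fun _ => hx) tendsto_const_nhds
  have h0m : (0:ℝ) ∈ Icc 0 T := ⟨le_rfl, hT.le⟩
  have hTm : T ∈ Icc 0 T := ⟨hT.le, le_rfl⟩
  have hp0 : Tendsto (fun n => p (σ n)) atTop (nhds (u 0)) := by
    have := hpt 0 h0m
    simpa only [hy0] using this
  have hstp : ∀ t ∈ Icc 0 T, Tendsto (fun n => stp (h (σ n)) K b φ (p (σ n)) t) atTop (nhds (u t)) := by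
    intro t ht
    have h1 : ∀ n, stp (h n) K b φ (p n) t = y n (⌊t / h n⌋₊ * h n) := by
      intro n
      simp only [stp, y, ew_grid hb hφ0 hφC hφ (hh n), ez_grid hb hφ0 hφC hφ (hh n)]
    simp only [h1]
    have h2 : ∀ n, ⌊t / h n⌋₊ * h n ≤ t := fun n => by
      rw [← le_div_iff₀ (hh n)]; exact Nat.floor_le (div_nonneg ht.1 (hh n).le)
    have h3 : ∀ n, t - h n ≤ ⌊t / h n⌋₊ * h n := fun n => by
      have := (Nat.lt_floor_add_one (t / h n)).le
      rw [div_le_iff₀ (hh n)] at this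
      linarith
    have hh0 : Tendsto h atTop (nhds 0) := by
      have := (tendsto_const_div_atTop_nhds_zero_nat T).comp (tendsto_add_atTop_nat 1)
      exact this
    refine hjoint t ht _ (fun n => ⟨mul_nonneg (Nat.cast_nonneg _) (hh _).le, (h2 _).trans ht.2⟩) ?_
    refine tendsto_of_tendsto_of_tendsto_of_le_of_le (g := fun n => t - h (σ n)) (h := fun _ => t)
      ?_ tendsto_const_nhds (fun n => h3 _) (fun n => h2 _)
    simpa using (tendsto_const_nhds (x := t)).sub (hh0.comp hσ.tendsto_atTop)
  refine ⟨fun x => (u x).1, fun x => (u x).2, ⟨by fun_prop, by fun_prop, ?_, ?_⟩, ?_⟩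
  · intro x hx
    have h1 : Tendsto (fun n => (y (σ n) x).1) atTop (nhds (u x).1) := (hpt x hx).fst_nhds
    refine tendsto_nhds_unique h1 ?_
    refine Tendsto.add hp0.fst_nhds ?_
    refine intervalIntegral.tendsto_integral_filter_of_dominated_convergence (fun _ => Lz)
      (Eventually.of_forall fun n => (stp_meas _ K b φ _).snd.aestronglyMeasurable)
      (Eventually.of_forall fun n => ae_of_all _ fun t ht => ?_) intervalIntegrable_const
      (ae_of_all _ fun t ht => ?_)
    · rw [uIoc_of_le hx.1] at ht
      have := stp_snd_bound (K := K) (p := p (σ n)) hb hφ0 hφC hφ (hh (σ n)) (T := T) (t := t) ⟨ht.1.le, ht.2.trans hx.2⟩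
      refine this.trans ?_
      have := hp2 (σ n)
      simp only [Lz, B]; linarith
    · rw [uIoc_of_le hx.1] at ht
      exact (hstp t ⟨ht.1.le, ht.2.trans hx.2⟩).snd_nhds
  · intro x hx
    have h1 : Tendsto (fun n => (y (σ n) x).2) atTop (nhds (u x).2) := (hpt x hx).snd_nhds
    refine tendsto_nhds_unique h1 ?_
    refine Tendsto.sub hp0.snd_nhds ?_
    refine intervalIntegral.tendsto_integral_filter_of_dominated_convergence
      (fun t => K ^ 2 + C * |b t|)
      (Eventually.of_forall fun n => ?_)
      (Eventually.of_forall fun n => ae_of_all _ fun t ht => ?_)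
      (intervalIntegrable_const.add (hb.abs.intervalIntegrable.const_mul C))
      (ae_of_all _ fun t ht => ?_)
    · have hi := integrand_integrable (K := K) hb hφ hφ0 hφC
        (stp_meas (h (σ n)) K b φ (p (σ n))).fst (stp_meas (h (σ n)) K b φ (p (σ n))).snd 0 x
      exact (hi.1.add hi.2).aestronglyMeasurable_restrict_uIoc
    · refine (norm_add_le _ _).trans (add_le_add ?_ ?_)
      · rw [Real.norm_of_nonneg (psiK_nonneg _ _)]; exact psiK_le _ _
      · rw [norm_mul, Real.norm_of_nonneg (hφ0 _).le, mul_comm]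
        exact mul_le_mul_of_nonneg_right (hφC _) (abs_nonneg _)
    · rw [uIoc_of_le hx.1] at ht
      have h2 := hstp t ⟨ht.1.le, ht.2.trans hx.2⟩
      exact (((psiK_cont K).tendsto _).comp h2.snd_nhds).add
        (tendsto_const_nhds.mul ((hφ.tendsto _).comp h2.fst_nhds))
  · refine hR.mem_of_tendsto (f := fun n => (y (σ n) 0, y (σ n) T)) (b := atTop)
      ((hpt 0 h0m).prodMk_nhds (hpt T hTm)) (Eventually.of_forall fun n => ?_)
    rw [hy0, hyT]
    exact hp (σ n)


lemma gron_s7 {f : ℝ → ℝ} (hf : Continuous f) {Q K l : ℝ} (hK : 0 ≤ K)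
    (h : ∀ x ∈ Icc 0 l, f x ≤ Q + K * ∫ t in (0:ℝ)..x, f t) :
    ∀ x ∈ Icc 0 l, f x ≤ Q * Real.exp (K * x) := by
  intro x hx
  let E : ℝ → ℝ := fun x => Real.exp (-(K * x)) * (Q + K * ∫ t in (0:ℝ)..x, f t)
  have hd : ∀ y, HasDerivAt E (Real.exp (-(K * y)) * (-(K * 1)) * (Q + K * ∫ t in (0:ℝ)..y, f t) +
      Real.exp (-(K * y)) * (K * f y)) y := by
    intro y
    have h1 : HasDerivAt (fun x => ∫ t in (0:ℝ)..x, f t) (f y) y :=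
      intervalIntegral.integral_hasDerivAt_right (hf.intervalIntegrable _ _)
        (hf.stronglyMeasurableAtFilter _ _) hf.continuousAt
    exact (((hasDerivAt_id y).const_mul K).neg.exp).mul ((h1.const_mul K).const_add Q)
  have hanti : AntitoneOn E (Icc 0 l) := by
    refine antitoneOn_of_deriv_nonpos (convex_Icc 0 l)
      (fun y _ => (hd y).continuousAt.continuousWithinAt)
      (fun y _ => (hd y).differentiableAt.differentiableWithinAt) ?_
    intro y hy
    rw [interior_Icc] at hy
    rw [(hd y).deriv]
    have h1 := h y ⟨hy.1.le, hy.2.le⟩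
    have h2 := Real.exp_pos (-(K * y))
    have h3 : Real.exp (-(K * y)) * (-(K * 1)) * (Q + K * ∫ t in (0:ℝ)..y, f t) +
      Real.exp (-(K * y)) * (K * f y) = (Real.exp (-(K * y)) * K) * (f y - (Q + K * ∫ t in (0:ℝ)..y, f t)) := by ring
    rw [h3]
    exact mul_nonpos_of_nonneg_of_nonpos (by positivity) (by linarith)
  have h1 := hanti ⟨le_rfl, hx.1.trans hx.2⟩ hx hx.1
  simp only [E, mul_zero, neg_zero, Real.exp_zero, intervalIntegral.integral_same, add_zero, one_mul] at h1
  refine (h x hx).trans ?_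
  rw [Real.exp_neg, inv_mul_le_iff₀ (Real.exp_pos _)] at h1
  linarith

lemma psiK_le_mul {K : ℝ} (hK : 0 ≤ K) (z : ℝ) : psiK K z ≤ K * |z| := by
  rcases le_total |z| K with h | h
  · refine (psiK_le_sq _ _).trans ?_
    rw [← sq_abs]; nlinarith [abs_nonneg z]
  · refine (psiK_le _ _).trans ?_
    nlinarith

section
variable {T K C : ℝ} {b φ w z : ℝ → ℝ}

lemma TSol.w_sub (S : TSol T K b φ w z) {x y : ℝ} (hx : x ∈ Icc 0 T) (hy : y ∈ Icc 0 T) :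
    w y = w x + ∫ t in x..y, z t := by
  rw [S.hw y hy, S.hw x hx, ← intervalIntegral.integral_add_adjacent_intervals
    (S.cz.intervalIntegrable 0 x) (S.cz.intervalIntegrable x y)]
  ring

lemma TSol.int1 (S : TSol T K b φ w z) (x y : ℝ) :
    IntervalIntegrable (fun t => psiK K (z t)) volume x y :=
  ((psiK_cont K).comp S.cz).intervalIntegrable _ _

lemma TSol.int2 (S : TSol T K b φ w z) (hb : Integrable b) (hφ : Continuous φ) (x y : ℝ) :
    IntervalIntegrable (fun t => b t * φ (w t)) volume x y :=
  hb.intervalIntegrable.mul_continuousOn (hφ.comp S.cw).continuousOn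

lemma TSol.z_sub (S : TSol T K b φ w z) (hb : Integrable b) (hφ : Continuous φ)
    {x y : ℝ} (hx : x ∈ Icc 0 T) (hy : y ∈ Icc 0 T) :
    z y = z x - (∫ t in x..y, psiK K (z t)) - ∫ t in x..y, b t * φ (w t) := by
  have hi := fun x y => (S.int1 x y).add (S.int2 hb hφ x y)
  rw [S.hz y hy, S.hz x hx, ← intervalIntegral.integral_add_adjacent_intervals (hi 0 x) (hi x y),
    intervalIntegral.integral_add (S.int1 x y) (S.int2 hb hφ x y)]
  ring

lemma TSol.q_bound (hb : Integrable b) (hφ0 : ∀ s, 0 < φ s)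
    {D : ℝ} (hD : ∀ t ∈ Icc 0 T, φ (w t) ≤ D) {x y : ℝ} (hx : 0 ≤ x) (hxy : x ≤ y) (hy : y ≤ T) :
    |∫ t in x..y, b t * φ (w t)| ≤ D * ∫ t, |b t| := by
  have hD0 : 0 ≤ D := (hφ0 _).le.trans (hD x ⟨hx, hxy.trans hy⟩)
  have h1 : ‖∫ t in x..y, b t * φ (w t)‖ ≤ ∫ t in x..y, D * |b t| := by
    refine intervalIntegral.norm_integral_le_of_norm_le hxy
      (ae_of_all _ fun t ht => ?_) (hb.abs.intervalIntegrable.const_mul D)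
    rw [norm_mul, Real.norm_of_nonneg (hφ0 _).le, mul_comm]
    exact mul_le_mul_of_nonneg_right (hD t ⟨hx.trans ht.1.le, ht.2.trans hy⟩) (abs_nonneg _)
  refine h1.trans ?_
  rw [intervalIntegral.integral_const_mul]
  exact mul_le_mul_of_nonneg_left (int_abs_le hb hxy) hD0

lemma TSol.psi_bound {x y : ℝ} (S : TSol T K b φ w z) (hx : 0 ≤ x) (hxy : x ≤ y) (hy : y ≤ T) :
    0 ≤ (∫ t in x..y, psiK K (z t)) ∧ (∫ t in x..y, psiK K (z t)) ≤ K ^ 2 * T := by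
  constructor
  · exact intervalIntegral.integral_nonneg hxy fun t _ => psiK_nonneg _ _
  · have := intervalIntegral.integral_mono_on hxy (S.int1 x y) (intervalIntegrable_const (c := K ^ 2))
      (fun t _ => psiK_le K (z t))
    rw [intervalIntegral.integral_const, smul_eq_mul] at this
    nlinarith [sq_nonneg K]

/-- crude bound of variation of `z`. -/
lemma TSol.crude (S : TSol T K b φ w z) (hb : Integrable b) (hφ : Continuous φ)
    (hφ0 : ∀ s, 0 < φ s) (hφC : ∀ s, φ s ≤ C) {x y : ℝ} (hx : x ∈ Icc 0 T) (hy : y ∈ Icc 0 T) :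
    |z y - z x| ≤ K ^ 2 * T + C * ∫ t, |b t| := by
  wlog hxy : x ≤ y generalizing x y
  · rw [abs_sub_comm]; exact this hy hx (le_of_not_ge hxy)
  have h1 := S.psi_bound hx.1 hxy hy.2
  have h2 := TSol.q_bound (w := w) hb hφ0 (fun t _ => hφC (w t)) hx.1 hxy hy.2
  rw [S.z_sub hb hφ hx hy]
  rw [abs_le] at h2 ⊢
  constructor <;> linarith

lemma TSol.two_sided (S : TSol T K b φ w z) (hb : Integrable b) (hφ : Continuous φ)
    (hφ0 : ∀ s, 0 < φ s) (hφC : ∀ s, φ s ≤ C) {x₀ : ℝ} (hx₀ : x₀ ∈ Icc 0 T) (hz0 : z x₀ = 0)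
    (hzT : z 0 ≤ z T) {x : ℝ} (hx : x ∈ Icc 0 T) : |z x| ≤ 2 * (C * ∫ t, |b t|) := by
  have hT : 0 ≤ T := hx.1.trans hx.2
  have key : ∀ x ∈ Icc 0 T, ∀ y ∈ Icc 0 T, x ≤ y → z y ≤ z x + C * ∫ t, |b t| := by
    intro x hx y hy hxy
    have h1 := S.psi_bound hx.1 hxy hy.2
    have h2 := TSol.q_bound (w := w) hb hφ0 (fun t _ => hφC (w t)) hx.1 hxy hy.2
    rw [S.z_sub hb hφ hx hy]
    rw [abs_le] at h2
    linarith
  have h0m : (0:ℝ) ∈ Icc 0 T := ⟨le_rfl, hT⟩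
  have hTm : T ∈ Icc 0 T := ⟨hT, le_rfl⟩
  have a1 := key x₀ hx₀ T hTm hx₀.2
  have a2 := key 0 h0m x₀ hx₀ hx₀.1
  have a3 := key 0 h0m x hx hx.1
  have a4 := key x hx T hTm hx.2
  have hnn := (abs_nonneg _).trans (TSol.q_bound (w := w) hb hφ0 (fun t _ => hφC (w t)) le_rfl hT le_rfl)
  rw [abs_le]
  rcases le_total x x₀ with h | h
  · have a5 := key x hx x₀ hx₀ h
    constructor <;> linarith
  · have a5 := key x₀ hx₀ x hx h
    constructor <;> linarith

lemma TSol.gron_bound (S : TSol T K b φ w z) (hK : 0 ≤ K) (hb : Integrable b) (hφ : Continuous φ)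
    (hφ0 : ∀ s, 0 < φ s) {D : ℝ} (hD : ∀ t ∈ Icc 0 T, φ (w t) ≤ D)
    {x₀ : ℝ} (hx₀ : x₀ ∈ Icc 0 T) (hz0 : z x₀ = 0)
    {x : ℝ} (hx : x ∈ Icc 0 T) : |z x| ≤ (D * ∫ t, |b t|) * Real.exp (K * T) := by
  have hT : 0 ≤ T := hx.1.trans hx.2
  have hnn : 0 ≤ D * ∫ t, |b t| :=
    (abs_nonneg _).trans (TSol.q_bound (w := w) hb hφ0 hD le_rfl hT le_rfl)
  have hcz := S.cz
  have hmono : ∀ x y, x ≤ y → ∫ t in x..y, psiK K (z t) ≤ K * ∫ t in x..y, |z t| := by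
    intro x y hxy
    rw [← intervalIntegral.integral_const_mul]
    exact intervalIntegral.integral_mono_on hxy (S.int1 x y)
      ((by fun_prop : Continuous fun t => K * |z t|).intervalIntegrable _ _)
      (fun t _ => psiK_le_mul hK _)
  rcases le_total x₀ x with h | h
  · have := gron_s7 (f := fun s => |z (x₀ + s)|) (by fun_prop) (Q := D * ∫ t, |b t|) (K := K)
      (l := T - x₀) hK (by
        intro s hs
        have hs1 : x₀ + s ∈ Icc 0 T := ⟨by linarith [hx₀.1, hs.1], by linarith [hs.2]⟩
        have hle : x₀ ≤ x₀ + s := by linarith [hs.1]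
        rw [intervalIntegral.integral_comp_add_left (fun t => |z t|), add_zero]
        have h1 := S.z_sub hb hφ hx₀ hs1
        have h2 := TSol.q_bound (w := w) hb hφ0 hD hx₀.1 hle hs1.2
        have h3 := hmono _ _ hle
        have h4 := S.psi_bound hx₀.1 hle hs1.2
        rw [hz0] at h1
        rw [h1]
        rw [abs_le] at h2 ⊢
        constructor <;> linarith) (x - x₀) ⟨by linarith, by linarith [hx.2]⟩
    simp only [add_sub_cancel] at this
    refine this.trans (mul_le_mul_of_nonneg_left (Real.exp_le_exp.2 ?_) hnn)
    exact mul_le_mul_of_nonneg_left (by linarith [hx.2, hx₀.1]) hK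
  · have := gron_s7 (f := fun s => |z (x₀ - s)|) (by fun_prop) (Q := D * ∫ t, |b t|) (K := K)
      (l := x₀) hK (by
        intro s hs
        have hs1 : x₀ - s ∈ Icc 0 T := ⟨by linarith [hs.2], by linarith [hs.1, hx₀.2]⟩
        have hle : x₀ - s ≤ x₀ := by linarith [hs.1]
        rw [intervalIntegral.integral_comp_sub_left (fun t => |z t|), sub_zero]
        have h1 := S.z_sub hb hφ hs1 hx₀
        have h2 := TSol.q_bound (w := w) hb hφ0 hD hs1.1 hle hx₀.2
        have h3 := hmono _ _ hle
        have h4 := S.psi_bound hs1.1 hle hx₀.2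
        rw [hz0] at h1
        have h5 : z (x₀ - s) = (∫ t in (x₀ - s)..x₀, psiK K (z t)) + ∫ t in (x₀ - s)..x₀, b t * φ (w t) := by linarith
        rw [h5]
        rw [abs_le] at h2 ⊢
        constructor <;> linarith) (x₀ - x) ⟨by linarith, by linarith [hx.1]⟩
    simp only [sub_sub_cancel] at this
    refine this.trans (mul_le_mul_of_nonneg_left (Real.exp_le_exp.2 ?_) hnn)
    exact mul_le_mul_of_nonneg_left (by linarith [hx.1, hx₀.2]) hK

lemma TSol.w_osc (S : TSol T K b φ w z) {D : ℝ} (hD : ∀ t ∈ Icc 0 T, |z t| ≤ D)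
    {x : ℝ} (hx : x ∈ Icc 0 T) : |w x - w 0| ≤ D * T := by
  have hD0 : 0 ≤ D := (abs_nonneg _).trans (hD x hx)
  rw [S.hw x hx, add_sub_cancel_left]
  have := intervalIntegral.norm_integral_le_of_norm_le_const (a := 0) (b := x) (f := z) (C := D) (by
    intro t ht
    rw [uIoc_of_le hx.1] at ht
    exact hD t ⟨ht.1.le, ht.2.trans hx.2⟩)
  rw [sub_zero, abs_of_nonneg hx.1] at this
  exact this.trans (mul_le_mul_of_nonneg_left hx.2 hD0)

end

lemma lemA {T K C : ℝ} {b φ : ℝ → ℝ} (hT : 0 < T) (hK : 0 ≤ K) (hb : Integrable b)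
    (hφ : Continuous φ) (hφ0 : ∀ s, 0 < φ s) (hφC : ∀ s, φ s ≤ C)
    (hbot : Tendsto φ atBot (nhds 0))
    (hro : ∀ ε > (0:ℝ), ∃ V : ℝ, ∃ η > (0:ℝ), ∀ s < V, ∀ r, |r - s| < η → |φ r / φ s - 1| < ε)
    (hneg : ∫ t in (0:ℝ)..T, b t < 0) :
    ∃ W0 : ℝ, ∀ w z, TSol T K b φ w z → w 0 ≤ W0 → ∀ x₀ ∈ Icc 0 T, z x₀ = 0 → z 0 < z T := by
  set Bn := ∫ t, |b t| with hBn
  have hBn0 : 0 ≤ Bn := integral_nonneg fun t => abs_nonneg _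
  obtain ⟨β, hβ, hβ0⟩ : ∃ β, (∫ t in (0:ℝ)..T, b t) = -β ∧ 0 < β := ⟨_, (neg_neg _).symm, by linarith⟩
  set G := Real.exp (K * T) with hG
  have hG0 : 0 < G := Real.exp_pos _
  set L := K ^ 2 * T + C * Bn with hL
  have hC0 : 0 < C := (hφ0 0).trans_le (hφC 0)
  obtain ⟨V, η, hη, hV⟩ := hro (min 1 (β / (4 * (Bn + 1)))) (by positivity)
  set ε1 := min (η / (2 * (T * G * Bn + 1))) (β / (4 * (T * (2 * Bn * G) ^ 2 + 1))) with hε1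
  have hε1p : 0 < ε1 := by positivity
  have hev : ∀ᶠ s in atBot, φ s < ε1 := hbot.eventually (gt_mem_nhds hε1p)
  obtain ⟨V1, hV1⟩ := eventually_atBot.1 hev
  refine ⟨min (V - 1) (V1 - L * T), fun w z S hw0 x₀ hx₀ hz0 => ?_⟩
  have hwV : w 0 < V := by linarith [hw0.trans (min_le_left _ _)]
  have hwV1 : w 0 ≤ V1 - L * T := hw0.trans (min_le_right _ _)
  have hzL : ∀ t ∈ Icc 0 T, |z t| ≤ L := by
    intro t ht
    have := S.crude hb hφ hφ0 hφC hx₀ ht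
    rwa [hz0, sub_zero] at this
  have hsm : ∀ t ∈ Icc 0 T, φ (w t) ≤ ε1 := by
    intro t ht
    have := abs_le.1 (S.w_osc hzL ht)
    exact (hV1 _ (by linarith)).le
  have hz2 : ∀ t ∈ Icc 0 T, |z t| ≤ (ε1 * Bn) * G := fun t ht =>
    S.gron_bound hK hb hφ hφ0 hsm hx₀ hz0 ht
  have hos : ∀ t ∈ Icc 0 T, |w t - w 0| < η := by
    intro t ht
    refine (S.w_osc hz2 ht).trans_lt ?_
    have h1 : ε1 ≤ η / (2 * (T * G * Bn + 1)) := min_le_left _ _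
    rw [le_div_iff₀ (by positivity)] at h1
    nlinarith
  set f0 := φ (w 0) with hf0
  have hf0p : 0 < f0 := hφ0 _
  have hrel : ∀ t ∈ Icc 0 T, |φ (w t) - f0| ≤ (min 1 (β / (4 * (Bn + 1)))) * f0 := by
    intro t ht
    have h1 := (hV _ hwV _ (hos t ht)).le
    have h2 : φ (w t) - f0 = (φ (w t) / f0 - 1) * f0 := by field_simp
    rw [h2, abs_mul, abs_of_pos hf0p]
    exact mul_le_mul_of_nonneg_right h1 hf0p.le
  have h2f : ∀ t ∈ Icc 0 T, φ (w t) ≤ 2 * f0 := by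
    intro t ht
    have h1 := (abs_le.1 (hrel t ht)).2
    have h2 : (min 1 (β / (4 * (Bn + 1)))) * f0 ≤ 1 * f0 :=
      mul_le_mul_of_nonneg_right (min_le_left _ _) hf0p.le
    linarith
  have hz3 : ∀ t ∈ Icc 0 T, |z t| ≤ (2 * f0 * Bn) * G := fun t ht =>
    S.gron_bound hK hb hφ hφ0 h2f hx₀ hz0 ht
  have h0m : (0:ℝ) ∈ Icc 0 T := ⟨le_rfl, hT.le⟩
  have hTm : T ∈ Icc 0 T := ⟨hT.le, le_rfl⟩
  have hpsi : ∫ t in (0:ℝ)..T, psiK K (z t) ≤ β / 4 * f0 := by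
    have h1 := intervalIntegral.integral_mono_on hT.le (S.int1 0 T)
      (intervalIntegrable_const (c := ((2 * f0 * Bn) * G) ^ 2))
      (fun t ht => (psiK_le_sq K (z t)).trans (sq_le_sq' (abs_le.1 (hz3 t ht)).1 (abs_le.1 (hz3 t ht)).2))
    rw [intervalIntegral.integral_const, smul_eq_mul, sub_zero] at h1
    refine h1.trans ?_
    have h2 : f0 ≤ ε1 := hsm 0 h0m
    have h3 : ε1 ≤ β / (4 * (T * (2 * Bn * G) ^ 2 + 1)) := min_le_right _ _
    rw [le_div_iff₀ (by positivity)] at h3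
    have h4 : T * (2 * Bn * G) ^ 2 * f0 ≤ β / 4 := by
      have : T * (2 * Bn * G) ^ 2 * f0 ≤ T * (2 * Bn * G) ^ 2 * ε1 :=
        mul_le_mul_of_nonneg_left h2 (by positivity)
      linarith
    have h5 := mul_le_mul_of_nonneg_right h4 hf0p.le
    calc T * (2 * f0 * Bn * G) ^ 2 = T * (2 * Bn * G) ^ 2 * f0 * f0 := by ring
      _ ≤ _ := h5
  have hint : |∫ t in (0:ℝ)..T, b t * (φ (w t) - f0)| ≤ β / 4 * f0 := by
    have h1 : ‖∫ t in (0:ℝ)..T, b t * (φ (w t) - f0)‖ ≤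
        ∫ t in (0:ℝ)..T, ((min 1 (β / (4 * (Bn + 1)))) * f0) * |b t| := by
      refine intervalIntegral.norm_integral_le_of_norm_le hT.le
        (ae_of_all _ fun t ht => ?_) (hb.abs.intervalIntegrable.const_mul _)
      rw [norm_mul, mul_comm]
      exact mul_le_mul_of_nonneg_right (hrel t ⟨ht.1.le, ht.2⟩) (abs_nonneg _)
    refine h1.trans ?_
    rw [intervalIntegral.integral_const_mul]
    have h2 := int_abs_le hb hT.le
    have h3 : min 1 (β / (4 * (Bn + 1))) ≤ β / (4 * (Bn + 1)) := min_le_right _ _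
    have h3' : min 1 (β / (4 * (Bn + 1))) * (4 * (Bn + 1)) ≤ β := by
      rwa [le_div_iff₀ (by positivity)] at h3
    set m := min 1 (β / (4 * (Bn + 1))) with hm
    have hm0 : 0 < m := by positivity
    calc m * f0 * ∫ t in (0:ℝ)..T, |b t| ≤ m * f0 * Bn := mul_le_mul_of_nonneg_left h2 (by positivity)
      _ = (m * Bn) * f0 := by ring
      _ ≤ β / 4 * f0 := mul_le_mul_of_nonneg_right (by linarith) hf0p.le
  have hsplit : ∫ t in (0:ℝ)..T, b t * (φ (w t) - f0) = (∫ t in (0:ℝ)..T, b t * φ (w t)) + β * f0 := by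
    have : (fun t => b t * (φ (w t) - f0)) = fun t => b t * φ (w t) - b t * f0 := by
      ext t; ring
    rw [this, intervalIntegral.integral_sub (S.int2 hb hφ 0 T) (hb.intervalIntegrable.mul_const f0),
      intervalIntegral.integral_mul_const, hβ]
    ring
  rw [hsplit] at hint
  have hz := S.z_sub hb hφ h0m hTm
  have := (abs_le.1 hint).2
  have h9 : 0 < β * f0 := by positivity
  linarith

lemma riccati {f : ℝ → ℝ} (hf : Continuous f) {ζ l : ℝ} (hl : 0 < l)
    (h : ∀ s ∈ Icc 0 l, ζ + ∫ t in (0:ℝ)..s, f t ^ 2 ≤ f s) : ζ ≤ 1 / l := by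
  rcases le_or_gt ζ 0 with h0 | h0
  · exact h0.trans (by positivity)
  have hf2 : Continuous fun t => f t ^ 2 := by fun_prop
  let v : ℝ → ℝ := fun s => ζ + ∫ t in (0:ℝ)..s, f t ^ 2
  have hv : ∀ y, HasDerivAt v (f y ^ 2) y := fun y =>
    (intervalIntegral.integral_hasDerivAt_right (hf2.intervalIntegrable _ _)
        (hf2.stronglyMeasurableAtFilter _ _) hf2.continuousAt).const_add ζ
  have hvp : ∀ y ∈ Icc 0 l, 0 < v y := fun y hy => by
    have : 0 ≤ ∫ t in (0:ℝ)..y, f t ^ 2 := intervalIntegral.integral_nonneg hy.1 fun t _ => sq_nonneg _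
    simp only [v]; linarith
  have hd : ∀ y ∈ Icc 0 l, HasDerivAt (fun s => s + (v s)⁻¹) (1 + -(f y ^ 2) / v y ^ 2) y := fun y hy =>
    (hasDerivAt_id y).add ((hv y).inv (hvp y hy).ne')
  have hanti : AntitoneOn (fun s => s + (v s)⁻¹) (Icc 0 l) := by
    refine antitoneOn_of_deriv_nonpos (convex_Icc 0 l)
      (fun y hy => (hd y hy).continuousAt.continuousWithinAt)
      (fun y hy => (hd y (interior_subset hy)).differentiableAt.differentiableWithinAt) ?_
    intro y hy
    have hy := interior_subset hy
    rw [(hd y hy).deriv]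
    have h1 := h y hy
    have h2 := hvp y hy
    have h3 : v y ^ 2 ≤ f y ^ 2 := by
      apply pow_le_pow_left₀ h2.le h1
    have : 1 ≤ f y ^ 2 / v y ^ 2 := by rwa [le_div_iff₀ (by positivity), one_mul]
    rw [neg_div]; linarith
  have h1 := hanti ⟨le_rfl, hl.le⟩ ⟨hl.le, le_rfl⟩ hl.le
  simp only at h1
  have h2 := inv_pos.2 (hvp l ⟨hl.le, le_rfl⟩)
  have h3 : v 0 = ζ := by simp [v]
  rw [h3] at h1
  rw [le_div_iff₀ hl]
  have : l ≤ ζ⁻¹ := by linarith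
  calc ζ * l ≤ ζ * ζ⁻¹ := mul_le_mul_of_nonneg_left this h0.le
    _ = 1 := mul_inv_cancel₀ h0.ne'

lemma lemB {T K C : ℝ} {b φ : ℝ → ℝ} (hb : Integrable b)
    (hφ : Continuous φ) (hφ0 : ∀ s, 0 < φ s) (hφC : ∀ s, φ s ≤ C)
    (hK : 2 * (C * ∫ t, |b t|) ≤ K)
    {x₁ c d x₂ κ V : ℝ} (hx₁ : 0 ≤ x₁) (h1c : x₁ < c) (hcd : c < d) (hd2 : d < x₂) (hx₂ : x₂ ≤ T)
    (hbJ : ∀ᵐ t, t ∈ Icc x₁ x₂ → 0 ≤ b t)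
    (hκ : ∀ s, V ≤ s → κ ≤ φ s)
    (hbig : 1 / (c - x₁) + 1 / (x₂ - d) < κ * ∫ t in c..d, b t) :
    ∃ W1 : ℝ, ∀ w z, TSol T K b φ w z → W1 ≤ w 0 → ∀ x₀ ∈ Icc 0 T, z x₀ = 0 → z T < z 0 := by
  refine ⟨V + 2 * (C * ∫ t, |b t|) * T, fun w z S hw0 x₀ hx₀ hz0 => ?_⟩
  by_contra hcon
  push Not at hcon
  have hz := fun x hx => S.two_sided (x := x) hb hφ hφ0 hφC hx₀ hz0 hcon hx
  have hps : ∀ x ∈ Icc 0 T, psiK K (z x) = z x ^ 2 := fun x hx => psiK_eq ((hz x hx).trans hK)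
  have hwV : ∀ x ∈ Icc 0 T, V ≤ w x := fun x hx => by
    have := (abs_le.1 (S.w_osc hz hx)).1
    linarith
  have hcz := S.cz
  have hps' : ∀ x ∈ Icc 0 T, ∀ y ∈ Icc 0 T, x ≤ y →
      ∫ t in x..y, psiK K (z t) = ∫ t in x..y, z t ^ 2 := by
    intro x hx y hy hxy
    refine intervalIntegral.integral_congr fun t ht => ?_
    rw [uIcc_of_le hxy] at ht
    exact hps t ⟨hx.1.trans ht.1, ht.2.trans hy.2⟩
  have hpos : ∀ x y, x₁ ≤ x → x ≤ y → y ≤ x₂ → 0 ≤ ∫ t in x..y, b t * φ (w t) := by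
    intro x y hx hxy hy
    refine intervalIntegral.integral_nonneg_of_ae_restrict hxy ?_
    rw [EventuallyLE, ae_restrict_iff' measurableSet_Icc]
    filter_upwards [hbJ] with t ht htt
    exact mul_nonneg (ht ⟨hx.trans htt.1, htt.2.trans hy⟩) (hφ0 _).le
  have hcm : c ∈ Icc 0 T := ⟨by linarith, by linarith⟩
  have hdm : d ∈ Icc 0 T := ⟨by linarith, by linarith⟩
  have e1 : z c ≤ 1 / (c - x₁) := by
    refine riccati (f := fun s => z (c - s)) (by fun_prop) (by linarith) fun s hs => ?_
    have hm : c - s ∈ Icc 0 T := ⟨by linarith [hs.2], by linarith [hs.1, hcm.2]⟩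
    have hle : c - s ≤ c := by linarith [hs.1]
    rw [intervalIntegral.integral_comp_sub_left (fun t => z t ^ 2), sub_zero, ← hps' _ hm _ hcm hle]
    have h1 := S.z_sub hb hφ hm hcm
    have h2 := hpos (c - s) c (by linarith [hs.2]) hle (by linarith)
    linarith
  have e2 : -z d ≤ 1 / (x₂ - d) := by
    refine riccati (f := fun s => -z (d + s)) (by fun_prop) (by linarith) fun s hs => ?_
    have hm : d + s ∈ Icc 0 T := ⟨by linarith [hs.1, hdm.1], by linarith [hs.2]⟩
    have hle : d ≤ d + s := by linarith [hs.1]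
    simp only [neg_sq]
    rw [intervalIntegral.integral_comp_add_left (fun t => z t ^ 2), add_zero, ← hps' _ hdm _ hm hle]
    have h1 := S.z_sub hb hφ hdm hm
    have h2 := hpos d (d + s) (by linarith) hle (by linarith [hs.2])
    linarith
  have h1 := S.z_sub hb hφ hcm hdm
  have h2 := (S.psi_bound hcm.1 hcd.le hdm.2).1
  have h3 : κ * ∫ t in c..d, b t ≤ ∫ t in c..d, b t * φ (w t) := by
    rw [← intervalIntegral.integral_const_mul]
    refine intervalIntegral.integral_mono_ae_restrict hcd.le (hb.intervalIntegrable.const_mul κ)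
      (S.int2 hb hφ c d) ?_
    rw [EventuallyLE, ae_restrict_iff' measurableSet_Icc]
    filter_upwards [hbJ] with t ht htt
    rw [mul_comm]
    exact mul_le_mul_of_nonneg_left (hκ _ (hwV t ⟨hcm.1.trans htt.1, htt.2.trans hdm.2⟩))
      (ht ⟨h1c.le.trans htt.1, htt.2.trans hd2.le⟩)
  linarith

lemma conv {T K ν : ℝ} {a b φ g w z : ℝ → ℝ} (hb : Integrable b) (hφ : Continuous φ)
    (hφg : ∀ s, φ s * Real.exp s = g (Real.exp s))
    (hba : ∀ t ∈ Icc 0 T, b t = ν * a t)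
    (S : TSol T K b φ w z) (hz : ∀ x ∈ Icc 0 T, |z x| ≤ K) :
    IsSolOn T (fun t => ν * a t * g (Real.exp (w t))) (fun x => Real.exp (w x))
      (fun x => z x * Real.exp (w x)) := by
  have hcz := S.cz
  have hcw := S.cw
  have hP : ∀ y, HasDerivAt (fun x => w 0 + ∫ t in (0:ℝ)..x, z t) (z y) y := fun y =>
    (intervalIntegral.integral_hasDerivAt_right (hcz.intervalIntegrable _ _)
      (hcz.stronglyMeasurableAtFilter _ _) hcz.continuousAt).const_add _
  refine ⟨fun x hx => ?_, by fun_prop, fun x hx => ?_⟩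
  · have h1 : HasDerivWithinAt w (z x) (Icc 0 T) x :=
      (hP x).hasDerivWithinAt.congr (fun y hy => S.hw y hy) (S.hw x hx)
    have := h1.exp
    rwa [mul_comm] at this
  · let h : ℝ → ℝ := fun t => psiK K (z t) + b t * φ (w t)
    have hh : ∀ x y, IntervalIntegrable h volume x y := fun x y => (S.int1 x y).add (S.int2 hb hφ x y)
    let Z : ℝ → ℝ := fun x => z 0 - ∫ t in (0:ℝ)..x, h t
    let E : ℝ → ℝ := fun x => Real.exp (w 0 + ∫ t in (0:ℝ)..x, z t)
    have hE : ∀ y, HasDerivAt E (E y * z y) y := fun y => (hP y).exp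
    have hEc : Continuous E := continuous_iff_continuousAt.2 fun y => (hE y).continuousAt
    have hZac : AbsolutelyContinuousOnInterval Z 0 x := by
      have h1 := (hh 0 x).absolutelyContinuousOnInterval_intervalIntegral (c := 0) (by simp)
      have h2 : AbsolutelyContinuousOnInterval (fun _ : ℝ => z 0) 0 x :=
        (contDiffOn_const (n := 1)).absolutelyContinuousOnInterval
      exact h2.sub h1
    have hEac : AbsolutelyContinuousOnInterval E 0 x := by
      apply ContDiffOn.absolutelyContinuousOnInterval
      apply ContDiff.contDiffOn
      rw [contDiff_one_iff_deriv]
      refine ⟨fun y => (hE y).differentiableAt, ?_⟩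
      have : deriv E = fun y => E y * z y := funext fun y => (hE y).deriv
      rw [this]; fun_prop
    have key := hZac.integral_deriv_mul_eq_sub hEac
    have hae : ∀ᵐ y, y ∈ uIcc 0 x → HasDerivAt Z (-h y) y := by
      filter_upwards [(hh 0 x).ae_hasDerivAt_integral] with y hy hyx
      have := (hy hyx 0 (by simp)).const_sub (z 0)
      exact this
    have hcongr : ∫ y in (0:ℝ)..x, (deriv Z y * E y + Z y * deriv E y) =
        ∫ y in (0:ℝ)..x, -(ν * a y * g (Real.exp (w y))) := by
      refine intervalIntegral.integral_congr_ae ?_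
      filter_upwards [hae] with y hy hyx
      rw [(hy (uIoc_subset_uIcc hyx)).deriv, (hE y).deriv]
      rw [uIoc_of_le hx.1] at hyx
      have hyT : y ∈ Icc 0 T := ⟨hyx.1.le, hyx.2.trans hx.2⟩
      have e1 : E y = Real.exp (w y) := by simp only [E]; rw [← S.hw y hyT]
      have e2 : Z y = z y := (S.hz y hyT).symm
      rw [e1, e2, ← hφg, ← hba y hyT]
      simp only [h]
      rw [psiK_eq (hz y hyT)]
      ring
    rw [hcongr, intervalIntegral.integral_neg] at key
    have e1 : E x = Real.exp (w x) := by simp only [E]; rw [← S.hw x hx]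
    have e2 : Z x = z x := (S.hz x hx).symm
    have e3 : E 0 = Real.exp (w 0) := by simp [E]
    have e4 : Z 0 = z 0 := by simp [Z]
    rw [e1, e2, e3, e4] at key
    simp only
    linarith

lemma phi_facts {g : ℝ → ℝ} (hg1 : CondG1 g) (hreg : RegOscAtZero g)
    (hg0 : Tendsto (fun s => g s / s) (nhdsWithin 0 (Ioi 0)) (nhds 0))
    (hinf : (0 : EReal) < GrowthLiminf g)
    (hsup : GrowthLimsup g < ⊤) :
    ∃ φ : ℝ → ℝ, Continuous φ ∧ (∀ s, 0 < φ s) ∧ (∀ s, φ s * Real.exp s = g (Real.exp s)) ∧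
      (∃ C, ∀ s, φ s ≤ C) ∧ Tendsto φ atBot (nhds 0) ∧
      (∀ ε > (0:ℝ), ∃ V : ℝ, ∃ η > (0:ℝ), ∀ s < V, ∀ r, |r - s| < η → |φ r / φ s - 1| < ε) ∧
      ∃ κ V : ℝ, 0 < κ ∧ ∀ s, V ≤ s → κ ≤ φ s := by
  obtain ⟨hgc, -, -, hgp⟩ := hg1
  let φ : ℝ → ℝ := fun s => g (Real.exp s) / Real.exp s
  have hφc : Continuous φ := by
    refine Continuous.div ?_ Real.continuous_exp (fun s => (Real.exp_pos s).ne')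
    exact hgc.comp_continuous Real.continuous_exp fun s => (Real.exp_pos s).le
  have hφ0 : ∀ s, 0 < φ s := fun s => div_pos (hgp _ (Real.exp_pos s)) (Real.exp_pos s)
  have hbot : Tendsto φ atBot (nhds 0) := hg0.comp Real.tendsto_exp_atBot_nhdsGT
  refine ⟨φ, hφc, hφ0, fun s => div_mul_cancel₀ _ (Real.exp_pos s).ne', ?_, hbot, ?_, ?_⟩
  · obtain ⟨C1, hC1, -⟩ := EReal.lt_iff_exists_real_btwn.1 hsup
    have h1 := eventually_lt_of_limsup_lt hC1
    have h2 : ∀ᶠ s in atTop, φ s < C1 := by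
      filter_upwards [Real.tendsto_exp_atTop.eventually h1] with s hs
      exact_mod_cast hs
    obtain ⟨A, hA⟩ := eventually_atTop.1 h2
    have h3 : ∀ᶠ s in atBot, φ s < 1 := hbot.eventually (gt_mem_nhds one_pos)
    obtain ⟨B, hB⟩ := eventually_atBot.1 h3
    obtain ⟨M, hM⟩ := (isCompact_Icc (a := B) (b := A)).bddAbove_image hφc.continuousOn
    refine ⟨max C1 (max 1 M), fun s => ?_⟩
    rcases le_total s B with h | h
    · exact (hB s h).le.trans (le_max_of_le_right (le_max_left _ _))
    rcases le_total A s with h' | h'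
    · exact (hA s h').le.trans (le_max_left _ _)
    · exact (hM ⟨s, ⟨h, h'⟩, rfl⟩).trans (le_max_of_le_right (le_max_right _ _))
  · intro ε hε
    obtain ⟨δ, hδ, η, hη, H⟩ := hreg (min (ε / 4) 1) (by positivity)
    have hc : Tendsto (fun x : ℝ => Real.exp x) (nhds 0) (nhds 1) := by
      simpa using (Real.continuous_exp.tendsto 0)
    have hc' : Tendsto (fun x : ℝ => Real.exp (-x)) (nhds 0) (nhds 1) := by
      have h0 : Continuous fun x : ℝ => Real.exp (-x) := by fun_prop
      simpa using h0.tendsto 0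
    obtain ⟨η1, hη1, h1⟩ := Metric.tendsto_nhds_nhds.1 hc η hη
    obtain ⟨η2, hη2, h2⟩ := Metric.tendsto_nhds_nhds.1 hc' (ε / 4) (by positivity)
    refine ⟨Real.log δ, min η1 η2, lt_min hη1 hη2, fun s hs r hr => ?_⟩
    have k1 := h1 (x := r - s) (by rw [Real.dist_eq, sub_zero]; exact hr.trans_le (min_le_left _ _))
    have k2 := h2 (x := r - s) (by rw [Real.dist_eq, sub_zero]; exact hr.trans_le (min_le_right _ _))
    rw [Real.dist_eq] at k1 k2
    have hsδ : Real.exp s < δ := (Real.lt_log_iff_exp_lt hδ).1 hs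
    have k3 := H (Real.exp s) (Real.exp (r - s)) (Real.exp_pos s) hsδ k1
    rw [← Real.exp_add, sub_add_cancel] at k3
    have e : φ r / φ s = (g (Real.exp r) / g (Real.exp s)) * Real.exp (-(r - s)) := by
      have := (hgp _ (Real.exp_pos s)).ne'
      have e2 : Real.exp (-(r - s)) = Real.exp s / Real.exp r := by rw [← Real.exp_sub]; ring_nf
      rw [e2]
      have := (Real.exp_pos s).ne'
      have := (Real.exp_pos r).ne'
      simp only [φ]; field_simp
    rw [e]
    set p := g (Real.exp r) / g (Real.exp s)
    set q := Real.exp (-(r - s))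
    have m1 : |p - 1| < ε / 4 := k3.trans_le (min_le_left _ _)
    have m2 : |p - 1| < 1 := k3.trans_le (min_le_right _ _)
    have m3 : |p| ≤ 2 := by
      rw [abs_lt] at m2; rw [abs_le]; constructor <;> linarith
    calc |p * q - 1| = |p * (q - 1) + (p - 1)| := by ring_nf
      _ ≤ |p * (q - 1)| + |p - 1| := abs_add_le _ _
      _ = |p| * |q - 1| + |p - 1| := by rw [abs_mul]
      _ < ε := by nlinarith [abs_nonneg (q - 1)]
  · obtain ⟨κ, hκ0, hκ⟩ := EReal.lt_iff_exists_real_btwn.1 hinf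
    have h1 := eventually_lt_of_lt_liminf hκ
    have h2 : ∀ᶠ s in atTop, κ < φ s := by
      filter_upwards [Real.tendsto_exp_atTop.eventually h1] with s hs
      exact_mod_cast hs
    obtain ⟨V, hV⟩ := eventually_atTop.1 h2
    exact ⟨κ, V, by exact_mod_cast hκ0, fun s hs => (hV s hs).le⟩

lemma exists_cd {a : ℝ → ℝ} {x₁ x₂ : ℝ} (hx12 : x₁ ≤ x₂) (ha : IntervalIntegrable a volume x₁ x₂)
    (hpos : 0 < ∫ x in x₁..x₂, a x) :
    ∃ c d, x₁ < c ∧ c < d ∧ d < x₂ ∧ 0 < ∫ x in c..d, a x := by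
  have hlt : x₁ < x₂ := by
    rcases hx12.lt_or_eq with h | h
    · exact h
    · rw [h] at hpos; simp at hpos
  let P : ℝ → ℝ := fun x => ∫ t in x₁..x, a t
  have hPc : ContinuousOn P (Icc x₁ x₂) := by
    have := intervalIntegral.continuousOn_primitive_interval' ha left_mem_uIcc
    rwa [uIcc_of_le hx12] at this
  have hP1 : P x₁ = 0 := by simp [P]
  let f : ℝ → ℝ := fun s => P (x₂ - s) - P (x₁ + s)
  let l := (x₂ - x₁) / 2
  have hl : 0 < l := by simp only [l]; linarith
  have hfc : ContinuousWithinAt f (Icc 0 l) 0 := by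
    refine ContinuousOn.continuousWithinAt (s := Icc 0 l) ?_ ⟨le_rfl, hl.le⟩
    refine ContinuousOn.sub (hPc.comp (by fun_prop) ?_) (hPc.comp (by fun_prop) ?_)
    · intro s hs; simp only [l] at hs; constructor <;> linarith [hs.1, hs.2]
    · intro s hs; simp only [l] at hs; constructor <;> linarith [hs.1, hs.2]
  have hf0 : 0 < f 0 := by simp only [f, sub_zero, add_zero, hP1]; exact hpos
  have h1 : ∀ᶠ s in nhdsWithin 0 (Icc 0 l), 0 < f s := hfc.eventually (lt_mem_nhds hf0)
  have h2 : ∀ᶠ s in nhdsWithin 0 (Ioo 0 l), 0 < f s := h1.filter_mono (nhdsWithin_mono _ Ioo_subset_Icc_self)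
  have h3 : ∀ᶠ s in nhdsWithin 0 (Ioo 0 l), s ∈ Ioo 0 l := self_mem_nhdsWithin
  have : (nhdsWithin 0 (Ioo 0 l)).NeBot := left_nhdsWithin_Ioo_neBot hl
  obtain ⟨s, hs, hsl⟩ := (h2.and h3).exists
  have hs2 : s < (x₂ - x₁) / 2 := hsl.2
  refine ⟨x₁ + s, x₂ - s, by linarith [hsl.1], by linarith, by linarith [hsl.1], ?_⟩
  have := intervalIntegral.integral_interval_sub_left (a := x₁) (b := x₂ - s) (c := x₁ + s) (f := a)
    (μ := volume)
    (ha.mono_set (by rw [uIcc_of_le hx12, uIcc_of_le (by linarith [hsl.1])]; exact Icc_subset_Icc_right (by linarith [hsl.1])))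
    (ha.mono_set (by rw [uIcc_of_le hx12, uIcc_of_le (by linarith [hsl.1])]; exact Icc_subset_Icc_right (by linarith [hsl.1])))
  rw [← this]
  exact hs

lemma zero_of_int {z : ℝ → ℝ} (hz : Continuous z) {T : ℝ} (hT : 0 < T)
    (h : ∫ t in (0:ℝ)..T, z t = 0) : ∃ x ∈ Icc 0 T, z x = 0 := by
  have hP : ∀ y, HasDerivAt (fun x => ∫ t in (0:ℝ)..x, z t) (z y) y := fun y =>
    (intervalIntegral.integral_hasDerivAt_right (hz.intervalIntegrable _ _)
      (hz.stronglyMeasurableAtFilter _ _) hz.continuousAt)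
  obtain ⟨x, hx, hx0⟩ := exists_hasDerivAt_eq_zero hT
    (fun y _ => (hP y).continuousAt.continuousWithinAt) (by simp [h]) (fun y _ => hP y)
  exact ⟨x, Ioo_subset_Icc_self hx, hx0⟩

lemma final_neumann {T K C W0 W1 : ℝ} {b φ : ℝ → ℝ} (hT : 0 < T) (hb : Integrable b)
    (hφ : Continuous φ) (hφ0 : ∀ s, 0 < φ s) (hφC : ∀ s, φ s ≤ C)
    (hK : 2 * (C * ∫ t, |b t|) ≤ K)
    (hA : ∀ w z, TSol T K b φ w z → w 0 ≤ W0 → ∀ x₀ ∈ Icc 0 T, z x₀ = 0 → z 0 < z T)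
    (hB : ∀ w z, TSol T K b φ w z → W1 ≤ w 0 → ∀ x₀ ∈ Icc 0 T, z x₀ = 0 → z T < z 0) :
    ∃ w z, TSol T K b φ w z ∧ (∀ x ∈ Icc 0 T, |z x| ≤ K) ∧ z 0 = 0 ∧ z T = 0 := by
  obtain ⟨W, hW, hW0, hW1⟩ : ∃ W : ℝ, 0 ≤ W ∧ -W ≤ W0 ∧ W1 ≤ W :=
    ⟨max |W0| |W1|, le_max_of_le_left (abs_nonneg _),
      by linarith [neg_abs_le W0, le_max_left |W0| |W1|],
      (le_abs_self _).trans (le_max_right _ _)⟩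
  let Rel : Set ((ℝ × ℝ) × (ℝ × ℝ)) := {q | (q.1.2 = 0 ∧ |q.1.1| ≤ W) ∧
    (q.2.2 = 0 ∨ ((q.1.1 = -W ∧ q.2.2 ≤ 0) ∨ (q.1.1 = W ∧ 0 ≤ q.2.2)))}
  have hR : IsClosed Rel := by
    have h1 : IsClosed {q : (ℝ × ℝ) × (ℝ × ℝ) | q.1.2 = 0} := isClosed_eq (by fun_prop) (by fun_prop)
    have h2 : IsClosed {q : (ℝ × ℝ) × (ℝ × ℝ) | |q.1.1| ≤ W} := isClosed_le (by fun_prop) (by fun_prop)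
    have h3 : IsClosed {q : (ℝ × ℝ) × (ℝ × ℝ) | q.2.2 = 0} := isClosed_eq (by fun_prop) (by fun_prop)
    have h4 : IsClosed {q : (ℝ × ℝ) × (ℝ × ℝ) | q.1.1 = -W} := isClosed_eq (by fun_prop) (by fun_prop)
    have h5 : IsClosed {q : (ℝ × ℝ) × (ℝ × ℝ) | q.2.2 ≤ 0} := isClosed_le (by fun_prop) (by fun_prop)
    have h6 : IsClosed {q : (ℝ × ℝ) × (ℝ × ℝ) | q.1.1 = W} := isClosed_eq (by fun_prop) (by fun_prop)
    have h7 : IsClosed {q : (ℝ × ℝ) × (ℝ × ℝ) | 0 ≤ q.2.2} := isClosed_le (by fun_prop) (by fun_prop)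
    exact (h1.inter h2).inter (h3.union ((h4.inter h5).union (h6.inter h7)))
  obtain ⟨w, z, S, hmem⟩ := compact_lemma (K := K) (M := W) hT hb hφ hφ0 hφC Rel hR (by
    rintro ⟨⟨p1, p2⟩, v⟩ ⟨⟨h1, h2⟩, -⟩
    simp only at h1 h2
    subst h1
    rw [norm_prod_le_iff]
    exact ⟨h2, by simpa using hW⟩) (by
    intro F hF
    let f : ℝ → ℝ := fun x => (F (x, 0)).2
    have hf : Continuous f := by fun_prop
    rcases le_or_gt (f (-W)) 0 with h1 | h1
    · exact ⟨(-W, 0), ⟨rfl, by simp [abs_of_nonneg hW]⟩, Or.inr (Or.inl ⟨rfl, h1⟩)⟩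
    rcases le_or_gt 0 (f W) with h2 | h2
    · exact ⟨(W, 0), ⟨rfl, by simp [abs_of_nonneg hW]⟩, Or.inr (Or.inr ⟨rfl, h2⟩)⟩
    obtain ⟨x, hx, hx0⟩ := intermediate_value_Icc' (by linarith : -W ≤ W) hf.continuousOn ⟨h2.le, h1.le⟩
    exact ⟨(x, 0), ⟨rfl, abs_le.2 hx⟩, Or.inl hx0⟩)
  obtain ⟨⟨hz0, -⟩, hor⟩ := hmem
  simp only at hz0 hor
  have h0m : (0:ℝ) ∈ Icc 0 T := ⟨le_rfl, hT.le⟩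
  have hzT : z T = 0 := by
    rcases hor with h | ⟨h, h'⟩ | ⟨h, h'⟩
    · exact h
    · have := hA w z S (by linarith) 0 h0m hz0
      linarith
    · have := hB w z S (by linarith) 0 h0m hz0
      linarith
  exact ⟨w, z, S, fun x hx => (S.two_sided hb hφ hφ0 hφC h0m hz0 (by linarith) hx).trans hK, hz0, hzT⟩

lemma final_periodic {T K C W0 W1 : ℝ} {b φ : ℝ → ℝ} (hT : 0 < T) (hb : Integrable b)
    (hφ : Continuous φ) (hφ0 : ∀ s, 0 < φ s) (hφC : ∀ s, φ s ≤ C)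
    (hK : 2 * (C * ∫ t, |b t|) ≤ K)
    (hA : ∀ w z, TSol T K b φ w z → w 0 ≤ W0 → ∀ x₀ ∈ Icc 0 T, z x₀ = 0 → z 0 < z T)
    (hB : ∀ w z, TSol T K b φ w z → W1 ≤ w 0 → ∀ x₀ ∈ Icc 0 T, z x₀ = 0 → z T < z 0) :
    ∃ w z, TSol T K b φ w z ∧ (∀ x ∈ Icc 0 T, |z x| ≤ K) ∧ w 0 = w T ∧ z 0 = z T := by
  obtain ⟨W, hW, hW0, hW1⟩ : ∃ W : ℝ, 0 ≤ W ∧ -W ≤ W0 ∧ W1 ≤ W :=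
    ⟨max |W0| |W1|, le_max_of_le_left (abs_nonneg _),
      by linarith [neg_abs_le W0, le_max_left |W0| |W1|],
      (le_abs_self _).trans (le_max_right _ _)⟩
  have hBn0 : 0 ≤ ∫ t, |b t| := integral_nonneg fun t => abs_nonneg _
  have hC0 : 0 < C := (hφ0 0).trans_le (hφC 0)
  obtain ⟨M, hMe⟩ : ∃ M : ℝ, M = K ^ 2 * T + C * (∫ t, |b t|) + 1 := ⟨_, rfl⟩
  have hM : 0 ≤ M := by rw [hMe]; positivity
  let Rel : Set ((ℝ × ℝ) × (ℝ × ℝ)) := {q | (|q.1.1| ≤ W ∧ |q.1.2| ≤ M) ∧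
    ((q.2.1 = q.1.1 ∧ q.2.2 = q.1.2) ∨ ((q.1.1 = -W ∧ (q.2.1 = q.1.1 ∧ q.2.2 ≤ q.1.2)) ∨
      ((q.1.1 = W ∧ (q.2.1 = q.1.1 ∧ q.1.2 ≤ q.2.2)) ∨
        ((q.1.2 = M ∧ q.2.1 ≤ q.1.1) ∨ (q.1.2 = -M ∧ q.1.1 ≤ q.2.1)))))}
  have hR : IsClosed Rel := by
    have h1 : IsClosed {q : (ℝ × ℝ) × (ℝ × ℝ) | |q.1.1| ≤ W} := isClosed_le (by fun_prop) (by fun_prop)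
    have h2 : IsClosed {q : (ℝ × ℝ) × (ℝ × ℝ) | |q.1.2| ≤ M} := isClosed_le (by fun_prop) (by fun_prop)
    have h3 : IsClosed {q : (ℝ × ℝ) × (ℝ × ℝ) | q.2.1 = q.1.1} := isClosed_eq (by fun_prop) (by fun_prop)
    have h4 : IsClosed {q : (ℝ × ℝ) × (ℝ × ℝ) | q.2.2 = q.1.2} := isClosed_eq (by fun_prop) (by fun_prop)
    have h5 : IsClosed {q : (ℝ × ℝ) × (ℝ × ℝ) | q.1.1 = -W} := isClosed_eq (by fun_prop) (by fun_prop)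
    have h6 : IsClosed {q : (ℝ × ℝ) × (ℝ × ℝ) | q.2.2 ≤ q.1.2} := isClosed_le (by fun_prop) (by fun_prop)
    have h7 : IsClosed {q : (ℝ × ℝ) × (ℝ × ℝ) | q.1.1 = W} := isClosed_eq (by fun_prop) (by fun_prop)
    have h8 : IsClosed {q : (ℝ × ℝ) × (ℝ × ℝ) | q.1.2 ≤ q.2.2} := isClosed_le (by fun_prop) (by fun_prop)
    have h9 : IsClosed {q : (ℝ × ℝ) × (ℝ × ℝ) | q.1.2 = M} := isClosed_eq (by fun_prop) (by fun_prop)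
    have h10 : IsClosed {q : (ℝ × ℝ) × (ℝ × ℝ) | q.2.1 ≤ q.1.1} := isClosed_le (by fun_prop) (by fun_prop)
    have h11 : IsClosed {q : (ℝ × ℝ) × (ℝ × ℝ) | q.1.2 = -M} := isClosed_eq (by fun_prop) (by fun_prop)
    have h12 : IsClosed {q : (ℝ × ℝ) × (ℝ × ℝ) | q.1.1 ≤ q.2.1} := isClosed_le (by fun_prop) (by fun_prop)
    exact (h1.inter h2).inter ((h3.inter h4).union ((h5.inter (h3.inter h6)).union
      ((h7.inter (h3.inter h8)).union ((h9.inter h10).union (h11.inter h12)))))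
  obtain ⟨w, z, S, hmem⟩ := compact_lemma (K := K) (M := max W M) hT hb hφ hφ0 hφC Rel hR (by
    rintro ⟨⟨p1, p2⟩, v⟩ ⟨⟨h1, h2⟩, -⟩
    rw [norm_prod_le_iff]
    exact ⟨h1.trans (le_max_left _ _), h2.trans (le_max_right _ _)⟩) (by
    intro F hF
    obtain ⟨p, h1, h2, h⟩ := topo_lemma (fun p => F p - p) (by fun_prop) W M hW hM
    simp only [Prod.fst_sub, Prod.snd_sub, sub_eq_zero, sub_nonpos, sub_nonneg] at h
    exact ⟨p, ⟨h1, h2⟩, h⟩)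
  obtain ⟨-, hor⟩ := hmem
  simp only at hor
  have h0m : (0:ℝ) ∈ Icc 0 T := ⟨le_rfl, hT.le⟩
  have hTm : T ∈ Icc 0 T := ⟨hT.le, le_rfl⟩
  have hcr := fun x hx => abs_le.1 (S.crude (y := x) hb hφ hφ0 hφC h0m hx)
  have hwT := S.hw T hTm
  have hzero : w T = w 0 → ∃ x ∈ Icc 0 T, z x = 0 := fun h =>
    zero_of_int S.cz hT (by linarith)
  have hmain : w T = w 0 ∧ z T = z 0 := by
    rcases hor with h | ⟨h, h1, h2⟩ | ⟨h, h1, h2⟩ | ⟨h, h1⟩ | ⟨h, h1⟩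
    · exact h
    · obtain ⟨x₀, hx₀, hz0⟩ := hzero h1
      have := hA w z S (by linarith) x₀ hx₀ hz0
      linarith
    · obtain ⟨x₀, hx₀, hz0⟩ := hzero h1
      have := hB w z S (by linarith) x₀ hx₀ hz0
      linarith
    · have := intervalIntegral.integral_mono_on hT.le (intervalIntegrable_const (μ := volume) (c := (1:ℝ)))
        (S.cz.intervalIntegrable (μ := volume) 0 T) (fun x hx => by linarith [(hcr x hx).1])
      rw [intervalIntegral.integral_const, smul_eq_mul] at this
      linarith
    · have := intervalIntegral.integral_mono_on hT.le
        (S.cz.intervalIntegrable (μ := volume) 0 T) (intervalIntegrable_const (c := (-1:ℝ)))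
        (fun x hx => by linarith [(hcr x hx).2])
      rw [intervalIntegral.integral_const, smul_eq_mul] at this
      linarith
  obtain ⟨x₀, hx₀, hz0⟩ := hzero hmain.1
  exact ⟨w, z, S, fun x hx => (S.two_sided hb hφ hφ0 hφC hx₀ hz0 hmain.2.ge hx).trans hK,
    hmain.1.symm, hmain.2.symm⟩

/-- Corollary: if `a ≥ 0` a.e. on a closed interval `J = [x₁,x₂] ⊆ [0,T]` with
`∫₀ᵀ a < 0 < ∫_J a`, and `g` satisfies (g1), is regularly oscillating at zero,
with `g(s)/s → 0` as `s → 0⁺` and `0 < liminf_{s→+∞} g(s)/s ≤ limsup_{s→+∞} g(s)/s < +∞`,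
then for every sufficiently large `ν` the equation `u'' + ν a(x) g(u) = 0` has a
positive Neumann solution and a positive periodic solution. -/
theorem statement_7
    (T : ℝ) (hT : 0 < T)
    (a : ℝ → ℝ) (ha : IntervalIntegrable a volume 0 T)
    (x₁ x₂ : ℝ) (hx1 : 0 ≤ x₁) (hx12 : x₁ ≤ x₂) (hx2 : x₂ ≤ T)
    (haJ : ∀ᵐ x ∂(volume.restrict (Icc x₁ x₂)), 0 ≤ a x)
    (ha2 : (∫ x in (0:ℝ)..T, a x) < 0)
    (haJpos : 0 < ∫ x in x₁..x₂, a x)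
    (g : ℝ → ℝ) (hg1 : CondG1 g) (hreg : RegOscAtZero g)
    (hg0 : Tendsto (fun s => g s / s) (nhdsWithin 0 (Ioi 0)) (nhds 0))
    (hinf : (0 : EReal) < GrowthLiminf g)
    (hsup : GrowthLimsup g < ⊤) :
    ∃ νs : ℝ, 0 < νs ∧ ∀ ν : ℝ, νs < ν →
      PosSolNeumann T (fun t => ν * a t) g ∧ PosSolPeriodic T (fun t => ν * a t) g := by
  obtain ⟨φ, hφ, hφ0, hφg, ⟨C, hφC⟩, hbot, hro, κ, V, hκ0, hκ⟩ :=
    phi_facts hg1 hreg hg0 hinf hsup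
  have hC0 : 0 < C := (hφ0 0).trans_le (hφC 0)
  have hsub : ∀ {x y : ℝ}, 0 ≤ x → x ≤ y → y ≤ T → uIcc x y ⊆ uIcc 0 T := by
    intro x y h1 h2 h3
    rw [uIcc_of_le h2, uIcc_of_le hT.le]
    exact Icc_subset_Icc h1 h3
  obtain ⟨c, d, h1c, hcd, hd2, hI⟩ := exists_cd hx12 (ha.mono_set (hsub hx1 hx12 hx2)) haJpos
  have hcx : 0 < c - x₁ := by linarith
  have hdx : 0 < x₂ - d := by linarith
  have hsum : 0 < 1 / (c - x₁) + 1 / (x₂ - d) := by positivity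
  refine ⟨(1 / (c - x₁) + 1 / (x₂ - d)) / (κ * ∫ t in c..d, a t), by positivity, fun ν hν => ?_⟩
  have hν0 : 0 < ν := lt_trans (by positivity) hν
  rw [div_lt_iff₀ (by positivity)] at hν
  set b : ℝ → ℝ := indicator (Icc 0 T) (fun t => ν * a t) with hbdef
  have hba : ∀ t ∈ Icc 0 T, b t = ν * a t := fun t ht => indicator_of_mem ht _
  have hb : Integrable b := by
    rw [hbdef, integrable_indicator_iff measurableSet_Icc]
    exact ((intervalIntegrable_iff_integrableOn_Icc_of_le hT.le).1 ha).const_mul ν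
  have hbint : ∀ x y : ℝ, 0 ≤ x → x ≤ y → y ≤ T → ∫ t in x..y, b t = ν * ∫ t in x..y, a t := by
    intro x y h1 h2 h3
    rw [← intervalIntegral.integral_const_mul]
    refine intervalIntegral.integral_congr fun t ht => hba t ?_
    have := hsub h1 h2 h3 ht
    rwa [uIcc_of_le hT.le] at this
  have hBn0 : 0 ≤ ∫ t, |b t| := integral_nonneg fun t => abs_nonneg _
  obtain ⟨K, hK⟩ : ∃ K, 2 * (C * ∫ t, |b t|) = K := ⟨_, rfl⟩
  have hK0 : 0 ≤ K := by rw [← hK]; positivity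
  obtain ⟨W0, hA⟩ := lemA (K := K) hT hK0 hb hφ hφ0 hφC hbot hro (by
    rw [hbint 0 T le_rfl hT.le le_rfl]
    exact mul_neg_of_pos_of_neg hν0 ha2)
  obtain ⟨W1, hB⟩ := lemB (T := T) hb hφ hφ0 hφC hK.le hx1 h1c hcd hd2 hx2 (by
    rw [ae_restrict_iff' measurableSet_Icc] at haJ
    filter_upwards [haJ] with t ht htt
    rw [hba t ⟨hx1.trans htt.1, htt.2.trans hx2⟩]
    exact mul_nonneg hν0.le (ht htt)) hκ (by
    rw [hbint c d (by linarith) hcd.le (by linarith)]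
    linarith)
  constructor
  · obtain ⟨w, z, S, hz, hz0, hzT⟩ := final_neumann hT hb hφ hφ0 hφC hK.le hA hB
    exact ⟨_, _, conv hb hφ hφg hba S hz, fun x _ => Real.exp_pos _, by simp [hz0], by simp [hzT]⟩
  · obtain ⟨w, z, S, hz, hwp, hzp⟩ := final_periodic hT hb hφ hφ0 hφC hK.le hA hB
    exact ⟨_, _, conv hb hφ hφg hba S hz, fun x _ => Real.exp_pos _, by simp [hwp],
      by simp [hwp, hzp]⟩
end
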